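/- arXiv:2307.08661 — 6 statements merged into one kernel-verified Lean document; each statement's English description precedes it below -/
import Mathlib

section
/- Let D be a digraph and k a positive integer. Then χ⃗(D) ≤ k if and only if there exists a linear ordering of the vertices of D such that no directed path of D on k+1 vertices consists entirely of backward arcs, where an arc xy is called backward if y precedes x in the ordering. -/
/-!
Both directions compare backward arcs with colours.

Given a good colouring with `m ≤ k` colours, put the colour classes one after the other and order
each (acyclic) class topologically. A backward arc then goes to a strictly smaller colour, so a
path of backward arcs has at most `m` vertices. The ordering exists because "smaller colour, or
same colour and an arc" has no closed walks (`transGen_classRel`), and a relation without closed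
walks on a finite type is compatible with an injection into `ℕ` (`exists_ordering`).

Conversely, given an ordering, colour each vertex by the length of a longest path of backward arcs
that starts there. A backward arc strictly decreases this length, so inside a colour class
all arcs go forward, and no class contains a directed cycle.
-/

def GoodColouring {V : Type} (A : V → V → Prop) {k : ℕ} (φ : V → Fin k) : Prop :=
  ∀ c : Fin k, ∀ v : V, φ v = c →
    ¬ Relation.TransGen (fun a b => A a b ∧ φ a = c ∧ φ b = c) v v

noncomputable def dichrom {V : Type} (A : V → V → Prop) : ℕ :=
  sInf {k : ℕ | ∃ φ : V → Fin k, GoodColouring A φ}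

/-- There is a walk of `n` steps along the relation `B` starting at `v`. -/
def WalkFrom {V : Type} (B : V → V → Prop) : ℕ → V → Prop
  | 0, _ => True
  | n + 1, v => ∃ w, B v w ∧ WalkFrom B n w

lemma WalkFrom.exists_fin {V : Type} {B : V → V → Prop} : ∀ {n : ℕ} {v : V}, WalkFrom B n v →
    ∃ p : Fin (n + 1) → V, p 0 = v ∧ ∀ i : Fin n, B (p i.castSucc) (p i.succ)
  | 0, v, _ => ⟨fun _ => v, rfl, fun i => i.elim0⟩
  | n + 1, v, h => by
    obtain ⟨w, hvw, hw⟩ := h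
    obtain ⟨p, hp0, hp⟩ := hw.exists_fin
    refine ⟨Fin.cons v p, rfl, fun i => ?_⟩
    induction i using Fin.cases with
    | zero => simpa [hp0] using hvw
    | succ i =>
      rw [← Fin.succ_castSucc, Fin.cons_succ, Fin.cons_succ]
      exact hp i

/-- Topological sorting: a relation without closed walks on a finite type is increasing for some
injection into `ℕ`. -/
lemma exists_ordering {V : Type} [Fintype V] (R : V → V → Prop)
    (hR : ∀ v, ¬ Relation.TransGen R v v) :
    ∃ f : V → ℕ, Function.Injective f ∧ ∀ a b, R a b → f a < f b := by
  classical
  let g : V → ℕ := fun v => (Finset.univ.filter fun u => Relation.TransGen R u v).card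
  have hg : ∀ a b, R a b → g a < g b := by
    intro a b hab
    refine Finset.card_lt_card (Finset.ssubset_iff_of_subset ?_ |>.2 ⟨a, ?_, ?_⟩)
    · intro u hu
      simp only [Finset.mem_filter, Finset.mem_univ, true_and] at hu ⊢
      exact hu.tail hab
    · simpa using Relation.TransGen.single hab
    · simpa using hR a
  let e := Fintype.equivFin V
  -- The number of predecessors is the leading digit; an arbitrary enumeration breaks ties.
  refine ⟨fun v => e v + Fintype.card V * g v, fun a b hab => ?_, fun a b hab => ?_⟩
  · have h : ((e a : ℕ) + Fintype.card V * g a) % Fintype.card V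
        = ((e b : ℕ) + Fintype.card V * g b) % Fintype.card V := congrArg (· % _) hab
    rw [Nat.add_mul_mod_self_left, Nat.add_mul_mod_self_left, Nat.mod_eq_of_lt (e a).isLt,
      Nat.mod_eq_of_lt (e b).isLt] at h
    exact e.injective (Fin.ext h)
  · have h1 := Nat.mul_le_mul_left (Fintype.card V) (hg a b hab)
    have h2 := (e a).isLt
    simp only [Nat.succ_eq_add_one, mul_add, mul_one] at h1
    show (e a : ℕ) + Fintype.card V * g a < e b + Fintype.card V * g b
    omega

/-- A walk whose steps go to a larger colour, or along an arc inside a colour class, either ends in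
a larger colour or stays in one class throughout. -/
lemma transGen_classRel {V : Type} {A : V → V → Prop} {m : ℕ} {φ : V → Fin m} {a b : V}
    (h : Relation.TransGen (fun a b => φ a < φ b ∨ (φ a = φ b ∧ A a b)) a b) :
    φ a < φ b ∨ (φ a = φ b ∧
      Relation.TransGen (fun x y => A x y ∧ φ x = φ a ∧ φ y = φ a) a b) := by
  induction h with
  | single h =>
    rcases h with h | ⟨h, hA⟩
    · exact Or.inl h
    · exact Or.inr ⟨h, .single ⟨hA, rfl, h.symm⟩⟩
  | tail _ h ih =>
    rcases ih with ih | ⟨ih, hT⟩ <;> rcases h with h | ⟨h, hA⟩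
    · exact Or.inl (ih.trans h)
    · exact Or.inl (h ▸ ih)
    · exact Or.inl (ih ▸ h)
    · exact Or.inr ⟨ih.trans h, hT.tail ⟨hA, ih.symm, (ih.trans h).symm⟩⟩

/-- The infimum defining `dichrom` is attained: a finite loopless digraph has some good colouring,
for instance an injective one. -/
lemma exists_goodColouring_dichrom {V : Type} [Fintype V] {A : V → V → Prop}
    (hirr : Irreflexive A) : ∃ φ : V → Fin (dichrom A), GoodColouring A φ := by
  refine Nat.sInf_mem (s := {k : ℕ | ∃ φ : V → Fin k, GoodColouring A φ})
    ⟨Fintype.card V, Fintype.equivFin V, fun c v _ h => ?_⟩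
  obtain ⟨w, ⟨hA, h1, h2⟩, -⟩ := Relation.TransGen.head'_iff.1 h
  obtain rfl := (Fintype.equivFin V).injective (h1.trans h2.symm)
  exact hirr _ hA

/-- Gallai–Roy-type characterisation of the dichromatic number: `χ⃗(D) ≤ k` iff there is a
linear ordering of the vertices with no directed path on `k+1` vertices consisting
entirely of backward arcs. -/
theorem stmt14 {V : Type} [Fintype V] (A : V → V → Prop) (hirr : Irreflexive A)
    (k : ℕ) (hk : 0 < k) :
    dichrom A ≤ k ↔ ∃ f : V → ℕ, Function.Injective f ∧
      ¬ ∃ p : Fin (k + 1) → V, Function.Injective p ∧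
        ∀ i : Fin k, A (p i.castSucc) (p i.succ) ∧ f (p i.succ) < f (p i.castSucc) := by
  classical
  constructor
  · intro hle
    obtain ⟨φ, hφ⟩ := exists_goodColouring_dichrom hirr
    obtain ⟨f, hf, hmono⟩ := exists_ordering
      (fun a b => φ a < φ b ∨ (φ a = φ b ∧ A a b)) (fun v h => by
        rcases transGen_classRel h with h | ⟨-, h⟩
        · exact lt_irrefl _ h
        · exact hφ (φ v) v rfl h)
    refine ⟨f, hf, ?_⟩
    rintro ⟨p, -, hp⟩
    have hanti : StrictAnti (φ ∘ p) := by
      refine Fin.strictAnti_iff_succ_lt.2 fun i => ?_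
      obtain ⟨hA, hlt⟩ := hp i
      by_contra hcon
      rcases (not_lt.1 hcon).lt_or_eq with h | h
      · exact hlt.not_gt (hmono _ _ (Or.inl h))
      · exact hlt.not_gt (hmono _ _ (Or.inr ⟨h, hA⟩))
    have := Fintype.card_le_of_injective _ hanti.injective
    simp only [Fintype.card_fin] at this
    omega
  · rintro ⟨f, hf, hno⟩
    let B : V → V → Prop := fun a b => A a b ∧ f b < f a
    have hB : ∀ v, ¬ WalkFrom B k v := by
      intro v h
      obtain ⟨p, -, hp⟩ := h.exists_fin
      have hanti : StrictAnti (f ∘ p) := Fin.strictAnti_iff_succ_lt.2 fun i => (hp i).2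
      exact hno ⟨p, hanti.injective.of_comp, hp⟩
    let h : V → ℕ := fun v => Nat.findGreatest (fun n => WalkFrom B n v) k
    have hspec : ∀ v, WalkFrom B (h v) v := fun v =>
      Nat.findGreatest_spec (P := fun n => WalkFrom B n v) (Nat.zero_le k) trivial
    have hlt : ∀ v, h v < k := fun v =>
      lt_of_le_of_ne (Nat.findGreatest_le k) fun e => hB v (e ▸ hspec v)
    have hdec : ∀ a b, B a b → h b < h a := fun a b hab =>
      Nat.le_findGreatest (P := fun n => WalkFrom B n a) (hlt b) ⟨b, hab, hspec b⟩
    refine Nat.sInf_le ⟨fun v => ⟨h v, hlt v⟩, fun c v _ hT => ?_⟩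
    have hinc : ∀ w, Relation.TransGen (fun a b => A a b ∧
        (⟨h a, hlt a⟩ : Fin k) = c ∧ (⟨h b, hlt b⟩ : Fin k) = c) v w → f v < f w := by
      have hstep : ∀ a b, (A a b ∧ (⟨h a, hlt a⟩ : Fin k) = c ∧ (⟨h b, hlt b⟩ : Fin k) = c) →
          f a < f b := by
        rintro a b ⟨hA, ha, hb⟩
        rcases lt_trichotomy (f a) (f b) with hab | hab | hab
        · exact hab
        · exact absurd (hf hab ▸ hA) (hirr b)
        · exact absurd (Fin.ext_iff.1 (hb.trans ha.symm)) (hdec a b ⟨hA, hab⟩).ne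
      intro w hw
      induction hw with
      | single h => exact hstep _ _ h
      | tail _ h ih => exact ih.trans (hstep _ _ h)
    exact lt_irrefl _ (hinc v hT)
end

section
/- Let k ≥ 1. (i) Every orientation of a chordal graph containing no copy of the transitive tournament TT_k on k vertices has dichromatic number at most 2^{k−1} − 1. (ii) Every orientation of a chordal graph containing no copy of C⃗3(1,1,k) has dichromatic number at most 2^{2k−2}. -/
def IsOriented {V : Type} (A : V → V → Prop) : Prop := ∀ u v : V, A u v → ¬ A v u

/-- `A` contains a copy of `B` as a subdigraph. -/
def HasCopy {V W : Type} (A : V → V → Prop) (B : W → W → Prop) : Prop :=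
  ∃ f : W → V, Function.Injective f ∧ ∀ a b : W, B a b → A (f a) (f b)

/-- A symmetric adjacency relation is chordal: every cycle of length at least 4 has a chord. -/
def IsChordalAdj {V : Type} (Adj : V → V → Prop) : Prop :=
  ∀ m : ℕ, 4 ≤ m → ∀ c : ZMod m → V, Function.Injective c →
    (∀ i : ZMod m, Adj (c i) (c (i + 1))) →
    ∃ i j : ZMod m, i ≠ j ∧ j ≠ i + 1 ∧ i ≠ j + 1 ∧ Adj (c i) (c j)

def cyc3 {W1 W2 W3 : Type} (B1 : W1 → W1 → Prop) (B2 : W2 → W2 → Prop)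
    (B3 : W3 → W3 → Prop) : (W1 ⊕ W2 ⊕ W3) → (W1 ⊕ W2 ⊕ W3) → Prop
  | Sum.inl a, Sum.inl b => B1 a b
  | Sum.inr (Sum.inl a), Sum.inr (Sum.inl b) => B2 a b
  | Sum.inr (Sum.inr a), Sum.inr (Sum.inr b) => B3 a b
  | Sum.inl _, Sum.inr (Sum.inl _) => True
  | Sum.inr (Sum.inl _), Sum.inr (Sum.inr _) => True
  | Sum.inr (Sum.inr _), Sum.inl _ => True
  | _, _ => False

/-! ### Induced paths and Dirac's theorem -/

/-- A shortest chain for `Q` from `x` to `y`: it repeats no vertex and `Q` offers no shortcut. -/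
theorem exists_shortest_chain {V : Type} (Q : V → V → Prop) (x y : V)
    (h : Relation.ReflTransGen Q x y) :
    ∃ (m : ℕ) (p : ℕ → V), p 0 = x ∧ p m = y ∧ (∀ i < m, Q (p i) (p (i + 1))) ∧
      (∀ i j, i < j → j ≤ m → p i ≠ p j) ∧ (∀ i j, i + 1 < j → j ≤ m → ¬ Q (p i) (p j)) := by
  classical
  have ex : ∃ m, ∃ p : ℕ → V, p 0 = x ∧ p m = y ∧ (∀ i < m, Q (p i) (p (i + 1))) := by
    induction h with
    | refl => exact ⟨0, fun _ => x, rfl, rfl, by simp⟩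
    | @tail b c _ hbc ih =>
      obtain ⟨m, p, h0, hm, hs⟩ := ih
      refine ⟨m + 1, fun i => if i ≤ m then p i else c, by simp [h0], by simp, ?_⟩
      intro i hi
      by_cases him : i = m
      · subst him
        simpa [hm] using hbc
      · have h1 : i ≤ m := by omega
        have h2 : i + 1 ≤ m := by omega
        simpa [h1, h2] using hs i (by omega)
  obtain ⟨p, h0, hm, hs⟩ := Nat.find_spec ex
  refine ⟨Nat.find ex, p, h0, hm, hs, ?_, ?_⟩
  -- A repetition `p i = p j`, or a step `Q (p i) (p j)` with `i + 1 < j`, allows the stretch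
  -- between the two indices to be cut out of the chain.
  · intro i j hij hj he
    refine Nat.find_min ex (m := Nat.find ex - (j - i)) (by omega)
      ⟨fun t => if t ≤ i then p t else p (t + (j - i)), by simp [h0], ?_, ?_⟩
    · by_cases hc : Nat.find ex - (j - i) ≤ i
      · have h1 : j = Nat.find ex := by omega
        have h2 : Nat.find ex - (j - i) = i := by omega
        simp only [h2, le_refl, if_true]
        rw [he, h1, hm]
      · simp only [hc, if_false]
        rw [Nat.sub_add_cancel (by omega), hm]
    · intro t ht
      rcases lt_trichotomy t i with h | h | h
      · have h1 : t ≤ i := by omega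
        have h2 : t + 1 ≤ i := by omega
        simpa [h1, h2] using hs t (by omega)
      · subst h
        have h2 : t + 1 + (j - t) = j + 1 := by omega
        simp only [le_refl, if_true, Nat.not_succ_le_self, if_false, h2]
        rw [he]
        exact hs j (by omega)
      · have h1 : ¬ t ≤ i := by omega
        have h2 : ¬ t + 1 ≤ i := by omega
        simp only [h1, h2, if_false]
        rw [show t + 1 + (j - i) = t + (j - i) + 1 by omega]
        exact hs _ (by omega)
  · intro i j hij hj he
    refine Nat.find_min ex (m := Nat.find ex - (j - i - 1)) (by omega)
      ⟨fun t => if t ≤ i then p t else p (t + (j - i - 1)), by simp [h0], ?_, ?_⟩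
    · have hc : ¬ Nat.find ex - (j - i - 1) ≤ i := by omega
      simp only [hc, if_false]
      rw [Nat.sub_add_cancel (by omega), hm]
    · intro t ht
      rcases lt_trichotomy t i with h | h | h
      · have h1 : t ≤ i := by omega
        have h2 : t + 1 ≤ i := by omega
        simpa [h1, h2] using hs t (by omega)
      · subst h
        have h2 : t + 1 + (j - t - 1) = j := by omega
        simpa only [le_refl, if_true, Nat.not_succ_le_self, if_false, h2] using he
      · have h1 : ¬ t ≤ i := by omega
        have h2 : ¬ t + 1 ≤ i := by omega
        simp only [h1, h2, if_false]
        rw [show t + 1 + (j - i - 1) = t + (j - i - 1) + 1 by omega]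
        exact hs _ (by omega)

/-- In a chordal graph, two neighbours `x ≠ y` of `v` joined by a path whose interior avoids the
closed neighbourhood of `v` are adjacent: otherwise a shortest such path closes up through `v` to
a chordless cycle. -/
theorem adj_of_chain {V : Type} {Adj : V → V → Prop} (sym : ∀ u v, Adj u v → Adj v u)
    (irr : ∀ u, ¬ Adj u u) (ch : IsChordalAdj Adj) {v x y : V} (hx : Adj v x) (hy : Adj v y)
    (hxy : x ≠ y)
    (h : Relation.ReflTransGen (fun a b => Adj a b ∧ (a = x ∨ (a ≠ v ∧ ¬ Adj v a)) ∧
      (b = y ∨ (b ≠ v ∧ ¬ Adj v b))) x y) : Adj x y := by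
  by_contra hn
  obtain ⟨m, p, h0, hm, hs, hinj, hchord⟩ := exists_shortest_chain _ x y h
  have hm0 : m ≠ 0 := by
    rintro rfl
    exact hxy (h0.symm.trans hm)
  have hm1 : m ≠ 1 := by
    rintro rfl
    apply hn
    have := (hs 0 (by omega)).1
    simpa [h0, hm] using this
  have hP : ∀ i ≤ m, p i = v ∨ Adj v (p i) → i = 0 ∨ i = m := by
    intro i hi hv
    by_contra hc
    push Not at hc
    rcases (hs i (by omega)).2.1 with h | h
    · exact hinj 0 i (by omega) hi (by rw [h0, h])
    · tauto
  have hpv : ∀ i ≤ m, p i ≠ v := by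
    intro i hi he
    rcases hP i hi (Or.inl he) with h | h
    · subst h
      rw [h0] at he
      exact irr v (he ▸ hx)
    · subst h
      rw [hm] at he
      exact irr v (he ▸ hy)
  have hno : ∀ i j, i + 1 < j → j ≤ m → ¬ Adj (p i) (p j) := by
    intro i j hij hj ha
    refine hchord i j hij hj ⟨ha, (hs i (by omega)).2.1, ?_⟩
    have := (hs (j - 1) (by omega)).2.2
    rwa [Nat.sub_add_cancel (by omega)] at this
  -- The path occupies the residues `0, …, m`, and `v` the residue `m + 1`, of a cycle of length
  -- `m + 2 ≥ 4`.
  have : NeZero (m + 2) := ⟨by omega⟩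
  have : Fact (1 < m + 2) := ⟨by omega⟩
  have hval : ∀ i : ZMod (m + 2), i.val < m + 2 := fun i => ZMod.val_lt i
  have hsucc : ∀ i : ZMod (m + 2), (i + 1).val = if i.val = m + 1 then 0 else i.val + 1 := by
    intro i
    rw [ZMod.val_add, ZMod.val_one]
    have := hval i
    split_ifs with h
    · rw [h, Nat.mod_self]
    · exact Nat.mod_eq_of_lt (by omega)
  have hne : ∀ i j : ZMod (m + 2), i.val = j.val → i = j := fun i j h => ZMod.val_injective _ h
  obtain ⟨i, j, hij, hji1, hij1, ha⟩ := ch (m + 2) (by omega)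
    (fun z => if z.val ≤ m then p z.val else v) (by
      intro i j he
      apply hne
      have h1 := hval i
      have h2 := hval j
      dsimp only at he
      split_ifs at he with h3 h4 h4
      · rcases lt_trichotomy i.val j.val with h | h | h
        · exact absurd he (hinj _ _ h h4)
        · exact h
        · exact absurd he.symm (hinj _ _ h h3)
      · exact absurd he (hpv _ h3)
      · exact absurd he.symm (hpv _ h4)
      · omega) (by
      intro i
      have h1 := hval i
      rw [hsucc]
      by_cases h : i.val = m + 1
      · have h2 : ¬ i.val ≤ m := by omega
        simpa [h, h0] using hx
      · by_cases h' : i.val = m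
        · simpa [h', hm] using sym _ _ hy
        · have h2 : i.val ≤ m := by omega
          have h3 : i.val + 1 ≤ m := by omega
          simpa [h, h2, h3] using (hs i.val (by omega)).1)
  have h1 := hval i
  have h2 := hval j
  have e1 : i.val ≠ j.val := fun h => hij (hne _ _ h)
  have e2 : j.val ≠ (i + 1).val := fun h => hji1 (hne _ _ h)
  have e3 : i.val ≠ (j + 1).val := fun h => hij1 (hne _ _ h)
  rw [hsucc] at e2 e3
  split_ifs at ha with h3 h4 h4
  · rw [if_neg (by omega)] at e2 e3
    rcases lt_or_gt_of_ne e1 with h | h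
    · exact hno _ _ (by omega) h4 ha
    · exact hno _ _ (by omega) h3 (sym _ _ ha)
  · rw [if_pos (by omega)] at e3
    rw [if_neg (by omega)] at e2
    rcases hP _ h3 (Or.inr (sym _ _ ha)) with h | h <;> omega
  · rw [if_pos (by omega)] at e2
    rw [if_neg (by omega)] at e3
    rcases hP _ h4 (Or.inr ha) with h | h <;> omega
  · exact irr _ ha

/-- Dirac's theorem in a form suited to induction: a vertex `v` with a non-neighbour has a
simplicial non-neighbour.  It is found in a component `C` of the graph minus the closed
neighbourhood of `v`; the attachment `N` of `C` is a clique by `adj_of_chain`, and the induction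
hypothesis is applied to `C ∪ N`. -/
theorem exists_simplicial_nonadj {V : Type} {Adj : V → V → Prop}
    (sym : ∀ u v, Adj u v → Adj v u) (irr : ∀ u, ¬ Adj u u) (ch : IsChordalAdj Adj)
    (S : Finset V) : ∀ v ∈ S, (∃ u ∈ S, u ≠ v ∧ ¬ Adj v u) →
      ∃ u ∈ S, u ≠ v ∧ ¬ Adj v u ∧
        ∀ a ∈ S, ∀ b ∈ S, Adj u a → Adj u b → a ≠ b → Adj a b := by
  classical
  induction S using Finset.strongInduction with
  | H S ih =>
  rintro v hv ⟨w, hwS, hwv, hvw⟩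
  let U : V → Prop := fun a => a ∈ S ∧ a ≠ v ∧ ¬ Adj v a
  let R : V → V → Prop := fun a b => Adj a b ∧ U a ∧ U b
  let C : V → Prop := fun a => Relation.ReflTransGen R w a
  let N : V → Prop := fun a => a ∈ S ∧ ¬ C a ∧ ∃ c, C c ∧ Adj c a
  have hCU : ∀ a, C a → U a := by
    intro a ha
    rcases Relation.ReflTransGen.cases_tail ha with h | ⟨b, _, h⟩
    · rw [h]
      exact ⟨hwS, hwv, hvw⟩
    · exact h.2.2
  have hRsym : ∀ a b, R a b → R b a := fun a b h => ⟨sym _ _ h.1, h.2.2, h.2.1⟩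
  have hNv : ∀ a, N a → Adj v a := by
    rintro a ⟨haS, hna, c, hc, hca⟩
    by_contra hva
    refine hna (Relation.ReflTransGen.tail hc ⟨hca, hCU c hc, haS, ?_, hva⟩)
    rintro rfl
    exact (hCU c hc).2.2 (sym _ _ hca)
  have hNclique : ∀ x y, N x → N y → x ≠ y → Adj x y := by
    intro x y hx hy hxy
    obtain ⟨c, hc, hcx⟩ := hx.2.2
    obtain ⟨d, hd, hdy⟩ := hy.2.2
    have hcw : ∀ c, C c → Relation.ReflTransGen R c w := by
      intro c hc
      induction hc with
      | refl => exact .refl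
      | tail _ hbc ih => exact .head (hRsym _ _ hbc) ih
    have hcd : Relation.ReflTransGen R c d := (hcw c hc).trans hd
    refine adj_of_chain sym irr ch (hNv x hx) (hNv y hy) hxy ?_
    refine Relation.ReflTransGen.head (b := c) ⟨sym _ _ hcx, Or.inl rfl, Or.inr (hCU c hc).2⟩ ?_
    refine Relation.ReflTransGen.tail (b := d) ?_ ⟨hdy, Or.inr (hCU d hd).2, Or.inl rfl⟩
    exact Relation.ReflTransGen.mono
      (fun a b hab => ⟨hab.1, Or.inr hab.2.1.2, Or.inr hab.2.2.2⟩) _ _ hcd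
  let T := S.filter (fun a => C a ∨ N a)
  have hT : ∀ a, a ∈ T ↔ C a ∨ N a := by
    intro a
    simp only [T, Finset.mem_filter, and_iff_right_iff_imp]
    rintro (h | h)
    · exact (hCU a h).1
    · exact h.1
  have hTS : T ⊂ S := by
    refine Finset.filter_ssubset.2 ⟨v, hv, ?_⟩
    rintro (h | h)
    · exact (hCU v h).2.1 rfl
    · exact irr v (hNv v h)
  have finish : ∀ u, C u → (∀ a ∈ T, ∀ b ∈ T, Adj u a → Adj u b → a ≠ b → Adj a b) →
      ∃ u ∈ S, u ≠ v ∧ ¬ Adj v u ∧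
        ∀ a ∈ S, ∀ b ∈ S, Adj u a → Adj u b → a ≠ b → Adj a b := by
    intro u hu hs
    have key : ∀ a ∈ S, Adj u a → a ∈ T := by
      intro a haS hua
      rw [hT]
      by_cases hC : C a
      · exact Or.inl hC
      · exact Or.inr ⟨haS, hC, u, hu, hua⟩
    exact ⟨u, (hCU u hu).1, (hCU u hu).2.1, (hCU u hu).2.2, fun a ha b hb hua hub =>
      hs a (key a ha hua) b (key b hb hub) hua hub⟩
  -- A non-universal vertex of `N` is preferred, so that the simplicial vertex found lies in `C`.
  by_cases h1 : ∃ x, N x ∧ ∃ u ∈ T, u ≠ x ∧ ¬ Adj x u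
  · obtain ⟨x, hx, hu⟩ := h1
    obtain ⟨u, huT, hux, hxu, hs⟩ := ih T hTS x ((hT x).2 (Or.inr hx)) hu
    refine finish u ?_ hs
    rcases (hT u).1 huT with h | h
    · exact h
    · exact absurd (hNclique x u hx h hux.symm) hxu
  · push Not at h1
    by_cases h2 : ∃ c ∈ T, ∃ u ∈ T, u ≠ c ∧ ¬ Adj c u
    · obtain ⟨c, hc, hu⟩ := h2
      obtain ⟨u, huT, huc, hcu, hs⟩ := ih T hTS c hc hu
      refine finish u ?_ hs
      rcases (hT u).1 huT with h | h
      · exact h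
      · exact absurd (sym _ _ (h1 u h c hc huc.symm)) hcu
    · push Not at h2
      exact finish w Relation.ReflTransGen.refl
        (fun a ha b hb _ _ hab => h2 a ha b hb hab.symm)

/-- Dirac's theorem for induced subgraphs of a chordal graph. -/
theorem exists_simplicial {V : Type} {Adj : V → V → Prop}
    (sym : ∀ u v, Adj u v → Adj v u) (irr : ∀ u, ¬ Adj u u) (ch : IsChordalAdj Adj)
    (S : Finset V) (hS : S.Nonempty) :
    ∃ u ∈ S, ∀ a ∈ S, ∀ b ∈ S, Adj u a → Adj u b → a ≠ b → Adj a b := by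
  by_cases h : ∃ v ∈ S, ∃ u ∈ S, u ≠ v ∧ ¬ Adj v u
  · obtain ⟨v, hv, hu⟩ := h
    obtain ⟨u, hu, _, _, hs⟩ := exists_simplicial_nonadj sym irr ch S v hv hu
    exact ⟨u, hu, hs⟩
  · push Not at h
    obtain ⟨u, hu⟩ := hS
    exact ⟨u, hu, fun a ha b hb _ _ hab => h a ha b hb hab.symm⟩

/-! ### Greedy dicolouring -/

/-- Adding a vertex `v` creates no monochromatic directed cycle if every monochromatic `b → v → a`
has the shortcut `b → a`.  The colouring condition is abstracted into the relation `R`. -/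
theorem acyclic_of_bypass {V : Type} (R : V → V → Prop) (v : V) (hvv : ¬ R v v)
    (byp : ∀ a b, R b v → R v a → R b a)
    (hac : ∀ x, ¬ Relation.TransGen (fun a b => R a b ∧ a ≠ v ∧ b ≠ v) x x) (x : V) :
    ¬ Relation.TransGen R x x := by
  have step : ∀ x y, x ≠ v → Relation.TransGen R x y →
      (y ≠ v → Relation.TransGen (fun a b => R a b ∧ a ≠ v ∧ b ≠ v) x y) ∧
      (y = v → ∃ b, b ≠ v ∧ R b v ∧
        Relation.ReflTransGen (fun a b => R a b ∧ a ≠ v ∧ b ≠ v) x b) := by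
    intro x y hx h
    induction h with
    | single h =>
      refine ⟨fun hy => .single ⟨h, hx, hy⟩, ?_⟩
      rintro rfl
      exact ⟨x, hx, h, .refl⟩
    | @tail y z _ hyz ih =>
      by_cases hy : y = v
      · obtain ⟨b, hb, hbv, hxb⟩ := ih.2 hy
        subst hy
        refine ⟨fun hz => Relation.TransGen.tail' hxb ⟨byp _ _ hbv hyz, hb, hz⟩, ?_⟩
        rintro rfl
        exact absurd hyz hvv
      · have h1 := ih.1 hy
        refine ⟨fun hz => h1.tail ⟨hyz, hy, hz⟩, ?_⟩
        rintro rfl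
        exact ⟨y, hy, hyz, h1.to_reflTransGen⟩
  intro h
  by_cases hx : x = v
  · subst hx
    obtain ⟨a, hva, hav⟩ := Relation.TransGen.head'_iff.1 h
    have hax : a ≠ x := by
      rintro rfl
      exact hvv hva
    exact hac a ((step a a hax (Relation.TransGen.tail' hav hva)).1 hax)
  · exact hac x ((step x x hx h).1 hx)

/-- If, for every vertex `v` and every clique `K` of neighbours of `v`, one of `n` colours
can be given to `v` without completing a monochromatic directed triangle with two vertices of `K`,
then the orientation has an `n`-dicolouring. Colours are natural numbers less than `n`, so that
the case `n = 0` needs no separate treatment. -/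
theorem greedy_colouring {V : Type} [Fintype V] (A : V → V → Prop) (ho : IsOriented A)
    (ch : IsChordalAdj (fun u v : V => A u v ∨ A v u)) (n : ℕ)
    (h : ∀ (v : V) (K : Finset V), (∀ a ∈ K, A v a ∨ A a v) →
      (∀ a ∈ K, ∀ b ∈ K, a ≠ b → A a b ∨ A b a) → ∀ φ : V → ℕ,
      ∃ c < n, ∀ a ∈ K, ∀ b ∈ K, φ a = c → φ b = c → A v a → A a b → A b v → False) :
    dichrom A ≤ n := by
  classical
  have irr : ∀ u, ¬ A u u := fun u hu => ho u u hu hu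
  have main : ∀ S : Finset V, ∃ φ : V → ℕ, (∀ x ∈ S, φ x < n) ∧ ∀ c x,
      ¬ Relation.TransGen (fun a b => A a b ∧ (a ∈ S ∧ b ∈ S) ∧ φ a = c ∧ φ b = c) x x := by
    intro S
    induction S using Finset.strongInduction with
    | H S ih =>
    rcases S.eq_empty_or_nonempty with rfl | hS
    · refine ⟨fun _ => 0, by simp, ?_⟩
      intro c x hx
      obtain ⟨y, hy, _⟩ := Relation.TransGen.head'_iff.1 hx
      simp at hy
    obtain ⟨v, hv, hsimp⟩ := exists_simplicial (Adj := fun u v : V => A u v ∨ A v u)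
      (fun u v h => h.symm) (fun u h => irr u (or_self_iff.1 h)) ch S hS
    obtain ⟨φ, hφ, hac⟩ := ih (S.erase v) (Finset.erase_ssubset hv)
    obtain ⟨c₀, hc₀, hgood⟩ := h v (S.filter (fun a => A v a ∨ A a v))
      (fun a ha => (Finset.mem_filter.1 ha).2)
      (fun a ha b hb hab => hsimp a (Finset.mem_filter.1 ha).1 b (Finset.mem_filter.1 hb).1
        (Finset.mem_filter.1 ha).2 (Finset.mem_filter.1 hb).2 hab) φ
    have hupd : ∀ a, a ≠ v → Function.update φ v c₀ a = φ a :=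
      fun a ha => Function.update_of_ne ha _ _
    refine ⟨Function.update φ v c₀, ?_, ?_⟩
    · intro x hx
      by_cases hxv : x = v
      · subst hxv
        simpa using hc₀
      · rw [hupd x hxv]
        exact hφ x (Finset.mem_erase.2 ⟨hxv, hx⟩)
    · intro c
      refine acyclic_of_bypass _ v (fun hvv => irr v hvv.1) ?_ ?_
      · rintro a b ⟨hbv, ⟨hbS, _⟩, hb, hvc⟩ ⟨hva, ⟨_, haS⟩, _, ha⟩
        refine ⟨?_, ⟨hbS, haS⟩, hb, ha⟩
        have hav : a ≠ v := by
          rintro rfl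
          exact irr _ hva
        have hbv' : b ≠ v := by
          rintro rfl
          exact irr _ hbv
        have hab : a ≠ b := by
          rintro rfl
          exact ho _ _ hva hbv
        rw [Function.update_self] at hvc
        rw [hupd a hav] at ha
        rw [hupd b hbv'] at hb
        rcases hsimp a haS b hbS (Or.inl hva) (Or.inr hbv) hab with h1 | h1
        · exact (hgood a (Finset.mem_filter.2 ⟨haS, Or.inl hva⟩) b
            (Finset.mem_filter.2 ⟨hbS, Or.inr hbv⟩) (ha.trans hvc.symm) (hb.trans hvc.symm)
            hva h1 hbv).elim
        · exact h1
      · intro x hx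
        refine hac c x (Relation.TransGen.mono ?_ _ _ hx)
        rintro a b ⟨⟨hab, ⟨haS, hbS⟩, ha, hb⟩, hav, hbv⟩
        rw [hupd a hav] at ha
        rw [hupd b hbv] at hb
        exact ⟨hab, ⟨Finset.mem_erase.2 ⟨hav, haS⟩, Finset.mem_erase.2 ⟨hbv, hbS⟩⟩, ha, hb⟩
  obtain ⟨φ, hφ, hac⟩ := main Finset.univ
  refine Nat.sInf_le ⟨fun x => ⟨φ x, hφ x (Finset.mem_univ x)⟩, ?_⟩
  intro c v _ ht
  refine hac c.val v (Relation.TransGen.mono ?_ _ _ ht)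
  rintro a b ⟨hab, ha, hb⟩
  exact ⟨hab, ⟨Finset.mem_univ _, Finset.mem_univ _⟩, congrArg Fin.val ha, congrArg Fin.val hb⟩

/-! ### Large cliques contain transitive tournaments -/

/-- Some vertex of a finite tournament has at least half of the other vertices as
out-neighbours. -/
theorem exists_large_outdegree {V : Type} [DecidableEq V] (A : V → V → Prop) [DecidableRel A]
    (T : Finset V) (hT : T.Nonempty) (ht : ∀ a ∈ T, ∀ b ∈ T, a ≠ b → A a b ∨ A b a) :
    ∃ a ∈ T, T.card ≤ 2 * (T.filter (fun b => A a b)).card + 1 := by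
  by_contra hc
  push Not at hc
  have hsum : ∑ a ∈ T, (T.filter (fun b => A a b)).card
      = ∑ a ∈ T, (T.filter (fun b => A b a)).card :=
    Finset.sum_card_bipartiteAbove_eq_sum_card_bipartiteBelow A
  have hlt : ∑ a ∈ T, (T.filter (fun b => A a b)).card
      < ∑ a ∈ T, (T.filter (fun b => A b a)).card := by
    refine Finset.sum_lt_sum_of_nonempty hT ?_
    intro a ha
    have h1 := hc a ha
    have h2 : T.erase a ⊆ T.filter (fun b => A a b) ∪ T.filter (fun b => A b a) := by
      intro b hb
      obtain ⟨hba, hb⟩ := Finset.mem_erase.1 hb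
      rcases ht a ha b hb hba.symm with h | h <;> simp [hb, h]
    have h3 := (Finset.card_le_card h2).trans (Finset.card_union_le _ _)
    rw [Finset.card_erase_of_mem ha] at h3
    omega
  omega

/-- A tournament on `2 ^ j` vertices contains a transitive tournament on `j + 1` vertices, listed
by `f` from source to sink. -/
theorem exists_transitive {V : Type} (A : V → V → Prop) (j : ℕ) :
    ∀ T : Finset V, (∀ a ∈ T, ∀ b ∈ T, a ≠ b → A a b ∨ A b a) → 2 ^ j ≤ T.card →
      ∃ f : Fin (j + 1) → V, (∀ i, f i ∈ T) ∧ ∀ i i', i < i' → A (f i) (f i') := by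
  classical
  induction j with
  | zero =>
    intro T _ hcard
    obtain ⟨a, ha⟩ := Finset.card_pos.1 (show 0 < T.card by simpa using hcard)
    exact ⟨fun _ => a, fun _ => ha, fun i i' h => absurd h (by omega)⟩
  | succ j ih =>
    intro T ht hcard
    have hpos : 0 < 2 ^ j := by positivity
    rw [pow_succ] at hcard
    obtain ⟨a, ha, hdeg⟩ := exists_large_outdegree A T (Finset.card_pos.1 (by omega)) ht
    obtain ⟨f, hf, hA⟩ := ih (T.filter (fun b => A a b))
      (fun x hx y hy => ht x (Finset.mem_filter.1 hx).1 y (Finset.mem_filter.1 hy).1)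
      (by omega)
    refine ⟨Fin.cons a f, ?_, ?_⟩
    · intro i
      refine Fin.cases ?_ (fun i => ?_) i
      · simpa using ha
      · simpa using (Finset.mem_filter.1 (hf i)).1
    · intro i i'
      refine Fin.cases ?_ (fun i' => ?_) i'
      · intro h
        exact absurd h (Fin.not_lt_zero _)
      · refine Fin.cases ?_ (fun i => ?_) i
        · intro _
          simpa using (Finset.mem_filter.1 (hf i')).2
        · intro h
          simpa using hA i i' (Fin.succ_lt_succ_iff.1 h)

theorem injective_of_transitive {V : Type} {A : V → V → Prop} (ho : IsOriented A) {k : ℕ}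
    {f : Fin k → V} (hA : ∀ i i', i < i' → A (f i) (f i')) : Function.Injective f := by
  intro i i' he
  rcases lt_trichotomy i i' with h | h | h
  · have := hA _ _ h
    rw [he] at this
    exact (ho _ _ this this).elim
  · exact h
  · have := hA _ _ h
    rw [he] at this
    exact (ho _ _ this this).elim

theorem card_lt_of_no_transitive {V : Type} {A : V → V → Prop} (ho : IsOriented A) {k : ℕ}
    (hk : 1 ≤ k) (hno : ¬ HasCopy A (fun i j : Fin k => i < j)) (T : Finset V)
    (ht : ∀ a ∈ T, ∀ b ∈ T, a ≠ b → A a b ∨ A b a) : T.card < 2 ^ (k - 1) := by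
  by_contra hc
  obtain ⟨j, rfl⟩ : ∃ j, k = j + 1 := ⟨k - 1, by omega⟩
  obtain ⟨f, _, hA⟩ := exists_transitive A j T ht (by simpa using hc)
  exact hno ⟨f, injective_of_transitive ho hA, hA⟩

/-- In an orientation without `C⃗3(1,1,k)`, pairwise adjacent vertices completing an arc `a → b`
to directed triangles number fewer than `2 ^ (k - 1)`. -/
theorem card_triangles_lt {V : Type} {A : V → V → Prop} (ho : IsOriented A) {k : ℕ}
    (hk : 1 ≤ k) (hno : ¬ HasCopy A (cyc3 (fun _ _ : Unit => False) (fun _ _ : Unit => False)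
        (fun i j : Fin k => i < j))) {a b : V} (hab : A a b) (T : Finset V)
    (ht : ∀ x ∈ T, ∀ y ∈ T, x ≠ y → A x y ∨ A y x) (hT : ∀ x ∈ T, A b x ∧ A x a) :
    T.card < 2 ^ (k - 1) := by
  by_contra hc
  obtain ⟨j, rfl⟩ : ∃ j, k = j + 1 := ⟨k - 1, by omega⟩
  obtain ⟨f, hf, hA⟩ := exists_transitive A j T ht (by simpa using hc)
  have irr : ∀ u, ¬ A u u := fun u hu => ho u u hu hu
  have hne : a ≠ b := fun h => irr b (h ▸ hab)
  have hfa : ∀ i, f i ≠ a := fun i h => irr a (by simpa [h] using (hT _ (hf i)).2)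
  have hfb : ∀ i, f i ≠ b := fun i h => irr b (by simpa [h] using (hT _ (hf i)).1)
  refine hno ⟨Sum.elim (fun _ => a) (Sum.elim (fun _ => b) f), ?_, ?_⟩
  · rintro (x | x | x) (y | y | y) he
    · rfl
    · exact absurd he hne
    · exact absurd he.symm (hfa y)
    · exact absurd he.symm hne
    · rfl
    · exact absurd he.symm (hfb y)
    · exact absurd he (hfa x)
    · exact absurd he (hfb x)
    · exact congrArg (fun z => Sum.inr (Sum.inr z)) (injective_of_transitive ho hA he)
  · rintro (x | x | x) (y | y | y) h
    · exact h.elim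
    · exact hab
    · exact h.elim
    · exact h.elim
    · exact h.elim
    · exact (hT _ (hf y)).1
    · exact (hT _ (hf x)).2
    · exact h.elim
    · exact hA x y h

/-! ### The two bounds -/

/-- The counting argument of (ii): among `D ^ 2` colours with `D = 2 ^ (k - 1)`, one does not
complete a monochromatic directed triangle at `v`. -/
theorem exists_free_colour {V : Type} {A : V → V → Prop} (ho : IsOriented A) {k : ℕ}
    (hk : 1 ≤ k) (hno : ¬ HasCopy A (cyc3 (fun _ _ : Unit => False) (fun _ _ : Unit => False)
        (fun i j : Fin k => i < j))) (v : V) (K : Finset V) (hv : ∀ a ∈ K, A v a ∨ A a v)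
    (hK : ∀ a ∈ K, ∀ b ∈ K, a ≠ b → A a b ∨ A b a) (φ : V → ℕ) :
    ∃ c < 2 ^ (2 * k - 2), ∀ a ∈ K, ∀ b ∈ K, φ a = c → φ b = c →
      A v a → A a b → A b v → False := by
  classical
  by_contra hcon
  push Not at hcon
  have irr : ∀ u, ¬ A u u := fun u hu => ho u u hu hu
  have hsq : 2 ^ (2 * k - 2) = 2 ^ (k - 1) * 2 ^ (k - 1) := by
    rw [← pow_add]
    congr 1
    omega
  have : Nonempty V := ⟨v⟩
  choose! a haK b hbK hφa hφb hva hab hbv _ using hcon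
  set D := 2 ^ (k - 1)
  have hDpos : 0 < D := by positivity
  set T := (Finset.range (2 ^ (2 * k - 2))).image a with hTdef
  have hTcard : T.card = D * D := by
    rw [hTdef, Finset.card_image_of_injOn, Finset.card_range, hsq]
    intro i hi j hj hij
    rw [← hφa i (by simpa using hi), ← hφa j (by simpa using hj), hij]
  have hTmem : ∀ x ∈ T, x ∈ K ∧ A v x := by
    intro x hx
    obtain ⟨c, hc, rfl⟩ := Finset.mem_image.1 hx
    exact ⟨haK c (Finset.mem_range.1 hc), hva c (Finset.mem_range.1 hc)⟩
  obtain ⟨x₀, hx₀, hdeg⟩ := exists_large_outdegree (fun x y => A y x) T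
    (Finset.card_pos.1 (by rw [hTcard]; positivity))
    (fun x hx y hy hxy => (hK x (hTmem x hx).1 y (hTmem y hy).1 hxy).symm)
  obtain ⟨c, hc, rfl⟩ := Finset.mem_image.1 hx₀
  rw [Finset.mem_range] at hc
  -- `P` and `Q` complete triangles with the arcs `b c → v` and `a c → b c` respectively.
  set P := K.filter (fun x => A v x ∧ A x (b c)) with hP
  set Q := insert v (K.filter (fun x => A (b c) x ∧ A x (a c))) with hQ
  have hPcard : P.card < D := by
    refine card_triangles_lt ho hk hno (hbv c hc) P ?_ ?_
    · intro x hx y hy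
      exact hK x (Finset.mem_filter.1 hx).1 y (Finset.mem_filter.1 hy).1
    · intro x hx
      exact (Finset.mem_filter.1 hx).2
  have hQcard : Q.card < D := by
    refine card_triangles_lt ho hk hno (hab c hc) Q ?_ ?_
    · intro x hx y hy hxy
      rcases Finset.mem_insert.1 hx with rfl | hx'
      · rcases Finset.mem_insert.1 hy with rfl | hy
        · exact absurd rfl hxy
        · exact hv y (Finset.mem_filter.1 hy).1
      · rcases Finset.mem_insert.1 hy with rfl | hy
        · exact (hv x (Finset.mem_filter.1 hx').1).symm
        · exact hK x (Finset.mem_filter.1 hx').1 y (Finset.mem_filter.1 hy).1 hxy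
    · intro x hx
      rcases Finset.mem_insert.1 hx with rfl | hx
      · exact ⟨hbv c hc, hva c hc⟩
      · exact (Finset.mem_filter.1 hx).2
  have haP : a c ∈ P := Finset.mem_filter.2 ⟨haK c hc, hva c hc, hab c hc⟩
  have hvQ : v ∈ Q := Finset.mem_insert_self _ _
  have hsub : T.filter (fun x => A x (a c)) ⊆ P.erase (a c) ∪ Q.erase v := by
    intro x hx
    obtain ⟨hxT, hxa⟩ := Finset.mem_filter.1 hx
    obtain ⟨hxK, hvx⟩ := hTmem x hxT
    have hxb : x ≠ b c := by
      rintro rfl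
      exact ho _ _ hvx (hbv c hc)
    rw [Finset.mem_union]
    rcases hK x hxK (b c) (hbK c hc) hxb with h | h
    · left
      refine Finset.mem_erase.2 ⟨?_, Finset.mem_filter.2 ⟨hxK, hvx, h⟩⟩
      rintro rfl
      exact irr _ hxa
    · right
      refine Finset.mem_erase.2 ⟨?_, Finset.mem_insert_of_mem
        (Finset.mem_filter.2 ⟨hxK, h, hxa⟩)⟩
      rintro rfl
      exact irr _ hvx
  have hle := (Finset.card_le_card hsub).trans (Finset.card_union_le _ _)
  have h1 := Finset.card_erase_add_one haP
  have h2 := Finset.card_erase_add_one hvQ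
  rw [hTcard] at hdeg
  -- `D * D ≤ 2 * ((D - 2) + (D - 2)) + 1`, as `a c` and `v` were erased from `P` and `Q`.
  have h3 : D * D + 7 ≤ 4 * D := by omega
  zify at h3
  nlinarith [sq_nonneg ((D : ℤ) - 2)]

/-- Theorem 10.2.5: transitive tournaments and `C⃗3(1,1,k)` are heroes in oriented chordal
graphs, with explicit bounds. -/
theorem stmt15 (k : ℕ) (hk : 1 ≤ k) :
    (∀ (V : Type) [Fintype V] (A : V → V → Prop), IsOriented A →
      IsChordalAdj (fun u v : V => A u v ∨ A v u) →
      ¬ HasCopy A (fun i j : Fin k => i < j) →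
      dichrom A ≤ 2 ^ (k - 1) - 1) ∧
    (∀ (V : Type) [Fintype V] (A : V → V → Prop), IsOriented A →
      IsChordalAdj (fun u v : V => A u v ∨ A v u) →
      ¬ HasCopy A (cyc3 (fun _ _ : Unit => False) (fun _ _ : Unit => False)
        (fun i j : Fin k => i < j)) →
      dichrom A ≤ 2 ^ (2 * k - 2)) := by
  refine ⟨fun V _ A ho ch hno => greedy_colouring A ho ch _ ?_,
    fun V _ A ho ch hno => greedy_colouring A ho ch _ (exists_free_colour ho hk hno)⟩
  classical
  intro v K hv hK φ
  have irr : ∀ u, ¬ A u u := fun u hu => ho u u hu hu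
  have hvK : v ∉ K := fun h => irr v (or_self_iff.1 (hv v h))
  have hcard : (insert v K).card < 2 ^ (k - 1) := by
    refine card_lt_of_no_transitive ho hk hno _ ?_
    intro x hx y hy hxy
    rcases Finset.mem_insert.1 hx with rfl | hx'
    · rcases Finset.mem_insert.1 hy with rfl | hy
      · exact absurd rfl hxy
      · exact hv y hy
    · rcases Finset.mem_insert.1 hy with rfl | hy
      · exact (hv x hx').symm
      · exact hK x hx' y hy hxy
  rw [Finset.card_insert_of_notMem hvK] at hcard
  have hlt : (K.image φ).card < (Finset.range (2 ^ (k - 1) - 1)).card := by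
    rw [Finset.card_range]
    exact lt_of_le_of_lt Finset.card_image_le (by omega)
  obtain ⟨c, hc, hcK⟩ := Finset.exists_mem_notMem_of_card_lt_card hlt
  exact ⟨c, Finset.mem_range.1 hc, fun a ha _ _ hac _ _ _ _ =>
    hcK (Finset.mem_image.2 ⟨a, ha, hac⟩)⟩
end

section
/- For every positive integer k there exists an orientation of a chordal graph with no subdigraph isomorphic to C⃗3(1,2,2) and with dichromatic number exactly k. (In other words, C⃗3(1,2,2) is not a hero in orientations of chordal graphs.) -/
def C3122 : (Unit ⊕ Fin 2 ⊕ Fin 2) → (Unit ⊕ Fin 2 ⊕ Fin 2) → Prop :=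
  cyc3 (fun _ _ : Unit => False) (fun i j : Fin 2 => i < j) (fun i j : Fin 2 => i < j)

/-- Arcs of the digraph obtained from the transitive tournament on `n` vertices by gluing on each
arc `a → b` a copy of `A`, dominated by `b` and dominating `a`. The copies indexed by pairs
`(a, b)` with `¬ a < b` are not joined to anything. -/
def stepArc {W : Type} (n : ℕ) (A : W → W → Prop) :
    (Fin n ⊕ (Fin n × Fin n × W)) → (Fin n ⊕ (Fin n × Fin n × W)) → Prop
  | Sum.inl i, Sum.inl j => i < j
  | Sum.inl i, Sum.inr (a, b, _) => a < b ∧ i = b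
  | Sum.inr (a, b, _), Sum.inl j => a < b ∧ j = a
  | Sum.inr (a, b, x), Sum.inr (a', b', y) => a = a' ∧ b = b' ∧ A x y

/-- No directed cycle is monochromatic, for a colouring with natural numbers as colours. -/
def GoodNat {V : Type} (A : V → V → Prop) (φ : V → ℕ) : Prop :=
  ∀ v : V, ¬ Relation.TransGen (fun a b => A a b ∧ φ a = φ v ∧ φ b = φ v) v v

theorem stepArc_oriented {W : Type} {n : ℕ} {A : W → W → Prop} (h : IsOriented A) :
    IsOriented (stepArc n A) := by
  rintro (i | ⟨a, b, x⟩) (j | ⟨a', b', y⟩) h1 h2 <;> simp only [stepArc] at h1 h2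
  · omega
  · omega
  · omega
  · exact h _ _ h1.2.2 h2.2.2

theorem zmod_small_ne_zero {m : ℕ} (hm : 4 ≤ m) (t : ℕ) (h0 : 0 < t) (ht : t < 4) :
    (t : ZMod m) ≠ 0 := by
  intro h
  rw [ZMod.natCast_eq_zero_iff] at h
  have := Nat.le_of_dvd h0 h
  omega

theorem zmod_forall_of_succ {m : ℕ} (hm : 4 ≤ m) (P : ZMod m → Prop) (i : ZMod m) (h0 : P i)
    (hs : ∀ j, P j → P (j + 1)) (j : ZMod m) : P j := by
  have : NeZero m := ⟨by omega⟩
  have key : ∀ t : ℕ, P (i + t) := by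
    intro t
    induction t with
    | zero => simpa using h0
    | succ t ih => have := hs _ ih; rw [Nat.cast_succ, ← add_assoc]; exact this
  have := key (j - i).val
  rwa [ZMod.natCast_zmod_val, add_sub_cancel] at this

theorem stepArc_chordal {W : Type} {n : ℕ} {A : W → W → Prop}
    (h : IsChordalAdj (fun u v : W => A u v ∨ A v u)) :
    IsChordalAdj (fun u v => stepArc n A u v ∨ stepArc n A v u) := by
  intro m hm c hc hadj
  have h2 := zmod_small_ne_zero hm 2 (by norm_num) (by norm_num)
  have h3 := zmod_small_ne_zero hm 3 (by norm_num) (by norm_num)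
  have h1 := zmod_small_ne_zero hm 1 (by norm_num) (by norm_num)
  push_cast at h1 h2 h3
  -- It suffices to find two vertices at distance two on the cycle which are adjacent.
  have chord : ∀ i : ZMod m, (stepArc n A (c i) (c (i + 1 + 1)) ∨
      stepArc n A (c (i + 1 + 1)) (c i)) → ∃ i j : ZMod m, i ≠ j ∧ j ≠ i + 1 ∧ i ≠ j + 1 ∧
        (stepArc n A (c i) (c j) ∨ stepArc n A (c j) (c i)) := by
    intro i hi
    refine ⟨i, i + 1 + 1, ?_, ?_, ?_, hi⟩
    · intro e; apply h2; linear_combination -e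
    · intro e; apply h1; linear_combination e
    · intro e; apply h3; linear_combination -e
  have hne : ∀ i : ZMod m, c i ≠ c (i + 1 + 1) := by
    intro i e
    apply h2
    linear_combination -(hc e)
  by_cases hex : ∃ i a b x, c i = Sum.inr (a, b, x)
  · obtain ⟨i, a, b, x, hi⟩ := hex
    by_cases hs : ∀ j, (∃ y, c j = Sum.inr (a, b, y)) → ∃ y, c (j + 1) = Sum.inr (a, b, y)
    · have hall := zmod_forall_of_succ hm (fun j => ∃ y, c j = Sum.inr (a, b, y)) i ⟨x, hi⟩ hs
      choose d hd using hall
      have hinj : Function.Injective d := by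
        intro s t e
        apply hc
        rw [hd, hd, e]
      obtain ⟨s, t, e1, e2, e3, e4⟩ := h m hm d hinj (by
        intro s
        have := hadj s
        simpa [hd, stepArc] using this)
      exact ⟨s, t, e1, e2, e3, by simpa [hd, stepArc] using e4⟩
    · push Not at hs
      obtain ⟨j, ⟨y, hj⟩, hj'⟩ := hs
      obtain ⟨s, rfl⟩ : ∃ s, j = s + 1 := ⟨j - 1, by ring⟩
      apply chord s
      have e1 := hadj s
      have e2 := hadj (s + 1)
      have e3 := hne s
      rw [hj] at e1 e2
      rcases hu : c s with p | ⟨p, q, z⟩ <;>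
        rcases hv : c (s + 1 + 1) with p' | ⟨p', q', z'⟩ <;>
        rw [hu] at e1 e3 <;> rw [hv] at e2 e3 hj' <;> simp only [stepArc] at e1 e2 ⊢
      · have : p ≠ p' := fun e => e3 (by rw [e])
        omega
      · exfalso
        rcases e2 with ⟨rfl, rfl, -⟩ | ⟨rfl, rfl, -⟩ <;> exact hj' z' rfl
      · omega
      · exfalso
        rcases e2 with ⟨rfl, rfl, -⟩ | ⟨rfl, rfl, -⟩ <;> exact hj' z' rfl
  · push Not at hex
    apply chord 0
    have e3 := hne 0
    rcases hu : c 0 with p | ⟨p, q, z⟩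
    · rcases hv : c (0 + 1 + 1) with p' | ⟨p', q', z'⟩
      · rw [hu, hv] at e3
        have : p ≠ p' := fun e => e3 (by rw [e])
        simp only [stepArc]
        omega
      · exact absurd hv (hex _ _ _ _)
    · exact absurd hu (hex _ _ _ _)

theorem stepArc_noCopy {W : Type} {n : ℕ} {A : W → W → Prop} (h : ¬ HasCopy A C3122) :
    ¬ HasCopy (stepArc n A) C3122 := by
  rintro ⟨f, hf, hA⟩
  by_cases hall : ∃ a b, ∀ t, ∃ x, f t = Sum.inr (a, b, x)
  · obtain ⟨a, b, hall⟩ := hall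
    choose g hg using hall
    refine h ⟨g, ?_, ?_⟩
    · intro s t e
      apply hf
      rw [hg, hg, e]
    · intro s t e
      have := hA s t e
      rw [hg, hg] at this
      exact this.2.2
  · have a1 := hA (.inl ()) (.inr (.inl 0)) (by simp [C3122, cyc3])
    have a2 := hA (.inl ()) (.inr (.inl 1)) (by simp [C3122, cyc3])
    have a3 := hA (.inr (.inl 0)) (.inr (.inl 1)) (by simp [C3122, cyc3])
    have a4 := hA (.inr (.inl 0)) (.inr (.inr 0)) (by simp [C3122, cyc3])
    have a5 := hA (.inr (.inl 0)) (.inr (.inr 1)) (by simp [C3122, cyc3])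
    have a6 := hA (.inr (.inl 1)) (.inr (.inr 0)) (by simp [C3122, cyc3])
    have a7 := hA (.inr (.inl 1)) (.inr (.inr 1)) (by simp [C3122, cyc3])
    have a8 := hA (.inr (.inr 0)) (.inr (.inr 1)) (by simp [C3122, cyc3])
    have a9 := hA (.inr (.inr 0)) (.inl ()) (by simp [C3122, cyc3])
    have a10 := hA (.inr (.inr 1)) (.inl ()) (by simp [C3122, cyc3])
    -- Split on which of the five vertices lie in glued copies: in each mixed case the arcs force
    -- an inconsistent system of equalities and inequalities between the vertices of the tournament.
    rcases e1 : f (.inl ()) with p1 | ⟨p1, q1, z1⟩ <;>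
    rcases e2 : f (.inr (.inl 0)) with p2 | ⟨p2, q2, z2⟩ <;>
    rcases e3 : f (.inr (.inl 1)) with p3 | ⟨p3, q3, z3⟩ <;>
    rcases e4 : f (.inr (.inr 0)) with p4 | ⟨p4, q4, z4⟩ <;>
    rcases e5 : f (.inr (.inr 1)) with p5 | ⟨p5, q5, z5⟩ <;>
    simp only [e1, e2, e3, e4, e5, stepArc] at a1 a2 a3 a4 a5 a6 a7 a8 a9 a10 <;>
    first
    | omega
    | skip
    -- The remaining case: all five vertices lie in the same copy.
    obtain ⟨rfl, rfl, -⟩ := a1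
    obtain ⟨rfl, rfl, -⟩ := a3
    obtain ⟨rfl, rfl, -⟩ := a6
    obtain ⟨rfl, rfl, -⟩ := a8
    refine hall ⟨p1, q1, ?_⟩
    rintro (⟨⟩ | t | t)
    · exact ⟨_, e1⟩
    · fin_cases t
      · exact ⟨_, e2⟩
      · exact ⟨_, e3⟩
    · fin_cases t
      · exact ⟨_, e4⟩
      · exact ⟨_, e5⟩

theorem stepArc_lower {W : Type} [Fintype W] {k : ℕ} {A : W → W → Prop}
    (h : ∀ φ : W → ℕ, GoodNat A φ → k ≤ (Finset.univ.image φ).card)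
    (φ : (Fin (k + 1) ⊕ (Fin (k + 1) × Fin (k + 1) × W)) → ℕ)
    (hφ : GoodNat (stepArc (k + 1) A) φ) : k + 1 ≤ (Finset.univ.image φ).card := by
  by_contra! hlt
  obtain ⟨u, -, v, -, huv, he⟩ := Finset.exists_ne_map_eq_of_card_lt_of_maps_to
    (s := (Finset.univ : Finset (Fin (k + 1)))) (t := Finset.univ.image φ)
    (f := fun i => φ (Sum.inl i)) (by simpa using hlt) (fun i _ => by simp)
  wlog hlt' : u < v generalizing u v
  · exact this v u huv.symm he.symm (lt_of_le_of_ne (not_lt.mp hlt') huv.symm)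
  -- The copy glued on `u → v` uses all the colours, in particular that of `u` and `v`.
  have hgood : GoodNat A (fun x => φ (Sum.inr (u, v, x))) := by
    intro x hx
    apply hφ (Sum.inr (u, v, x))
    exact hx.lift (fun y => Sum.inr (u, v, y)) (fun a b hab => ⟨⟨rfl, rfl, hab.1⟩, hab.2⟩)
  have hk := h _ hgood
  have hsub : Finset.univ.image (fun x => φ (Sum.inr (u, v, x))) ⊆ Finset.univ.image φ := by
    intro c hc
    obtain ⟨x, -, rfl⟩ := Finset.mem_image.mp hc
    exact Finset.mem_image_of_mem _ (Finset.mem_univ _)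
  have heq := Finset.eq_of_subset_of_card_le hsub (by omega)
  have hmem : φ (Sum.inl u) ∈ Finset.univ.image φ :=
    Finset.mem_image_of_mem _ (Finset.mem_univ _)
  rw [← heq] at hmem
  obtain ⟨x, -, hx⟩ := Finset.mem_image.mp hmem
  refine hφ (Sum.inl u) (Relation.TransGen.head (b := Sum.inl v) ⟨hlt', rfl, he.symm⟩
    (Relation.TransGen.head (b := Sum.inr (u, v, x)) ⟨⟨hlt', rfl⟩, he.symm, hx⟩
      (Relation.TransGen.single ⟨⟨hlt', rfl⟩, hx, rfl⟩)))

/-- In the class of colour `i` of the new digraph, the copies glued on arcs leaving `i` precede the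
vertex `i`, which precedes the copies glued on arcs entering `i`; the height function `h` records
this order. -/
theorem stepArc_upper {W : Type} [Fintype W] {k : ℕ} {A : W → W → Prop}
    (hu : ∃ φ h : W → ℕ, (∀ x, φ x < k) ∧ ∀ x y, A x y → φ x = φ y → h x < h y) :
    ∃ φ h : (Fin (k + 1) ⊕ (Fin (k + 1) × Fin (k + 1) × W)) → ℕ, (∀ x, φ x < k + 1) ∧
      ∀ x y, stepArc (k + 1) A x y → φ x = φ y → h x < h y := by
  obtain ⟨φ, h, hφ, hh⟩ := hu
  let M := Finset.univ.sup h + 1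
  have hM : ∀ x, h x < M := fun x => Nat.lt_succ_of_le (Finset.le_sup (Finset.mem_univ x))
  refine ⟨Sum.elim (fun i => i.val) (fun t => φ t.2.2),
    Sum.elim (fun _ => M) (fun t => h t.2.2 + if t.2.1.val = φ t.2.2 then M + 1 else 0), ?_, ?_⟩
  · rintro (i | ⟨a, b, x⟩)
    · exact i.isLt
    · exact (hφ x).trans (Nat.lt_succ_self k)
  · rintro (i | ⟨a, b, x⟩) (j | ⟨a', b', y⟩) hA he <;>
      simp only [stepArc, Sum.elim_inl, Sum.elim_inr] at hA he ⊢
    · omega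
    · obtain ⟨-, rfl⟩ := hA
      rw [if_pos he]
      omega
    · obtain ⟨hab, rfl⟩ := hA
      rw [if_neg (by omega)]
      exact hM x
    · obtain ⟨-, rfl, hxy⟩ := hA
      have := hh x y hxy he
      rw [he]
      omega

/-- The inductive statement. The lower bound counts the colours used by any dicolouring, and the
upper bound is witnessed by a colouring together with a height function that increases along
monochromatic arcs. -/
theorem exists_digraph (k : ℕ) : ∃ (V : Type) (_ : Fintype V) (A : V → V → Prop),
    IsOriented A ∧ IsChordalAdj (fun u v : V => A u v ∨ A v u) ∧ ¬ HasCopy A C3122 ∧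
    (∀ φ : V → ℕ, GoodNat A φ → k ≤ (Finset.univ.image φ).card) ∧
    (∃ φ h : V → ℕ, (∀ x, φ x < k) ∧ ∀ x y, A x y → φ x = φ y → h x < h y) := by
  induction k with
  | zero =>
    refine ⟨Empty, inferInstance, fun _ _ => False, fun u => u.elim, ?_, ?_, by simp, ?_⟩
    · exact fun m _ c => (c 0).elim
    · rintro ⟨f, -⟩
      exact (f (.inl ())).elim
    · exact ⟨fun u => u.elim, fun u => u.elim, fun u => u.elim, fun u => u.elim⟩
  | succ k ih =>
    obtain ⟨W, _, A, h1, h2, h3, h4, h5⟩ := ih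
    exact ⟨_, inferInstance, stepArc (k + 1) A, stepArc_oriented h1, stepArc_chordal h2,
      stepArc_noCopy h3, stepArc_lower h4, stepArc_upper h5⟩

/-- `C⃗3(1,2,2)` is not a hero in orientations of chordal graphs. -/
theorem stmt16 : ∀ k : ℕ, 1 ≤ k → ∃ (V : Type) (_ : Fintype V) (A : V → V → Prop),
    IsOriented A ∧ IsChordalAdj (fun u v : V => A u v ∨ A v u) ∧
    ¬ HasCopy A C3122 ∧ dichrom A = k := by
  intro k _
  obtain ⟨V, _, A, h1, h2, h3, h4, φ, h, hφ, hh⟩ := exists_digraph k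
  refine ⟨V, inferInstance, A, h1, h2, h3, le_antisymm ?_ ?_⟩
  · refine Nat.sInf_le ⟨fun x => ⟨φ x, hφ x⟩, ?_⟩
    intro c v _ hc
    -- The height would increase strictly around a monochromatic cycle.
    have key : ∀ w, Relation.TransGen (fun a b => A a b ∧ (⟨φ a, hφ a⟩ : Fin k) = c ∧
        (⟨φ b, hφ b⟩ : Fin k) = c) v w → h v < h w := by
      intro w hw
      have step : ∀ a b, (A a b ∧ (⟨φ a, hφ a⟩ : Fin k) = c ∧
          (⟨φ b, hφ b⟩ : Fin k) = c) → h a < h b := by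
        rintro a b ⟨hab, ea, eb⟩
        exact hh a b hab (by simpa using ea.trans eb.symm)
      induction hw with
      | single hs => exact step _ _ hs
      | tail _ hs ih => exact ih.trans (step _ _ hs)
    exact lt_irrefl _ (key v hc)
  · -- The set of admissible numbers of colours is non-empty, so its infimum is not a junk value.
    have hne : {k : ℕ | ∃ φ : V → Fin k, GoodColouring A φ}.Nonempty := by
      refine ⟨Fintype.card V, Fintype.equivFin V, ?_⟩
      intro c v hv hc
      obtain ⟨w, hw, -⟩ := Relation.TransGen.head'_iff.mp hc
      have : v = w := (Fintype.equivFin V).injective (hw.2.1.trans hw.2.2.symm)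
      subst this
      exact h1 _ _ hw.1 hw.1
    refine le_csInf hne ?_
    rintro j ⟨ψ, hψ⟩
    have hg : GoodNat A (fun x => (ψ x).val) := by
      intro v hv
      refine hψ (ψ v) v rfl (Relation.TransGen.mono ?_ _ _ hv)
      rintro a b ⟨hab, ea, eb⟩
      exact ⟨hab, Fin.ext ea, Fin.ext eb⟩
    refine (h4 _ hg).trans ?_
    have : Finset.univ.image (fun x => (ψ x).val) ⊆ Finset.range j := by
      intro c hc
      obtain ⟨x, -, rfl⟩ := Finset.mem_image.mp hc
      exact Finset.mem_range.mpr (ψ x).isLt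
    simpa using Finset.card_le_card this
end

section
/- For every positive integer k there exists an orientation of a chordal graph with no subdigraph isomorphic to C⃗3 ⇒ K1 and with dichromatic number exactly k. (In other words, C⃗3 ⇒ K1 is not a hero in orientations of chordal graphs.) -/
/-- `H1 ⇒ H2`: disjoint union plus all arcs from `H1` to `H2`. -/
def seqJoin {W1 W2 : Type} (B1 : W1 → W1 → Prop) (B2 : W2 → W2 → Prop) :
    W1 ⊕ W2 → W1 ⊕ W2 → Prop
  | Sum.inl a, Sum.inl b => B1 a b
  | Sum.inr a, Sum.inr b => B2 a b
  | Sum.inl _, Sum.inr _ => True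
  | Sum.inr _, Sum.inl _ => False

/-- `C⃗3 ⇒ K1`: directed triangle dominating one extra vertex. -/
def C3toK1 : (Fin 3 ⊕ Unit) → (Fin 3 ⊕ Unit) → Prop :=
  seqJoin (fun i j : Fin 3 => j = i + 1) (fun _ _ : Unit => False)

namespace ChordalHero

/-- `T` induces a transitive tournament in `A` (when `A` is oriented). -/
def IsTT {V : Type} (A : V → V → Prop) (T : Set V) : Prop :=
  (∀ u ∈ T, ∀ v ∈ T, u ≠ v → A u v ∨ A v u) ∧
    ∀ u ∈ T, ∀ v ∈ T, ∀ w ∈ T, A u v → A v w → A u w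

/-- Every nonempty vertex set `X` has a vertex whose neighbours inside `X` form a clique. -/
def HasSimplicial {V : Type} (A : V → V → Prop) : Prop :=
  ∀ X : Set V, X.Nonempty → ∃ x ∈ X, ∀ u ∈ X, ∀ v ∈ X,
    (A x u ∨ A u x) → (A x v ∨ A v x) → u ≠ v → (A u v ∨ A v u)

/-- No vertex is dominated by a directed triangle. -/
def NoTriIn {V : Type} (A : V → V → Prop) : Prop :=
  ∀ a b c d, A a b → A b c → A c a → A a d → A b d → A c d → False

/-- The colouring `φ` has no monochromatic directed triangle. -/
def NoMonoTri {V C : Type} (A : V → V → Prop) (φ : V → C) : Prop :=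
  ∀ a b c, A a b → A b c → A c a → φ a = φ b → φ b = φ c → False

/-- Every finite colouring without monochromatic directed triangle has a transitive clique
carrying at least `j` colours. -/
def ManyColours {V : Type} (A : V → V → Prop) (j : ℕ) : Prop :=
  ∀ (n : ℕ) (φ : V → Fin n), NoMonoTri A φ → ∃ T, IsTT A T ∧ j ≤ (φ '' T).ncard

/-- Some `j`-colouring admits a height function increasing along monochromatic arcs, so that its
colour classes are acyclic. -/
def HasHeight {V : Type} (A : V → V → Prop) (j : ℕ) : Prop :=
  ∃ (φ : V → Fin j) (r : V → ℕ), ∀ u v, A u v → φ u = φ v → r u < r v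

/-- The transitive cliques of `A`. -/
abbrev TTs {V : Type} (A : V → V → Prop) : Type := {T : Set V // IsTT A T}

/-- Vertices of the next graph: the base, one copy of the base for each transitive clique, and an
apex for each pair consisting of a transitive clique `T` and a transitive clique of the copy
over `T`. -/
inductive Ext {V : Type} (A : V → V → Prop) : Type
  | base (v : V) : Ext A
  | copy (T : TTs A) (v : V) : Ext A
  | apex (T T' : TTs A) : Ext A

open Ext

/-- Arcs of the next graph: those of the base and of the copies, together with
`T ⇒ copy T` and `copy T '' T' ⇒ apex T T' ⇒ T`. -/
def ExtArc {V : Type} (A : V → V → Prop) : Ext A → Ext A → Prop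
  | base u, base v => A u v
  | base u, copy T _ => u ∈ T.1
  | copy T u, copy T' v => T = T' ∧ A u v
  | copy T u, apex T₁ T₂ => T = T₁ ∧ u ∈ T₂.1
  | apex T₁ _, base u => u ∈ T₁.1
  | _, _ => False

variable {V : Type} {A : V → V → Prop}

instance [Finite V] : Finite (Ext A) := by
  let f : V ⊕ (TTs A × V) ⊕ (TTs A × TTs A) → Ext A := fun x => match x with
    | .inl v => base v
    | .inr (.inl (T, v)) => copy T v
    | .inr (.inr (T, T')) => apex T T'
  refine Finite.of_surjective f ?_
  rintro (v | ⟨T, v⟩ | ⟨T, T'⟩)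
  · exact ⟨.inl v, rfl⟩
  · exact ⟨.inr (.inl (T, v)), rfl⟩
  · exact ⟨.inr (.inr (T, T')), rfl⟩

lemma oriented_ext (h : IsOriented A) : IsOriented (ExtArc A) := by
  rintro (u | ⟨T, u⟩ | ⟨T, T'⟩) (v | ⟨S, v⟩ | ⟨S, S'⟩) <;> simp only [ExtArc] <;>
    first
    | exact h u v
    | (rintro ⟨-, h1⟩ ⟨-, h2⟩; exact h u v h1 h2)
    | simp

lemma IsTT.no_tri (h : IsOriented A) {T : Set V} (hT : IsTT A T) {a b c : V}
    (ha : a ∈ T) (hb : b ∈ T) (hc : c ∈ T) (hab : A a b) (hbc : A b c) (hca : A c a) : False :=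
  h c a hca (hT.2 a ha b hb c hc hab hbc)

lemma noTriIn_ext (h : IsOriented A) (hA : NoTriIn A) : NoTriIn (ExtArc A) := by
  have key : ∀ (T : TTs A) (a b c : V), a ∈ T.1 → b ∈ T.1 → c ∈ T.1 →
      A a b → A b c → A c a → False := fun T a b c ha hb hc => T.2.no_tri h ha hb hc
  rintro (a | ⟨Ta, a⟩ | ⟨Ta, Ta'⟩) (b | ⟨Tb, b⟩ | ⟨Tb, Tb'⟩) (c | ⟨Tc, c⟩ | ⟨Tc, Tc'⟩) <;>
    simp only [ExtArc, IsEmpty.forall_iff, implies_true] <;>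
    rintro (d | ⟨Td, d⟩ | ⟨Td, Td'⟩) <;>
    simp only [IsEmpty.forall_iff, implies_true]
  · exact hA a b c d
  · intro h1 h2 h3 h4 h5 h6; exact key Td a b c h4 h5 h6 h1 h2 h3
  · rintro ⟨-, h1⟩ ⟨-, h2⟩ ⟨-, h3⟩ ⟨-, h4⟩ ⟨-, h5⟩ ⟨-, h6⟩; exact hA a b c d h1 h2 h3 h4 h5 h6
  · rintro ⟨-, h1⟩ ⟨-, h2⟩ ⟨-, h3⟩ ⟨-, h4⟩ ⟨-, h5⟩ ⟨-, h6⟩; exact key Td' a b c h4 h5 h6 h1 h2 h3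

lemma hasSimplicial_ext (hA : HasSimplicial A) : HasSimplicial (ExtArc A) := by
  intro X hX
  by_cases h1 : ∃ T T', apex T T' ∈ X
  · obtain ⟨T, T', hx⟩ := h1
    refine ⟨_, hx, ?_⟩
    rintro (u | ⟨Tu, u⟩ | ⟨Tu, Tu'⟩) - (v | ⟨Tv, v⟩ | ⟨Tv, Tv'⟩) - <;>
      simp only [ExtArc, or_false, false_or, IsEmpty.forall_iff, implies_true]
    · intro hu hv hne
      exact T.2.1 u hu v hv (fun e => hne (by rw [e]))
    · rintro hu ⟨rfl, -⟩ -
      exact hu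
    · rintro ⟨rfl, -⟩ hv -
      exact hv
    · rintro ⟨rfl, hu⟩ ⟨rfl, hv⟩ hne
      simpa using T'.2.1 u hu v hv (fun e => hne (by rw [e]))
  by_cases h2 : ∃ T v, copy T v ∈ X
  · obtain ⟨T, v, hv⟩ := h2
    obtain ⟨x, hx, hs⟩ := hA {v | copy T v ∈ X} ⟨v, hv⟩
    refine ⟨_, hx, ?_⟩
    rintro (u | ⟨Tu, u⟩ | ⟨Tu, Tu'⟩) huX (w | ⟨Tw, w⟩ | ⟨Tw, Tw'⟩) hwX <;>
      simp only [ExtArc, or_false, false_or]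
    · intro hu hw hne
      exact T.2.1 u hu w hw (fun e => hne (by rw [e]))
    · rintro hu (⟨rfl, -⟩ | ⟨rfl, -⟩) - <;> exact hu
    · exact absurd ⟨_, _, hwX⟩ h1
    · rintro (⟨rfl, -⟩ | ⟨rfl, -⟩) hw - <;> exact hw
    · intro hu hw hne
      have e1 : Tu = T := by rcases hu with hu | hu <;> simp [hu.1]
      have e2 : Tw = T := by rcases hw with hw | hw <;> simp [hw.1]
      subst e1; subst e2
      simp only [true_and] at hu hw ⊢
      exact hs u huX w hwX hu hw (fun e => hne (by rw [e]))
    · exact absurd ⟨_, _, hwX⟩ h1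
    all_goals exact absurd ⟨_, _, huX⟩ h1
  · have hb : ∀ y ∈ X, ∃ v, y = base v := by
      rintro (v | ⟨T, v⟩ | ⟨T, T'⟩) hy
      · exact ⟨v, rfl⟩
      · exact absurd ⟨_, _, hy⟩ h2
      · exact absurd ⟨_, _, hy⟩ h1
    obtain ⟨y, hy⟩ := hX
    obtain ⟨v, rfl⟩ := hb y hy
    obtain ⟨x, hx, hs⟩ := hA {v | base v ∈ X} ⟨v, hy⟩
    refine ⟨_, hx, fun u hu w hw => ?_⟩
    obtain ⟨u, rfl⟩ := hb u hu
    obtain ⟨w, rfl⟩ := hb w hw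
    intro a b hne
    exact hs u hu w hw a b (fun e => hne (by rw [e]))

lemma hasHeight_ext [Finite V] {j : ℕ} (hA : HasHeight A j) : HasHeight (ExtArc A) (j + 1) := by
  obtain ⟨φ, r, hr⟩ := hA
  obtain ⟨R, hR⟩ := Finite.exists_le r
  refine ⟨fun x => match x with
    | base v => (φ v).castSucc
    | copy _ v => (φ v).castSucc
    | apex _ _ => Fin.last j, fun x => match x with
    | base v => r v
    | copy _ v => r v + R + 1
    | apex _ _ => 0, ?_⟩
  rintro (u | ⟨T, u⟩ | ⟨T, T'⟩) (v | ⟨S, v⟩ | ⟨S, S'⟩) <;>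
    simp only [ExtArc, IsEmpty.forall_iff]
  · intro h1 h2
    exact hr u v h1 (Fin.castSucc_injective _ h2)
  · intro _ _
    have := hR u
    omega
  · rintro ⟨-, h1⟩ h2
    have := hr u v h1 (Fin.castSucc_injective _ h2)
    omega
  · intro _ h2
    exact absurd h2 (Fin.castSucc_lt_last _).ne
  · intro _ h2
    exact absurd h2 (Fin.castSucc_lt_last _).ne'

lemma isTT_union {T T' : Set V} (hT : IsTT A T) (hT' : IsTT A T') :
    IsTT (ExtArc A) (base '' T ∪ copy ⟨T, hT⟩ '' T') := by
  constructor
  · rintro _ (⟨u, hu, rfl⟩ | ⟨u, hu, rfl⟩) _ (⟨v, hv, rfl⟩ | ⟨v, hv, rfl⟩) hne <;>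
      simp only [ExtArc, true_and, or_false, false_or]
    · exact hT.1 u hu v hv (fun e => hne (by rw [e]))
    · exact hu
    · exact hv
    · exact hT'.1 u hu v hv (fun e => hne (by rw [e]))
  · rintro _ (⟨u, hu, rfl⟩ | ⟨u, hu, rfl⟩) _ (⟨v, hv, rfl⟩ | ⟨v, hv, rfl⟩)
      _ (⟨w, hw, rfl⟩ | ⟨w, hw, rfl⟩) <;>
      simp only [ExtArc, true_and, IsEmpty.forall_iff, implies_true]
    · exact hT.2 u hu v hv w hw
    · exact fun _ _ => hu
    · exact fun _ _ => hu
    · exact hT'.2 u hu v hv w hw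

lemma isTT_apex {T T' : Set V} (hT : IsTT A T) (hT' : IsTT A T') :
    IsTT (ExtArc A) (insert (apex ⟨T, hT⟩ ⟨T', hT'⟩) (base '' T)) := by
  constructor
  · rintro _ (rfl | ⟨u, hu, rfl⟩) _ (rfl | ⟨v, hv, rfl⟩) hne <;>
      simp only [ExtArc, or_false, false_or]
    · exact hne rfl
    · exact hv
    · exact hu
    · exact hT.1 u hu v hv (fun e => hne (by rw [e]))
  · rintro _ (rfl | ⟨u, hu, rfl⟩) _ (rfl | ⟨v, hv, rfl⟩) _ (rfl | ⟨w, hw, rfl⟩) <;>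
      simp only [ExtArc, IsEmpty.forall_iff, implies_true]
    · exact fun _ _ => hw
    · exact hT.2 u hu v hv w hw

lemma manyColours_ext {j : ℕ} (hA : ManyColours A j) : ManyColours (ExtArc A) (j + 1) := by
  intro n φ hφ
  obtain ⟨T, hT, hTj⟩ := hA n (fun v => φ (base v))
    (fun a b c h1 h2 h3 => hφ (base a) (base b) (base c) h1 h2 h3)
  obtain ⟨T', hT', hTj'⟩ := hA n (fun v => φ (copy ⟨T, hT⟩ v))
    (fun a b c h1 h2 h3 => hφ (copy _ a) (copy _ b) (copy _ c) ⟨rfl, h1⟩ ⟨rfl, h2⟩ ⟨rfl, h3⟩)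
  by_cases hU : j + 1 ≤ (φ '' (base '' T ∪ copy ⟨T, hT⟩ '' T')).ncard
  · exact ⟨_, isTT_union hT hT', hU⟩
  refine ⟨_, isTT_apex hT hT', ?_⟩
  rw [Set.image_union, Set.image_image, Set.image_image] at hU
  rw [Set.image_insert_eq, Set.image_image]
  -- Both colour sets have at least `j` elements and their union has at most `j`.
  have e1 : (fun v => φ (base v)) '' T = _ :=
    Set.eq_of_subset_of_ncard_le (Set.subset_union_left
      (t := (fun v => φ (copy ⟨T, hT⟩ v)) '' T')) (by omega) (Set.toFinite _)
  have e2 : (fun v => φ (copy ⟨T, hT⟩ v)) '' T' = _ :=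
    Set.eq_of_subset_of_ncard_le (Set.subset_union_right
      (s := (fun v => φ (base v)) '' T)) (by omega) (Set.toFinite _)
  rw [Set.ncard_insert_of_notMem _ (Set.toFinite _)]
  · omega
  · intro hm
    have hm' := hm
    rw [e1, ← e2] at hm'
    obtain ⟨u, hu, hu'⟩ := hm
    obtain ⟨v, hv, hv'⟩ := hm'
    exact hφ (base u) (copy ⟨T, hT⟩ v) (apex ⟨T, hT⟩ ⟨T', hT'⟩) hu ⟨rfl, hv⟩ hu
      (hu'.trans hv'.symm) hv'

lemma exists_graph (k : ℕ) : ∃ (V : Type) (_ : Finite V) (A : V → V → Prop),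
    IsOriented A ∧ HasSimplicial A ∧ NoTriIn A ∧ ManyColours A (k + 1) ∧ HasHeight A (k + 1) := by
  induction k with
  | zero =>
    refine ⟨Unit, inferInstance, fun _ _ => False, ?_, ?_, ?_, ?_, ?_⟩
    · exact fun _ _ h => h.elim
    · rintro X ⟨x, hx⟩
      exact ⟨x, hx, fun _ _ _ _ h => by simp at h⟩
    · exact fun _ _ _ _ h => h.elim
    · intro n φ _
      refine ⟨Set.univ, ⟨fun u _ v _ hne => (hne rfl).elim, fun _ _ _ _ _ _ h => h.elim⟩, ?_⟩
      simp [Set.range_unique]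
    · exact ⟨fun _ => 0, fun _ => 0, fun _ _ h => h.elim⟩
  | succ k ih =>
    obtain ⟨V, _, A, h1, h2, h3, h4, h5⟩ := ih
    exact ⟨Ext A, inferInstance, ExtArc A, oriented_ext h1, hasSimplicial_ext h2,
      noTriIn_ext h1 h3, manyColours_ext h4, hasHeight_ext h5⟩

/-- On a cycle of length at least four, the two cycle-neighbours of a simplicial vertex are joined
by a chord. -/
lemma HasSimplicial.chordal (h : HasSimplicial A) :
    IsChordalAdj (fun u v : V => A u v ∨ A v u) := by
  intro m hm c hc hadj
  obtain ⟨_, ⟨i, rfl⟩, hs⟩ := h (Set.range c) ⟨_, 0, rfl⟩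
  have small : ∀ a : ℕ, 0 < a → a < 4 → (a : ZMod m) ≠ 0 := by
    intro a h0 h4 ha
    rw [ZMod.natCast_eq_zero_iff] at ha
    exact absurd (Nat.le_of_dvd h0 ha) (by omega)
  have one := small 1 (by norm_num) (by norm_num)
  have two := small 2 (by norm_num) (by norm_num)
  have three := small 3 (by norm_num) (by norm_num)
  push_cast at one two three
  have hne : i + 1 ≠ i - 1 := fun e => two (by linear_combination e)
  refine ⟨i + 1, i - 1, hne, fun e => three (by linear_combination -e),
    fun e => one (by linear_combination e), ?_⟩
  have h' := hadj (i - 1)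
  rw [sub_add_cancel] at h'
  exact hs _ ⟨_, rfl⟩ _ ⟨_, rfl⟩ (hadj i) h'.symm (fun e => hne (hc e))

lemma NoTriIn.no_copy (h : NoTriIn A) : ¬ HasCopy A C3toK1 := by
  rintro ⟨f, -, hf⟩
  exact h (f (.inl 0)) (f (.inl 1)) (f (.inl 2)) (f (.inr ()))
    (hf _ _ (by simp [C3toK1, seqJoin])) (hf _ _ (by simp [C3toK1, seqJoin]))
    (hf _ _ (by simp [C3toK1, seqJoin])) (hf _ _ trivial) (hf _ _ trivial) (hf _ _ trivial)

lemma HasHeight.good {j : ℕ} (h : HasHeight A j) : ∃ φ : V → Fin j, GoodColouring A φ := by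
  obtain ⟨φ, r, hr⟩ := h
  refine ⟨φ, fun c v _ hv => ?_⟩
  have key : ∀ x, Relation.TransGen (fun a b => A a b ∧ φ a = c ∧ φ b = c) v x → r v < r x := by
    intro x hx
    induction hx with
    | single h => exact hr _ _ h.1 (h.2.1.trans h.2.2.symm)
    | tail _ h ih => exact ih.trans (hr _ _ h.1 (h.2.1.trans h.2.2.symm))
  exact lt_irrefl _ (key v hv)

lemma noMonoTri_of_good {n : ℕ} {φ : V → Fin n} (h : GoodColouring A φ) : NoMonoTri A φ := by
  intro a b c hab hbc hca e1 e2
  exact h (φ a) a rfl (((Relation.TransGen.single ⟨hab, rfl, e1.symm⟩).tail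
    ⟨hbc, e1.symm, (e1.trans e2).symm⟩).tail ⟨hca, (e1.trans e2).symm, rfl⟩)

lemma dichrom_eq {j : ℕ} (h1 : ManyColours A j) (h2 : HasHeight A j) : dichrom A = j := by
  refine le_antisymm (Nat.sInf_le h2.good) (le_csInf ⟨j, h2.good⟩ ?_)
  rintro n ⟨φ, hφ⟩
  obtain ⟨T, -, hT⟩ := h1 n φ (noMonoTri_of_good hφ)
  refine hT.trans ?_
  simpa using Set.ncard_le_card (φ '' T)

end ChordalHero

/-- `C⃗3 ⇒ K1` is not a hero in orientations of chordal graphs. -/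
theorem stmt17 : ∀ k : ℕ, 1 ≤ k → ∃ (V : Type) (_ : Fintype V) (A : V → V → Prop),
    IsOriented A ∧ IsChordalAdj (fun u v : V => A u v ∨ A v u) ∧
    ¬ HasCopy A C3toK1 ∧ dichrom A = k := by
  intro k hk
  obtain ⟨k, rfl⟩ := Nat.exists_eq_add_of_le' hk
  obtain ⟨V, hV, A, h1, h2, h3, h4, h5⟩ := ChordalHero.exists_graph k
  exact ⟨V, Fintype.ofFinite V, A, h1, h2.chordal, h3.no_copy, ChordalHero.dichrom_eq h4 h5⟩
end

section
/- For every integer d ≥ 1 and every finite simple graph G with maximum degree Δ, the d-defective chromatic index χ'_d(G) equals ⌈Δ/d⌉ or ⌈(Δ+1)/d⌉. -/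
/-!
The heart of the matter is Vizing's theorem: the edges of `G` split into `Δ + 1` matchings.  Putting
these into groups of `d` gives a colouring with `⌈(Δ + 1) / d⌉` colours and defect `d`; a vertex of
degree `Δ` forces at least `Δ / d` colours; and `⌈Δ / d⌉`, `⌈(Δ + 1) / d⌉` differ by at most one.

Vizing's theorem is proved by adding the vertices one at a time, following Ehrenfeucht, Faber,
Kierstead and Schrijver.  To add `v` to a coloured graph `H`, it suffices to recolour `H` so that the
neighbours `N` of `v` have distinct representatives among their missing colours
(`exists_injOn_missing`).  This works whenever `|N|` is at most the number of colours, each vertex of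
`N` misses a colour, and all but one of them miss two.  Select exactly two missing colours at each
vertex of `N`, but only one at one of the vertices, and let `X l` be the set of vertices which
selected `l`.  If `X k = {u}`, give `k` to `u` and induct on the graph without colour class `k` and
on `N \ {u}`.  If no `X k` is a singleton, then `∑ |X l| = 2 |N| - 1` is odd and less than twice the
number of colours, so some `X j` has at least three elements and some `X i` is empty.  An
`i`-`j` Kempe component contains at most two vertices of `X j` (`card_le_two_of_component`), so
exchanging `i` and `j` on a component meeting `X j` reduces the number of empty sets `X l`
(`exists_kempe`).
-/

/-- `⌈a / b⌉` for natural numbers (for `b ≥ 1`). -/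
def ceilDiv' (a b : ℕ) : ℕ := (a + b - 1) / b

/-- The `d`-defective chromatic index: least `k` such that the edges can be coloured with
`k` colours so that every vertex is incident with at most `d` edges of each colour. -/
noncomputable def defChromIndex {V : Type} (G : SimpleGraph V) (d : ℕ) : ℕ :=
  sInf {k : ℕ | ∃ φ : G.edgeSet → Fin k, ∀ v : V, ∀ c : Fin k,
    {e : G.edgeSet | v ∈ e.1 ∧ φ e = c}.ncard ≤ d}

namespace DefVizing

open Finset

variable {V α : Type}

/-! ### Colourings as families of matchings -/

/-- The edges of `M` are pairwise disjoint. -/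
def IsMatch (M : SimpleGraph V) : Prop := ∀ u v w, M.Adj u v → M.Adj u w → v = w

/-- The matchings `M i`, `i ∈ C`, cover exactly the edges of `H`.  They need not be disjoint: an
edge lying in several of them may be given any of these colours. -/
def IsCol (C : Finset α) (M : α → SimpleGraph V) (H : SimpleGraph V) : Prop :=
  (∀ i, IsMatch (M i)) ∧ ∀ u v, H.Adj u v ↔ ∃ i ∈ C, (M i).Adj u v

/-- The colour `i` is missing at `w`. -/
def Misses (M : α → SimpleGraph V) (w : V) (i : α) : Prop := ∀ x, ¬ (M i).Adj w x

/-- `S` selects at each vertex of `N` some of the colours of `C` missing there. -/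
def IsSel (C : Finset α) (N : Finset V) (M : α → SimpleGraph V) (S : V → Finset α) : Prop :=
  ∀ w ∈ N, ∀ i ∈ S w, i ∈ C ∧ Misses M w i

/-- The graph with the edges of `Q` inside `K` and those of `P` outside `K`.  Edges between `K` and its
complement are dropped; there are none when `K` is a component of `P ⊔ Q`. -/
def splice (P Q : SimpleGraph V) (K : Set V) : SimpleGraph V where
  Adj u v := (u ∈ K ∧ v ∈ K ∧ Q.Adj u v) ∨ (u ∉ K ∧ v ∉ K ∧ P.Adj u v)
  symm := ⟨by
    rintro u v (⟨a, b, c⟩ | ⟨a, b, c⟩)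
    · exact Or.inl ⟨b, a, c.symm⟩
    · exact Or.inr ⟨b, a, c.symm⟩⟩
  loopless := ⟨by
    rintro u (⟨_, _, c⟩ | ⟨_, _, c⟩)
    · exact Q.loopless.irrefl _ c
    · exact P.loopless.irrefl _ c⟩

lemma splice_isMatch {P Q : SimpleGraph V} (hP : IsMatch P) (hQ : IsMatch Q) (K : Set V) :
    IsMatch (splice P Q K) := by
  rintro u v w (⟨a, b, c⟩ | ⟨a, b, c⟩) (⟨a', b', c'⟩ | ⟨a', b', c'⟩)
  · exact hQ _ _ _ c c'
  · exact absurd a a'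
  · exact absurd a' a
  · exact hP _ _ _ c c'

/-! ### Kempe exchanges -/

/-- A component of the union of two matchings `A`, `B` contains at most two vertices not covered
by `B`: it is connected, hence has at least `|K| - 1` edges, while its degrees are at most `2`, and
at most `1` at these vertices. -/
lemma card_le_two_of_component [Fintype V] {A B : SimpleGraph V} (hA : IsMatch A) (hB : IsMatch B)
    (K : (A ⊔ B).ConnectedComponent) (X : Finset V) (hXK : ∀ x ∈ X, x ∈ K.supp)
    (hX : ∀ x ∈ X, ∀ y, ¬ B.Adj x y) : X.card ≤ 2 := by
  classical
  have hconn : K.toSimpleGraph.Connected := K.connected_toSimpleGraph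
  have h1 := hconn.card_vert_le_card_edgeSet_add_one
  rw [Nat.card_eq_fintype_card, Nat.card_eq_fintype_card, ← SimpleGraph.edgeFinset_card] at h1
  have h2 := K.toSimpleGraph.sum_degrees_eq_twice_card_edges
  have hone : ∀ M : SimpleGraph V, IsMatch M → ∀ v,
      (univ.filter fun w : K => M.Adj v w).card ≤ 1 := by
    intro M hM v
    rw [card_le_one]
    intro a ha b hb
    exact Subtype.ext (hM v a b (mem_filter.1 ha).2 (mem_filter.1 hb).2)
  have h3 : ∀ v : K, K.toSimpleGraph.degree v + (if (v : V) ∈ X then 1 else 0) ≤ 2 := by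
    intro v
    have hsub : K.toSimpleGraph.neighborFinset v ⊆
        (univ.filter fun w : K => A.Adj v w) ∪ (univ.filter fun w : K => B.Adj v w) := by
      intro w hw
      have hadj : K.toSimpleGraph.Adj v w := by simpa using hw
      have : (A ⊔ B).Adj v w := hadj
      simpa using this
    have hd := (card_le_card hsub).trans (card_union_le _ _)
    rw [SimpleGraph.card_neighborFinset_eq_degree] at hd
    have ha := hone A hA v
    have hb := hone B hB v
    split_ifs with hv
    · have : (univ.filter fun w : K => B.Adj v w) = ∅ :=
        filter_eq_empty_iff.2 fun w _ => hX v hv w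
      rw [this, card_empty] at hd
      omega
    · omega
  have h4 := sum_le_sum fun v (_ : v ∈ (univ : Finset K)) => h3 v
  rw [sum_add_distrib, h2, sum_const, card_univ, ← card_filter] at h4
  have h5 : X.card ≤ (univ.filter fun v : K => (v : V) ∈ X).card := by
    have : X ⊆ (univ.filter fun v : K => (v : V) ∈ X).map (Function.Embedding.subtype _) := by
      intro x hx
      simp only [mem_map, mem_filter, mem_univ, true_and]
      exact ⟨⟨x, hXK x hx⟩, hx, rfl⟩
    simpa using card_le_card this
  simp only [smul_eq_mul] at h4
  omega

/-- One Kempe exchange: if no vertex selects `i` while at least three select `j`, then after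
exchanging `i` and `j` on a suitable component both are selected by some vertex. -/
lemma exists_kempe [Fintype V] [DecidableEq α] {C : Finset α} {N : Finset V} {H : SimpleGraph V}
    {M : α → SimpleGraph V} {S : V → Finset α} (hM : IsCol C M H) (hS : IsSel C N M S)
    {i j : α} (hi : i ∈ C) (hj : j ∈ C) (hXi : N.filter (fun w => i ∈ S w) = ∅)
    (hXj : 3 ≤ (N.filter (fun w => j ∈ S w)).card) :
    ∃ M' S', IsCol C M' H ∧ IsSel C N M' S' ∧ (∀ w, (S' w).card = (S w).card) ∧
      (N.filter (fun w => i ∈ S' w)).Nonempty ∧ (N.filter (fun w => j ∈ S' w)).Nonempty ∧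
      ∀ l, l ≠ i → l ≠ j → N.filter (fun w => l ∈ S' w) = N.filter (fun w => l ∈ S w) := by
  classical
  obtain ⟨hm, hc⟩ := hM
  have hij : i ≠ j := by
    rintro rfl
    rw [hXi] at hXj
    simp at hXj
  obtain ⟨u, hu⟩ : (N.filter (fun w => j ∈ S w)).Nonempty := card_pos.1 (by omega)
  set K := (M i ⊔ M j).connectedComponentMk u with hK
  have hcl : ∀ l, l = i ∨ l = j → ∀ x y, (M l).Adj x y → (x ∈ K.supp ↔ y ∈ K.supp) := by
    intro l hl x y hxy
    have : (M i ⊔ M j).Adj x y := by rcases hl with rfl | rfl <;> simp [hxy]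
    exact K.mem_supp_congr_adj this
  have h2 := card_le_two_of_component (hm i) (hm j) K
    ((N.filter (fun w => j ∈ S w)).filter (· ∈ K.supp)) (fun x hx => (mem_filter.1 hx).2)
    (fun x hx => by
      simp only [mem_filter] at hx
      exact (hS x hx.1.1 j hx.1.2).2)
  obtain ⟨u', hu', hu'K⟩ : ∃ w ∈ N.filter (fun w => j ∈ S w), w ∉ K.supp := by
    by_contra! h
    rw [filter_true_of_mem h] at h2
    omega
  have huK : u ∈ K.supp := rfl
  simp only [mem_filter] at hu hu'
  let M' : α → SimpleGraph V := fun l => if l = i then splice (M i) (M j) K.supp else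
    if l = j then splice (M j) (M i) K.supp else M l
  let S' : V → Finset α := fun w => if w ∈ K.supp then (S w).map (Equiv.swap i j).toEmbedding else S w
  have hMi : M' i = splice (M i) (M j) K.supp := by simp [M']
  have hMj : M' j = splice (M j) (M i) K.supp := by simp [M', hij.symm]
  have hMl : ∀ l, l ≠ i → l ≠ j → M' l = M l := by intro l h h'; simp [M', h, h']
  have hS' : ∀ w l, l ∈ S' w ↔ (w ∈ K.supp ∧ Equiv.swap i j l ∈ S w) ∨ (w ∉ K.supp ∧ l ∈ S w) := by
    intro w l
    by_cases hw : w ∈ K.supp <;> simp only [S', hw, if_true, if_false, true_and, false_and,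
      not_true, not_false_eq_true, or_false, false_or, mem_map_equiv, Equiv.symm_swap]
  refine ⟨M', S', ⟨?_, ?_⟩, ?_, ?_, ?_, ?_, ?_⟩
  · intro l
    by_cases h : l = i
    · subst h; rw [hMi]; exact splice_isMatch (hm _) (hm _) _
    by_cases h' : l = j
    · subst h'; rw [hMj]; exact splice_isMatch (hm _) (hm _) _
    rw [hMl l h h']; exact hm l
  · intro x y
    rw [hc]
    constructor
    · rintro ⟨l, hl, hxy⟩
      by_cases h : l = i
      · subst h
        have := hcl l (Or.inl rfl) x y hxy
        by_cases hx : x ∈ K.supp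
        · exact ⟨j, hj, by rw [hMj]; exact Or.inl ⟨hx, this.1 hx, hxy⟩⟩
        · exact ⟨l, hl, by rw [hMi]; exact Or.inr ⟨hx, mt this.2 hx, hxy⟩⟩
      by_cases h' : l = j
      · subst h'
        have := hcl l (Or.inr rfl) x y hxy
        by_cases hx : x ∈ K.supp
        · exact ⟨i, hi, by rw [hMi]; exact Or.inl ⟨hx, this.1 hx, hxy⟩⟩
        · exact ⟨l, hl, by rw [hMj]; exact Or.inr ⟨hx, mt this.2 hx, hxy⟩⟩
      exact ⟨l, hl, by rw [hMl l h h']; exact hxy⟩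
    · rintro ⟨l, hl, hxy⟩
      by_cases h : l = i
      · subst h
        rw [hMi] at hxy
        rcases hxy with ⟨_, _, h⟩ | ⟨_, _, h⟩
        exacts [⟨j, hj, h⟩, ⟨l, hl, h⟩]
      by_cases h' : l = j
      · subst h'
        rw [hMj] at hxy
        rcases hxy with ⟨_, _, h⟩ | ⟨_, _, h⟩
        exacts [⟨i, hi, h⟩, ⟨l, hl, h⟩]
      exact ⟨l, hl, by rwa [hMl l h h'] at hxy⟩
  · intro w hw l hl
    rw [hS'] at hl
    by_cases h : l = i
    · subst h
      rw [Equiv.swap_apply_left] at hl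
      refine ⟨hi, fun x hx => ?_⟩
      rw [hMi] at hx
      rcases hx with ⟨a, _, hx⟩ | ⟨a, _, hx⟩
      · exact (hS w hw j (by tauto)).2 _ hx
      · exact (hS w hw l (by tauto)).2 _ hx
    by_cases h' : l = j
    · subst h'
      rw [Equiv.swap_apply_right] at hl
      refine ⟨hj, fun x hx => ?_⟩
      rw [hMj] at hx
      rcases hx with ⟨a, _, hx⟩ | ⟨a, _, hx⟩
      · exact (hS w hw i (by tauto)).2 _ hx
      · exact (hS w hw l (by tauto)).2 _ hx
    rw [Equiv.swap_apply_of_ne_of_ne h h'] at hl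
    have := hS w hw l (by tauto)
    exact ⟨this.1, fun x hx => this.2 x (by rwa [hMl l h h'] at hx)⟩
  · intro w
    by_cases hw : w ∈ K.supp <;> simp only [S', hw, if_true, if_false, card_map]
  · exact ⟨u, by rw [mem_filter, hS', Equiv.swap_apply_left]; exact ⟨hu.1, Or.inl ⟨huK, hu.2⟩⟩⟩
  · exact ⟨u', by rw [mem_filter, hS']; exact ⟨hu'.1, Or.inr ⟨hu'K, hu'.2⟩⟩⟩
  · intro l h h'
    refine filter_congr fun w _ => ?_
    rw [hS', Equiv.swap_apply_of_ne_of_ne h h']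
    tauto

/-- If two colours are selected at each vertex of `N` but for one, where only one is, Kempe
exchanges lead to a colour that is selected by exactly one vertex. -/
lemma exists_singleton [Fintype V] [DecidableEq V] [DecidableEq α] {C : Finset α} {N : Finset V}
    {H : SimpleGraph V} {u : V} (hu : u ∈ N) (hNC : N.card ≤ C.card) (n : ℕ) :
    ∀ (M : α → SimpleGraph V) (S : V → Finset α), IsCol C M H → IsSel C N M S →
      (S u).card = 1 → (∀ w ∈ N, w ≠ u → (S w).card = 2) →
      (C.filter fun l => N.filter (fun w => l ∈ S w) = ∅).card < n →
      ∃ M' S', IsCol C M' H ∧ IsSel C N M' S' ∧ (∀ w, (S' w).card = (S w).card) ∧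
        ∃ k ∈ C, (N.filter (fun w => k ∈ S' w)).card = 1 := by
  classical
  induction n with
  | zero => intro M S _ _ _ _ h; exact absurd h (Nat.not_lt_zero _)
  | succ n ih =>
    intro M S hM hS hSu hSw hn
    by_cases hex : ∃ k ∈ C, (N.filter (fun w => k ∈ S w)).card = 1
    · exact ⟨M, S, hM, hS, fun _ => rfl, hex⟩
    push Not at hex
    have hsum : ∑ l ∈ C, (N.filter (fun w => l ∈ S w)).card + 1 = 2 * N.card := by
      have h1 : ∑ l ∈ C, (N.filter (fun w => l ∈ S w)).card = ∑ w ∈ N, (S w).card := by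
        simp_rw [card_filter]
        rw [sum_comm]
        refine sum_congr rfl fun w hw => ?_
        rw [← card_filter]
        congr 1
        ext l
        simp only [mem_filter, and_iff_right_iff_imp]
        exact fun hl => (hS w hw l hl).1
      rw [h1, ← add_sum_erase N _ hu, hSu,
        sum_congr rfl (fun w hw => hSw w (mem_of_mem_erase hw) (ne_of_mem_erase hw)), sum_const,
        smul_eq_mul, card_erase_of_mem hu]
      have := card_pos.2 ⟨u, hu⟩
      omega
    -- The sum is less than `2 * C.card` and no term is `1`, so some term is `0`.
    obtain ⟨i, hi, hXi⟩ : ∃ i ∈ C, (N.filter (fun w => i ∈ S w)).card = 0 := by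
      by_contra! h
      have := C.card_nsmul_le_sum (fun l => (N.filter (fun w => l ∈ S w)).card) 2
        (fun l hl => by have := h l hl; have := hex l hl; omega)
      rw [smul_eq_mul] at this
      omega
    rw [card_eq_zero] at hXi
    have himem : i ∈ C.filter fun l => N.filter (fun w => l ∈ S w) = ∅ := mem_filter.2 ⟨hi, hXi⟩
    -- The sum is odd and no term is `1`, so some term is odd and at least `3`.
    obtain ⟨j, hj, hXj⟩ : ∃ j ∈ C, ¬ 2 ∣ (N.filter (fun w => j ∈ S w)).card := by
      by_contra! h
      have := dvd_sum h
      omega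
    obtain ⟨M', S', hM', hS', hcard, hi', hj', hl'⟩ := exists_kempe hM hS hi hj hXi
      (by have := hex j hj; omega)
    obtain ⟨M'', S'', h1, h2, h3, h4⟩ := ih M' S' hM' hS' (by rw [hcard, hSu])
      (fun w hw hwu => by rw [hcard, hSw w hw hwu]) (by
        have hlt : (C.filter fun l => N.filter (fun w => l ∈ S' w) = ∅) ⊂
            C.filter fun l => N.filter (fun w => l ∈ S w) = ∅ := by
          rw [ssubset_iff_of_subset]
          · exact ⟨i, himem, fun h => hi'.ne_empty (mem_filter.1 h).2⟩
          · intro l hl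
            rw [mem_filter] at hl ⊢
            refine ⟨hl.1, ?_⟩
            rw [← hl' l]
            · exact hl.2
            · rintro rfl
              exact hi'.ne_empty hl.2
            · rintro rfl
              exact hj'.ne_empty hl.2
        have := card_lt_card hlt
        omega)
    exact ⟨M'', S'', h1, h2, fun w => by rw [h3, hcard], h4⟩

/-! ### Vizing's theorem -/

/-- If each vertex of `N` misses a colour and all but one miss two, the graph can be recoloured so
that the vertices of `N` have distinct representatives among their missing colours. -/
lemma exists_injOn_missing [Fintype V] [DecidableEq α] [Nonempty α] (n : ℕ) :
    ∀ (C : Finset α) (N : Finset V) (H : SimpleGraph V) (M : α → SimpleGraph V)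
      (S : V → Finset α) (u₀ : V), N.card = n → n ≤ C.card → IsCol C M H → IsSel C N M S →
      (∀ w ∈ N, 1 ≤ (S w).card) → (∀ w ∈ N, w ≠ u₀ → 2 ≤ (S w).card) →
      ∃ (M' : α → SimpleGraph V) (f : V → α), IsCol C M' H ∧ Set.InjOn f N ∧
        ∀ w ∈ N, f w ∈ C ∧ Misses M' w (f w) := by
  classical
  induction n with
  | zero =>
    intro C N H M S u₀ hN hC hM hS h1 h2
    rw [card_eq_zero] at hN
    subst hN
    exact ⟨M, fun _ => Classical.arbitrary α, hM, by simp, by simp⟩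
  | succ n ih =>
    intro C N H M S u₀ hN hC hM hS h1 h2
    obtain ⟨u, hu, huN⟩ : ∃ u ∈ N, ∀ w ∈ N, w ≠ u → 2 ≤ (S w).card := by
      by_cases h : u₀ ∈ N
      · exact ⟨u₀, h, h2⟩
      · obtain ⟨u, hu⟩ : N.Nonempty := card_pos.1 (by omega)
        exact ⟨u, hu, fun w hw _ => h2 w hw (fun e => h (e ▸ hw))⟩
    have hT : ∀ w, ∃ T : Finset α, w ∈ N → T ⊆ S w ∧ T.card = if w = u then 1 else 2 := by
      intro w
      by_cases hw : w ∈ N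
      · obtain ⟨T, hT⟩ := exists_subset_card_eq (s := S w) (n := if w = u then 1 else 2) (by
          split_ifs with h
          · exact h1 w hw
          · exact huN w hw h)
        exact ⟨T, fun _ => hT⟩
      · exact ⟨∅, fun h => absurd h hw⟩
    choose T hT using hT
    obtain ⟨M₁, S₁, hM₁, hS₁, hcard, k, hk, hXk⟩ := exists_singleton hu (by omega) _ M T hM
      (fun w hw l hl => hS w hw l ((hT w hw).1 hl)) (by simpa using (hT u hu).2)
      (fun w hw hwu => by simpa [hwu] using (hT w hw).2) (Nat.lt_succ_self _)
    have hS₁u : (S₁ u).card = 1 := by simpa [hcard] using (hT u hu).2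
    have hS₁w : ∀ w ∈ N, w ≠ u → (S₁ w).card = 2 :=
      fun w hw hwu => by simpa [hcard, hwu] using (hT w hw).2
    obtain ⟨x, hx⟩ := card_eq_one.1 hXk
    have hxN : x ∈ N ∧ k ∈ S₁ x := by
      have : x ∈ N.filter (fun w => k ∈ S₁ w) := by simp [hx]
      simpa using this
    have hkw : ∀ w ∈ N, k ∈ S₁ w → w = x := by
      intro w hw hkw
      have : w ∈ N.filter (fun w => k ∈ S₁ w) := by simp [hw, hkw]
      simpa [hx] using this
    -- Remove the vertex `x` and the whole colour class `k`.
    let H' : SimpleGraph V := ⨆ i ∈ C.erase k, M₁ i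
    obtain ⟨M₂, f, hM₂, hf, hfm⟩ := ih (C.erase k) (N.erase x) H' M₁ S₁ u
      (by rw [card_erase_of_mem hxN.1]; omega) (by rw [card_erase_of_mem hk]; omega)
      ⟨hM₁.1, fun a b => by simp [H', SimpleGraph.iSup_adj]⟩
      (fun w hw l hl => by
        have := hS₁ w (mem_of_mem_erase hw) l hl
        refine ⟨mem_erase.2 ⟨?_, this.1⟩, this.2⟩
        rintro rfl
        exact ne_of_mem_erase hw (hkw w (mem_of_mem_erase hw) hl))
      (fun w hw => by
        by_cases h : w = u
        · rw [h, hS₁u]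
        · rw [hS₁w w (mem_of_mem_erase hw) h]; omega)
      (fun w hw h => (hS₁w w (mem_of_mem_erase hw) h).ge)
    refine ⟨Function.update M₂ k (M₁ k), Function.update f x k, ⟨?_, ?_⟩, ?_, ?_⟩
    · intro l
      by_cases h : l = k
      · subst h; simpa using hM₁.1 l
      · simpa [h] using hM₂.1 l
    · intro a b
      have e1 := hM₂.2 a b
      have e2 : H'.Adj a b ↔ ∃ i ∈ C.erase k, (M₁ i).Adj a b := by
        simp [H', SimpleGraph.iSup_adj]
      rw [e2] at e1
      rw [hM₁.2]
      constructor
      · rintro ⟨l, hl, h⟩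
        by_cases hlk : l = k
        · subst hlk; exact ⟨l, hl, by simpa using h⟩
        · obtain ⟨m, hm, h'⟩ := e1.1 ⟨l, mem_erase.2 ⟨hlk, hl⟩, h⟩
          exact ⟨m, mem_of_mem_erase hm, by simpa [ne_of_mem_erase hm] using h'⟩
      · rintro ⟨l, hl, h⟩
        by_cases hlk : l = k
        · subst hlk; exact ⟨l, hl, by simpa using h⟩
        · obtain ⟨m, hm, h'⟩ := e1.2 ⟨l, mem_erase.2 ⟨hlk, hl⟩, by simpa [hlk] using h⟩
          exact ⟨m, mem_of_mem_erase hm, h'⟩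
    · have hne : ∀ w ∈ N, w ≠ x → f w ≠ k := fun w hw hwx =>
        ne_of_mem_erase (hfm w (mem_erase.2 ⟨hwx, hw⟩)).1
      intro a ha b hb hab
      by_cases hax : a = x <;> by_cases hbx : b = x
      · rw [hax, hbx]
      · subst hax
        simp only [Function.update_self, Function.update_of_ne hbx] at hab
        exact absurd hab.symm (hne b hb hbx)
      · subst hbx
        simp only [Function.update_self, Function.update_of_ne hax] at hab
        exact absurd hab (hne a ha hax)
      · simp only [Function.update_of_ne hax, Function.update_of_ne hbx] at hab
        exact hf (mem_coe.2 (mem_erase.2 ⟨hax, ha⟩)) (mem_coe.2 (mem_erase.2 ⟨hbx, hb⟩)) hab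
    · intro w hw
      by_cases hwx : w = x
      · subst hwx
        refine ⟨by simpa using hk, ?_⟩
        have := (hS₁ w hw k hxN.2).2
        simpa [Misses] using this
      · have := hfm w (mem_erase.2 ⟨hwx, hw⟩)
        rw [Function.update_of_ne hwx]
        refine ⟨mem_of_mem_erase this.1, ?_⟩
        simpa [Misses, Function.update_of_ne (ne_of_mem_erase this.1)] using this.2

/-- The matchings of a colouring can be made disjoint: an edge keeps only its least colour. -/
lemma exists_disjoint {n : ℕ} {M : Fin n → SimpleGraph V} {H : SimpleGraph V}
    (hM : IsCol univ M H) :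
    ∃ M' : Fin n → SimpleGraph V, IsCol univ M' H ∧
      ∀ i j u v, (M' i).Adj u v → (M' j).Adj u v → i = j := by
  classical
  let M' : Fin n → SimpleGraph V := fun i =>
    { Adj := fun u v => (M i).Adj u v ∧ ∀ j, (M j).Adj u v → i ≤ j
      symm := ⟨fun u v h => ⟨h.1.symm, fun j hj => h.2 j hj.symm⟩⟩
      loopless := ⟨fun u h => (M i).loopless.irrefl u h.1⟩ }
  refine ⟨M', ⟨fun i u v w h h' => hM.1 i u v w h.1 h'.1, fun u v => ?_⟩,
    fun i j u v h h' => le_antisymm (h.2 j h'.1) (h'.2 i h.1)⟩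
  rw [hM.2]
  constructor
  · rintro ⟨i, _, hi⟩
    have hne : (univ.filter fun j => (M j).Adj u v).Nonempty := ⟨i, by simpa using hi⟩
    refine ⟨_, mem_univ _, (mem_filter.1 (min'_mem _ hne)).2, fun j hj => ?_⟩
    exact min'_le _ _ (by simpa using hj)
  · rintro ⟨i, hi, h⟩
    exact ⟨i, hi, h.1⟩

/-- Vizing's theorem, in terms of matchings. -/
theorem vizing [Fintype V] (G : SimpleGraph V) [DecidableRel G.Adj] :
    ∃ M : Fin (G.maxDegree + 1) → SimpleGraph V, IsCol univ M G := by
  classical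
  -- `A` is the set of vertices added so far.
  have key : ∀ A : Finset V, ∃ M : Fin (G.maxDegree + 1) → SimpleGraph V,
      (∀ i, IsMatch (M i)) ∧
        ∀ u v, (G.Adj u v ∧ u ∈ A ∧ v ∈ A) ↔ ∃ i, (M i).Adj u v := by
    intro A
    induction A using Finset.induction_on with
    | empty => exact ⟨fun _ => ⊥, fun _ u v w h => absurd h (by simp), by simp⟩
    | insert v A hv ih =>
      obtain ⟨M₀, hm₀, hc₀⟩ := ih
      let H : SimpleGraph V := ⨆ i, M₀ i
      have hH : ∀ a b, H.Adj a b ↔ G.Adj a b ∧ a ∈ A ∧ b ∈ A := fun a b => by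
        rw [hc₀]
        simp [H, SimpleGraph.iSup_adj]
      obtain ⟨M, hM, hdisj⟩ := exists_disjoint (M := M₀) (H := H)
        ⟨hm₀, fun a b => by simp [H, SimpleGraph.iSup_adj]⟩
      let N := A.filter (G.Adj v)
      let S : V → Finset (Fin (G.maxDegree + 1)) := fun w => univ.filter fun i => Misses M w i
      have hN : N.card ≤ G.maxDegree := by
        refine le_trans (card_le_card ?_) (G.degree_le_maxDegree v)
        intro w hw
        simpa using (mem_filter.1 hw).2
      have hS : ∀ w ∈ N, 2 ≤ (S w).card := by
        intro w hw
        obtain ⟨hwA, hvw⟩ := mem_filter.1 hw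
        -- Disjoint colour classes give distinct edges at `w`, none of which goes to `v`.
        have hcompl : (univ.filter fun i => ¬ Misses M w i).card ≤
            ((G.neighborFinset w).erase v).card := by
          have hch : ∀ i, ∃ x, ¬ Misses M w i → (M i).Adj w x := by
            intro i
            by_cases h : Misses M w i
            · exact ⟨w, fun h' => absurd h h'⟩
            · simp only [Misses, not_forall, not_not] at h
              exact ⟨h.choose, fun _ => h.choose_spec⟩
          choose g hg using hch
          refine card_le_card_of_injOn g ?_ ?_
          · intro i hi
            have h := (hH _ _).1 ((hM.2 w (g i)).2 ⟨i, mem_univ _, hg i (by simpa using hi)⟩)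
            simp only [coe_erase, Set.mem_sdiff, mem_coe, SimpleGraph.mem_neighborFinset,
              Set.mem_singleton_iff]
            exact ⟨h.1, fun e => hv (e ▸ h.2.2)⟩
          · intro i hi j hj hij
            have h := hg i (by simpa using hi)
            have h' := hg j (by simpa using hj)
            rw [← hij] at h'
            exact hdisj _ _ _ _ h h'
        have h1 := card_filter_add_card_filter_not (s := univ) (fun i => Misses M w i)
        rw [card_erase_of_mem (by simpa using hvw.symm), SimpleGraph.card_neighborFinset_eq_degree]
          at hcompl
        have := G.degree_le_maxDegree w
        have h0 : 0 < G.degree w := (G.degree_pos_iff_exists_adj w).2 ⟨v, hvw.symm⟩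
        simp only [card_univ, Fintype.card_fin] at h1
        show 2 ≤ (univ.filter fun i => Misses M w i).card
        omega
      obtain ⟨M', f, hM', hf, hfm⟩ := exists_injOn_missing _ univ N H M S v rfl
        (by rw [card_univ, Fintype.card_fin]; omega) hM
        (fun w _ i hi => ⟨mem_univ _, (mem_filter.1 hi).2⟩)
        (fun w hw => by have := hS w hw; omega) (fun w hw _ => hS w hw)
      have hNm : ∀ w, w ∈ N ↔ w ∈ A ∧ G.Adj v w := fun w => mem_filter
      have hv' : ∀ i x, ¬ (M' i).Adj v x := fun i x h =>
        hv ((hH _ _).1 ((hM'.2 v x).2 ⟨i, mem_univ _, h⟩)).2.1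
      have hvN : v ∉ N := fun h => hv ((hNm v).1 h).1
      -- Each edge `v w` with `w ∈ N` receives the colour `f w`.
      let L : Fin (G.maxDegree + 1) → SimpleGraph V := fun i =>
        { Adj := fun a b => (M' i).Adj a b ∨ (a = v ∧ b ∈ N ∧ f b = i) ∨ (b = v ∧ a ∈ N ∧ f a = i)
          symm := ⟨by
            rintro a b (h | h | h)
            exacts [Or.inl h.symm, Or.inr (Or.inr h), Or.inr (Or.inl h)]⟩
          loopless := ⟨by
            rintro a (h | ⟨rfl, h, _⟩ | ⟨rfl, h, _⟩)
            exacts [(M' i).loopless.irrefl a h, hvN h, hvN h]⟩ }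
      refine ⟨L, ?_, ?_⟩
      · rintro i a b c (h | ⟨rfl, h, e⟩ | ⟨rfl, h, e⟩) (h' | ⟨h1, h', e'⟩ | ⟨rfl, h', e'⟩)
        · exact hM'.1 i _ _ _ h h'
        · subst h1; exact absurd h (hv' _ _)
        · subst e'; exact absurd h ((hfm a h').2 b)
        · exact absurd h' (hv' _ _)
        · exact hf h h' (e.trans e'.symm)
        · exact absurd h' hvN
        · subst e; exact absurd h' ((hfm a h).2 c)
        · subst h1; exact absurd h hvN
        · rfl
      · intro a b
        constructor
        · rintro ⟨hab, ha, hb⟩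
          rw [mem_insert] at ha hb
          rcases ha with rfl | ha <;> rcases hb with rfl | hb
          · exact absurd hab (G.loopless.irrefl _)
          · exact ⟨f b, Or.inr (Or.inl ⟨rfl, (hNm b).2 ⟨hb, hab⟩, rfl⟩)⟩
          · exact ⟨f a, Or.inr (Or.inr ⟨rfl, (hNm a).2 ⟨ha, hab.symm⟩, rfl⟩)⟩
          · obtain ⟨i, _, hi⟩ := (hM'.2 a b).1 ((hH a b).2 ⟨hab, ha, hb⟩)
            exact ⟨i, Or.inl hi⟩
        · rintro ⟨i, h | ⟨rfl, h, _⟩ | ⟨rfl, h, _⟩⟩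
          · have := (hH a b).1 ((hM'.2 a b).2 ⟨i, mem_univ _, h⟩)
            exact ⟨this.1, mem_insert_of_mem this.2.1, mem_insert_of_mem this.2.2⟩
          · have := (hNm b).1 h
            exact ⟨this.2, mem_insert_self _ _, mem_insert_of_mem this.1⟩
          · have := (hNm a).1 h
            exact ⟨this.2.symm, mem_insert_of_mem this.1, mem_insert_self _ _⟩
  obtain ⟨M, hm, hc⟩ := key univ
  exact ⟨M, hm, fun u v => by simpa using hc u v⟩

/-! ### Defective colourings -/

/-- Grouping the matchings of a colouring by `d` gives a colouring with defect `d`. -/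
lemma exists_defective {G : SimpleGraph V} {n d : ℕ} (hd : 1 ≤ d) {M : Fin n → SimpleGraph V}
    (hM : IsCol univ M G) :
    ∃ φ : G.edgeSet → Fin (ceilDiv' n d), ∀ v : V, ∀ c,
      {e : G.edgeSet | v ∈ e.1 ∧ φ e = c}.ncard ≤ d := by
  classical
  have hch : ∀ e : G.edgeSet, ∃ i : Fin n, e.1 ∈ (M i).edgeSet := by
    rintro ⟨e, he⟩
    induction e using Sym2.ind with
    | _ a b =>
      obtain ⟨i, _, hi⟩ := (hM.2 a b).1 he
      exact ⟨i, hi⟩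
  choose g hg using hch
  refine ⟨fun e => ⟨(g e : ℕ) / d, ?_⟩, fun v c => ?_⟩
  · have := (g e).2
    rw [ceilDiv', Nat.div_lt_iff_lt_mul (by omega)]
    have h1 := Nat.div_add_mod (n + d - 1) d
    have h2 := Nat.mod_lt (n + d - 1) (show d > 0 by omega)
    rw [mul_comm] at h1
    omega
  · have hcard : ((Finset.Ico (c.1 * d) (c.1 * d + d) : Finset ℕ) : Set ℕ).ncard = d := by
      rw [Set.ncard_coe_finset, Nat.card_Ico]
      omega
    refine le_trans ?_ hcard.le
    refine Set.ncard_le_ncard_of_injOn (fun e => (g e : ℕ)) ?_ ?_ (Finset.finite_toSet _)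
    · rintro e ⟨_, he⟩
      have he' : (g e : ℕ) / d = c := congrArg Fin.val he
      have h1 := Nat.div_add_mod (g e : ℕ) d
      have h2 := Nat.mod_lt (g e : ℕ) (show d > 0 by omega)
      rw [he', mul_comm] at h1
      simp only [coe_Ico, Set.mem_Ico]
      omega
    · rintro ⟨e, he⟩ ⟨hve, _⟩ ⟨e', he'⟩ ⟨hve', _⟩ hee
      have h1 := hg ⟨e, he⟩
      have h2 := hg ⟨e', he'⟩
      rw [← Fin.ext hee] at h2
      obtain ⟨a, rfl⟩ := Sym2.mem_iff_exists.1 hve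
      obtain ⟨b, rfl⟩ := Sym2.mem_iff_exists.1 hve'
      have := hM.1 _ v a b h1 h2
      subst this
      rfl

/-- In a colouring with `k` colours and defect `d`, all degrees are at most `k * d`. -/
lemma degree_le_mul [Fintype V] (G : SimpleGraph V) [DecidableRel G.Adj] {k d : ℕ}
    (φ : G.edgeSet → Fin k)
    (hφ : ∀ v : V, ∀ c, {e : G.edgeSet | v ∈ e.1 ∧ φ e = c}.ncard ≤ d) (v : V) :
    G.degree v ≤ k * d := by
  classical
  let E : Finset G.edgeSet := univ.filter fun e => v ∈ e.1
  have h1 : G.degree v ≤ E.card := by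
    rw [← SimpleGraph.card_incidenceFinset_eq_degree]
    have : G.incidenceFinset v ⊆ E.map (Function.Embedding.subtype _) := by
      intro e he
      rw [SimpleGraph.mem_incidenceFinset] at he
      simp only [E, mem_map, mem_filter, mem_univ, true_and]
      exact ⟨⟨e, he.1⟩, he.2, rfl⟩
    simpa using card_le_card this
  have h2 : E.card ≤ d * (univ : Finset (Fin k)).card := by
    refine card_le_mul_card_image_of_maps_to (f := φ) (fun _ _ => mem_univ _) d fun c _ => ?_
    refine le_trans (le_of_eq ?_) (hφ v c)
    rw [← Set.ncard_coe_finset]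
    congr 1
    ext e
    simp [E]
  rw [card_univ, Fintype.card_fin, mul_comm] at h2
  exact h1.trans h2

end DefVizing

/-- Defective Vizing theorem: `χ'_d(G) ∈ {⌈Δ/d⌉, ⌈(Δ+1)/d⌉}` for simple graphs. -/
theorem stmt18 {V : Type} [Fintype V] (G : SimpleGraph V) [DecidableRel G.Adj]
    (d : ℕ) (hd : 1 ≤ d) :
    defChromIndex G d = ceilDiv' G.maxDegree d ∨
      defChromIndex G d = ceilDiv' (G.maxDegree + 1) d := by
  have hmem := DefVizing.exists_defective hd (DefVizing.vizing G).choose_spec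
  have hle : defChromIndex G d ≤ ceilDiv' (G.maxDegree + 1) d := Nat.sInf_le hmem
  obtain ⟨φ, hφ⟩ : ∃ φ : G.edgeSet → Fin (defChromIndex G d), ∀ v : V, ∀ c,
      {e : G.edgeSet | v ∈ e.1 ∧ φ e = c}.ncard ≤ d :=
    Nat.sInf_mem (s := {k : ℕ | ∃ φ : G.edgeSet → Fin k, ∀ v : V, ∀ c : Fin k,
      {e : G.edgeSet | v ∈ e.1 ∧ φ e = c}.ncard ≤ d}) ⟨_, hmem⟩
  have hdeg : G.maxDegree ≤ defChromIndex G d * d :=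
    G.maxDegree_le_of_forall_degree_le _ fun v => DefVizing.degree_le_mul G φ hφ v
  have hge : ceilDiv' G.maxDegree d ≤ defChromIndex G d := by
    rw [ceilDiv', ← Nat.lt_succ_iff, Nat.div_lt_iff_lt_mul (by omega), Nat.succ_mul]
    omega
  have hstep : ceilDiv' (G.maxDegree + 1) d ≤ ceilDiv' G.maxDegree d + 1 := by
    rw [ceilDiv', ceilDiv', ← Nat.add_div_right _ (by omega)]
    exact Nat.div_le_div_right (by omega)
  omega
end

section
/- Let d ≥ 1 be an integer and let G be a finite simple graph with maximum degree Δ. (a) If d does not divide Δ, or d is even, or Δ = d, then χ'_d(G) = ⌈Δ/d⌉. (b) If d is odd and Δ = 2d, then χ'_d(G) = 2 if and only if every 2d-regular connected component of G has an even number of vertices; otherwise χ'_d(G) = 3. -/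
/-- Every `2d`-regular connected component of `G` has an even number of vertices. -/
def EvenRegularComponents {V : Type} [Fintype V] (G : SimpleGraph V)
    [DecidableRel G.Adj] (d : ℕ) : Prop :=
  ∀ c : G.ConnectedComponent, (∀ v ∈ c.supp, G.degree v = 2 * d) → Even c.supp.ncard

/-! ### Alternating trails and balanced 2-colourings -/

section
variable {V : Type*} [DecidableEq V]

/-- The sum of the signs `f e` over the edges `e ∈ F` at the vertex `y`. If `f` takes the values
`1` and `-1`, this is the imbalance at `y` of the corresponding 2-colouring of `F`. -/
def sgnSum (f : Sym2 V → ℤ) (F : Finset (Sym2 V)) (y : V) : ℤ :=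
  ∑ e ∈ F with y ∈ e, f e

/-- The degree of `y` in the graph with edge set `F`. -/
def edgeDeg (F : Finset (Sym2 V)) (y : V) : ℕ := {e ∈ F | y ∈ e}.card

/-- A 2-colouring of the edges, with colours `1` and `-1`. Colours are assigned to all unordered
pairs; only those in the edge set under consideration matter. -/
def IsSgn (f : Sym2 V → ℤ) : Prop := ∀ e, f e = 1 ∨ f e = -1

theorem sgnSum_insert (f : Sym2 V → ℤ) {F : Finset (Sym2 V)} {a b : V} (hab : a ≠ b)
    (h : s(a, b) ∉ F) (y : V) :
    sgnSum f (insert s(a, b) F) y =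
      (if y = a then f s(a, b) else 0) + (if y = b then f s(a, b) else 0) + sgnSum f F y := by
  unfold sgnSum
  rw [Finset.filter_insert]
  by_cases h1 : y = a
  · subst h1
    rw [if_pos (by simp), Finset.sum_insert (by simp [h])]
    simp [hab]
  · by_cases h2 : y = b
    · subst h2
      rw [if_pos (by simp), Finset.sum_insert (by simp [h])]
      simp [h1]
    · rw [if_neg (by simp [h1, h2])]
      simp [h1, h2]

/-- A maximal alternating trail in `U`, starting at `w` with sign `s`. Only its edge set `F`, its
last vertex `x` and the sign `t` of its last edge are recorded: interior visits contribute nothing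
to the imbalance of `F`, and by maximality every unused edge at `x` has sign `t`. The empty trail,
which occurs when no edge at `w` has sign `s`, fits this description with `x = w` and `t = -s`. -/
theorem exists_trail (f : Sym2 V → ℤ) (hf : IsSgn f) (n : ℕ) :
    ∀ (U : Finset (Sym2 V)), U.card = n → (∀ e ∈ U, ¬ e.IsDiag) → ∀ (s : ℤ), (s = 1 ∨ s = -1) →
    ∀ w : V, ∃ F ⊆ U, ∃ (x : V) (t : ℤ), (t = 1 ∨ t = -1) ∧
      (∀ y, sgnSum f F y = (if y = w then s else 0) + (if y = x then t else 0)) ∧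
      ∀ e ∈ U, e ∉ F → x ∈ e → f e = t := by
  induction n with
  | zero =>
    intro U hU _ s hs w
    rw [Finset.card_eq_zero] at hU
    subst hU
    refine ⟨∅, subset_rfl, w, -s, by omega, fun y => ?_, by simp⟩
    simp only [sgnSum]
    split_ifs <;> simp
  | succ n ih =>
    intro U hU hd s hs w
    by_cases h : ∃ e ∈ U, w ∈ e ∧ f e = s
    · obtain ⟨e, heU, hwe, hfe⟩ := h
      obtain ⟨w', rfl⟩ := hwe
      have hne : w ≠ w' := by simpa using hd _ heU
      obtain ⟨F, hFU, x, t, ht, hsum, hst⟩ := ih (U.erase s(w, w'))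
        (by rw [Finset.card_erase_of_mem heU, hU]; rfl)
        (fun e he => hd e (Finset.mem_of_mem_erase he)) (-s) (by omega) w'
      have hnF : s(w, w') ∉ F := fun h => by simpa using hFU h
      refine ⟨insert s(w, w') F, ?_, x, t, ht, fun y => ?_, fun e he hn hx => ?_⟩
      · intro e he
        rcases Finset.mem_insert.1 he with rfl | he
        · exact heU
        · exact Finset.mem_of_mem_erase (hFU he)
      · rw [sgnSum_insert f hne hnF, hsum, hfe]
        split_ifs <;> ring
      · simp only [Finset.mem_insert, not_or] at hn
        exact hst e (Finset.mem_erase.2 ⟨hn.1, he⟩) hn.2 hx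
    · push Not at h
      refine ⟨∅, by simp, w, -s, by omega, fun y => ?_, fun e he _ hw => ?_⟩
      · simp only [sgnSum]
        split_ifs <;> simp
      · have := h e he hw
        have := hf e
        omega

/-- The 2-colouring obtained from `f` by exchanging the two colours on `F`. -/
def flipOn (f : Sym2 V → ℤ) (F : Finset (Sym2 V)) (e : Sym2 V) : ℤ := if e ∈ F then -f e else f e

theorem IsSgn.flipOn {f : Sym2 V → ℤ} (hf : IsSgn f) (F) : IsSgn (flipOn f F) := by
  intro e
  have := hf e
  unfold _root_.flipOn
  split_ifs <;> omega

theorem sgnSum_flipOn (f : Sym2 V → ℤ) {E F : Finset (Sym2 V)} (h : F ⊆ E) (y : V) :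
    sgnSum (flipOn f F) E y = sgnSum f E y - 2 * sgnSum f F y := by
  unfold sgnSum
  have h1 : ∑ e ∈ F with y ∈ e, f e = ∑ e ∈ E with y ∈ e, if e ∈ F then f e else 0 := by
    rw [← Finset.sum_filter, Finset.filter_filter]
    refine Finset.sum_congr ?_ fun _ _ => rfl
    ext e
    simp only [Finset.mem_filter]
    exact ⟨fun hh => ⟨h hh.1, hh.2, hh.1⟩, fun hh => ⟨hh.2.2, hh.2.1⟩⟩
  rw [h1, Finset.mul_sum, ← Finset.sum_sub_distrib]
  refine Finset.sum_congr rfl fun e _ => ?_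
  unfold flipOn
  split_ifs <;> ring

/-- If all edges at `x` outside `F` have sign `t`, leaving them out can only decrease the imbalance
in the direction of `t`. Applied at the last vertex of a maximal alternating trail. -/
theorem sgnSum_stuck {f : Sym2 V → ℤ} {E F : Finset (Sym2 V)} (hFE : F ⊆ E)
    {x : V} {t : ℤ} (ht : t = 1 ∨ t = -1) (hst : ∀ e ∈ E, e ∉ F → x ∈ e → f e = t) :
    t * sgnSum f F x ≤ t * sgnSum f E x := by
  unfold sgnSum
  rw [Finset.mul_sum, Finset.mul_sum]
  refine Finset.sum_le_sum_of_subset_of_nonneg (Finset.filter_subset_filter _ hFE) ?_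
  intro e he hn
  simp only [Finset.mem_filter, not_and] at he hn
  rw [hst e he.1 (fun h => hn h he.2) he.2]
  rcases ht with rfl | rfl <;> norm_num

/-- Flipping a maximal alternating trail from a vertex of imbalance at least 3 in absolute value
reduces the imbalance there and increases it nowhere. -/
theorem exists_improve {f : Sym2 V → ℤ} (hf : IsSgn f) {E : Finset (Sym2 V)}
    (hE : ∀ e ∈ E, ¬ e.IsDiag) (v : V) (hv : 3 ≤ |sgnSum f E v|) :
    ∃ f', IsSgn f' ∧ (∀ y, |sgnSum f' E y| ≤ |sgnSum f E y|) ∧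
      |sgnSum f' E v| ≤ |sgnSum f E v| - 2 := by
  obtain ⟨s, hs, hsv⟩ : ∃ s : ℤ, (s = 1 ∨ s = -1) ∧ 3 ≤ s * sgnSum f E v := by
    rcases abs_cases (sgnSum f E v) with h | h
    · exact ⟨1, by simp, by omega⟩
    · exact ⟨-1, by simp, by omega⟩
  obtain ⟨F, hFE, x, t, ht, hsum, hst⟩ := exists_trail f hf _ E rfl hE s hs v
  have key := sgnSum_stuck hFE ht hst
  have hx := hsum x
  have H : ∀ y, |sgnSum f E y - 2 * sgnSum f F y| ≤ |sgnSum f E y| ∧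
      (y = v → |sgnSum f E y - 2 * sgnSum f F y| ≤ |sgnSum f E y| - 2) := by
    intro y
    have hy := hsum y
    by_cases hyx : y = x
    · subst hyx
      by_cases hyv : y = v
      · subst hyv
        simp only [if_true] at hx
        rw [hx] at key ⊢
        rcases hs with rfl | rfl <;> rcases ht with rfl | rfl <;>
        · simp only [abs_le, forall_const]
          rcases abs_cases (sgnSum f E y) with h | h <;> omega
      · simp only [if_neg hyv, if_true] at hx
        rw [hx] at key ⊢
        refine ⟨?_, fun h => absurd h hyv⟩
        rw [abs_le]
        rcases ht with rfl | rfl <;>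
        · rcases abs_cases (sgnSum f E y) with h | h <;> omega
    · simp only [if_neg hyx] at hy
      rw [hy]
      by_cases hyv : y = v
      · subst hyv
        simp only [abs_le, forall_const, if_true]
        rcases hs with rfl | rfl <;>
        · rcases abs_cases (sgnSum f E y) with h | h <;> omega
      · simp [hyv]
  refine ⟨flipOn f F, hf.flipOn F, fun y => ?_, ?_⟩
  · rw [sgnSum_flipOn f hFE]; exact (H y).1
  · rw [sgnSum_flipOn f hFE]; exact (H v).2 rfl

variable [Fintype V]

/-- The potential minimised by the 2-colouring: the sum of the squared imbalances, plus the number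
of vertices of degree exactly `2 * d` whose imbalance is at least 2 in absolute value. Each summand
is strictly increasing in the absolute imbalance. -/
def pot (d : ℕ) (E : Finset (Sym2 V)) (f : Sym2 V → ℤ) : ℕ :=
  ∑ y, ((sgnSum f E y).natAbs ^ 2 +
    if edgeDeg E y = 2 * d ∧ 2 ≤ (sgnSum f E y).natAbs then 1 else 0)

/-- `f` minimises the potential among all 2-colourings. -/
def IsOpt (d : ℕ) (E : Finset (Sym2 V)) (f : Sym2 V → ℤ) : Prop :=
  IsSgn f ∧ ∀ f', IsSgn f' → pot d E f ≤ pot d E f'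

theorem exists_isOpt (d : ℕ) (E : Finset (Sym2 V)) : ∃ f, IsOpt d E f := by
  have hne : {f : Sym2 V → ℤ | IsSgn f}.Nonempty := ⟨fun _ => 1, fun _ => Or.inl rfl⟩
  obtain ⟨f, hf, hm⟩ := (measure (pot d E)).wf.has_min _ hne
  exact ⟨f, hf, fun f' hf' => not_lt.1 (hm f' hf')⟩

theorem IsOpt.eq_of_le {d : ℕ} {E : Finset (Sym2 V)} {f f' : Sym2 V → ℤ} (h : IsOpt d E f)
    (hf' : IsSgn f') (hle : ∀ y, |sgnSum f' E y| ≤ |sgnSum f E y|) :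
    ∀ y, |sgnSum f' E y| = |sgnSum f E y| := by
  by_contra! hne
  obtain ⟨v, hv⟩ := hne
  refine absurd (h.2 f' hf') (not_le.2 (Finset.sum_lt_sum (fun y _ => ?_) ⟨v, Finset.mem_univ _, ?_⟩))
  · have h1 := hle y
    rw [Int.abs_eq_natAbs, Int.abs_eq_natAbs] at h1
    have h2 : (sgnSum f' E y).natAbs ≤ (sgnSum f E y).natAbs := by omega
    have := Nat.pow_le_pow_left h2 2
    split_ifs <;> omega
  · have h1 := lt_of_le_of_ne (hle v) hv
    rw [Int.abs_eq_natAbs, Int.abs_eq_natAbs] at h1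
    have h2 : (sgnSum f' E v).natAbs < (sgnSum f E v).natAbs := by omega
    have := Nat.pow_lt_pow_left h2 (by norm_num : 2 ≠ 0)
    split_ifs <;> omega

theorem IsOpt.of_abs_eq {d : ℕ} {E : Finset (Sym2 V)} {f f' : Sym2 V → ℤ} (h : IsOpt d E f)
    (hf' : IsSgn f') (heq : ∀ y, |sgnSum f' E y| = |sgnSum f E y|) : IsOpt d E f' := by
  refine ⟨hf', fun g hg => le_of_eq_of_le ?_ (h.2 g hg)⟩
  refine Finset.sum_congr rfl fun y _ => ?_
  have : (sgnSum f' E y).natAbs = (sgnSum f E y).natAbs := by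
    have := heq y
    rw [Int.abs_eq_natAbs, Int.abs_eq_natAbs] at this
    omega
  rw [this]

theorem IsOpt.abs_le_two {d : ℕ} {E : Finset (Sym2 V)} (hE : ∀ e ∈ E, ¬ e.IsDiag)
    {f : Sym2 V → ℤ} (h : IsOpt d E f) (v : V) : |sgnSum f E v| ≤ 2 := by
  by_contra! hv
  obtain ⟨f', hf', hle, hlt⟩ := exists_improve h.1 hE v (by omega)
  have := h.eq_of_le hf' hle v
  omega

/-- `f'` arises from `f` by moving the exceptional imbalance `±2` from `v` to `u`, where `f` was
balanced, keeping all other imbalances up to sign. -/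
def Moved (E : Finset (Sym2 V)) (v u : V) (f f' : Sym2 V → ℤ) : Prop :=
  IsSgn f' ∧ sgnSum f E u = 0 ∧ sgnSum f' E v = 0 ∧ |sgnSum f' E u| = 2 ∧
    ∀ y, y ≠ v → y ≠ u → |sgnSum f' E y| = |sgnSum f E y|

/-- Moving the defect along an edge `vu` whose sign agrees with the imbalance at `v`: flip this edge.
If `u` was not balanced before, then this, possibly followed by `exists_improve` at `u`, would
contradict optimality. -/
theorem IsOpt.exists_moved_of_sign {d : ℕ} {E : Finset (Sym2 V)} (hE : ∀ e ∈ E, ¬ e.IsDiag)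
    {f : Sym2 V → ℤ} (h : IsOpt d E f) {v u : V} (he : s(v, u) ∈ E)
    (hv : sgnSum f E v = 2 * f s(v, u)) : ∃ f', Moved E v u f f' := by
  have hne : v ≠ u := by simpa using hE _ he
  have hs := h.1 s(v, u)
  set s := f s(v, u) with hsdef
  set f₁ := flipOn f {s(v, u)} with hf₁
  have hf₁s : IsSgn f₁ := h.1.flipOn _
  have h1 : ∀ y, sgnSum f₁ E y = sgnSum f E y -
      2 * ((if y = v then s else 0) + (if y = u then s else 0)) := by
    intro y
    rw [hf₁, sgnSum_flipOn f (by simpa using he)]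
    have := sgnSum_insert f hne (Finset.notMem_empty _) y
    rw [insert_empty_eq] at this
    rw [this]
    simp [sgnSum, hsdef]
  have h1v : sgnSum f₁ E v = 0 := by rw [h1, hv]; simp [hne]
  have h1u : sgnSum f₁ E u = sgnSum f E u - 2 * s := by rw [h1]; simp [hne.symm]
  have h1y : ∀ y, y ≠ v → y ≠ u → sgnSum f₁ E y = sgnSum f E y := by
    intro y hy1 hy2; rw [h1]; simp [hy1, hy2]
  rcases lt_trichotomy (s * sgnSum f E u) 0 with hu | hu | hu
  · exfalso
    obtain ⟨f₂, hf₂, hle, hlt⟩ := exists_improve hf₁s hE u (by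
      rw [h1u]
      rcases hs with hs | hs <;> rw [hs] at hu ⊢ <;> rw [le_abs] <;> omega)
    have h2 := hle v
    rw [h1v] at h2
    have := h.eq_of_le hf₂ (fun y => by
      by_cases hy1 : y = v
      · subst hy1
        refine h2.trans (by simp)
      by_cases hy2 : y = u
      · subst hy2
        rw [h1u] at hlt
        refine hlt.trans ?_
        rcases hs with hs | hs <;> rw [hs] at hu ⊢ <;>
        · simp only [Int.abs_eq_natAbs]
          omega
      · rw [← h1y y hy1 hy2]; exact hle y) v
    rw [this, hv, abs_zero] at h2
    rcases hs with hs | hs <;> rw [hs] at h2 <;> norm_num at h2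
  · have hu0 : sgnSum f E u = 0 := by rcases hs with hs | hs <;> rw [hs] at hu <;> omega
    refine ⟨f₁, hf₁s, hu0, h1v, ?_, fun y a b => by rw [h1y y a b]⟩
    rw [h1u, hu0]
    rcases hs with hs | hs <;> rw [hs] <;> norm_num
  · exfalso
    have := h.eq_of_le hf₁s (fun y => by
      by_cases hy1 : y = v
      · subst hy1; rw [h1v]; simp
      by_cases hy2 : y = u
      · subst hy2
        rw [h1u]
        rcases hs with hs | hs <;> rw [hs] at hu ⊢ <;>
        · rw [abs_le]
          rcases abs_cases (sgnSum f E y) with h | h <;> omega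
      · rw [h1y y hy1 hy2]) v
    rw [h1v, hv] at this
    rcases hs with hs | hs <;> rw [hs] at this <;> norm_num at this

/-- In an optimal colouring a defect can be moved along any edge `vu`. If the sign of `vu` is opposite
to the imbalance at `v`, flip a maximal alternating trail from `v` that avoids `vu`: by optimality
it ends at `u`, which moves the defect, or it returns to `v`, which reverses the sign of the
imbalance at `v` and reduces to `IsOpt.exists_moved_of_sign`. -/
theorem IsOpt.exists_moved {d : ℕ} {E : Finset (Sym2 V)} (hE : ∀ e ∈ E, ¬ e.IsDiag)
    {f : Sym2 V → ℤ} (h : IsOpt d E f) {v u : V} (he : s(v, u) ∈ E)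
    (hv : |sgnSum f E v| = 2) : ∃ f', Moved E v u f f' := by
  have hne : v ≠ u := by simpa using hE _ he
  by_cases hsg : sgnSum f E v = 2 * f s(v, u)
  · exact h.exists_moved_of_sign hE he hsg
  obtain ⟨s, hs, hsv, hse⟩ : ∃ s : ℤ, (s = 1 ∨ s = -1) ∧ sgnSum f E v = 2 * s ∧
      f s(v, u) = -s := by
    refine ⟨- f s(v, u), ?_, ?_, by simp⟩
    · have := h.1 s(v, u); omega
    · have := h.1 s(v, u)
      rcases abs_cases (sgnSum f E v) with h | h <;> omega
  obtain ⟨F, hFU, x, t, ht, hsum, hst⟩ := exists_trail f h.1 _ (E.erase s(v, u)) rfl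
    (fun e he => hE e (Finset.mem_of_mem_erase he)) s hs v
  have hFE : F ⊆ E := hFU.trans (Finset.erase_subset _ _)
  have heF : s(v, u) ∉ F := fun h => by simpa using hFU h
  have hx := hsum x
  have hEe : ∀ y, sgnSum f E y = (if y = v then -s else 0) + (if y = u then -s else 0) +
      sgnSum f (E.erase s(v, u)) y := by
    intro y
    conv_lhs => rw [← Finset.insert_erase he]
    rw [sgnSum_insert f hne (by simp), hse]
  have key := sgnSum_stuck hFU ht hst
  have hflip := fun y => sgnSum_flipOn f hFE y
  have hfs := h.1.flipOn F
  have hEx := hEe x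
  by_cases hxv : x = v
  -- A closed trail: flipping it turns the imbalance `2 * s` at `v` into `-2 * s`.
  · subst hxv
    simp only [if_true] at hx hEx
    rw [if_neg hne] at hEx
    rw [hx] at key
    have hts : t = s := by
      rcases hs with rfl | rfl <;> rcases ht with rfl | rfl <;> omega
    subst hts
    have habs : ∀ y, |sgnSum (flipOn f F) E y| = |sgnSum f E y| := by
      intro y
      rw [hflip, hsum]
      by_cases hy : y = x
      · subst hy
        rw [hsv]
        rcases hs with rfl | rfl <;> norm_num
      · simp [hy]
    obtain ⟨f', hf', h1, h2, h3, h4⟩ := (h.of_abs_eq hfs habs).exists_moved_of_sign hE he (by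
      rw [hflip, hx, hsv, flipOn, if_neg heF, hse]; ring)
    refine ⟨f', hf', ?_, h2, h3, fun y a b => (h4 y a b).trans (habs y)⟩
    have := habs u
    rw [h1] at this
    simpa using this.symm
  · have hFv : sgnSum f F v = s := by rw [hsum]; simp [Ne.symm hxv]
    have h'v : sgnSum (flipOn f F) E v = 0 := by rw [hflip, hFv, hsv]; ring
    simp only [if_neg hxv, if_true, zero_add] at hx hEx
    have hy' : ∀ y, y ≠ v → y ≠ x → sgnSum (flipOn f F) E y = sgnSum f E y := by
      intro y a b
      rw [hflip, hsum]; simp [a, b]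
    rw [hx] at key
    have h'x := hflip x
    rw [hx] at h'x
    by_cases hx0 : x = u ∧ sgnSum f E x = 0
    · obtain ⟨rfl, hx0⟩ := hx0
      refine ⟨_, hfs, hx0, h'v, ?_, fun y a b => by rw [hy' y a b]⟩
      rw [h'x, hx0]
      rcases ht with rfl | rfl <;> norm_num
    -- Otherwise flipping the trail balances `v` and increases no imbalance.
    · exfalso
      have hge : 1 ≤ t * sgnSum f E x := by
        by_cases hxu : x = u
        · have hx1 : sgnSum f E x ≠ 0 := fun h => hx0 ⟨hxu, h⟩
          rw [if_pos hxu] at hEx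
          rcases hs with rfl | rfl <;> rcases ht with rfl | rfl <;> omega
        · rw [if_neg hxu] at hEx
          rcases ht with rfl | rfl <;> omega
      have := h.eq_of_le hfs (fun y => by
        by_cases hy1 : y = v
        · subst hy1; rw [h'v]; simp
        by_cases hy2 : y = x
        · subst hy2
          rw [h'x]
          rcases ht with rfl | rfl <;>
          · rw [abs_le]
            rcases abs_cases (sgnSum f E y) with h | h <;> omega
        · rw [hy' y hy1 hy2]) v
      rw [h'v, hv] at this
      norm_num at this

/-- Moving a defect away from a vertex of degree `2 * d` lowers the potential by 1 unless the new
vertex has degree `2 * d` as well; so optimality forces this, and is preserved. -/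
theorem IsOpt.of_moved {d : ℕ} {E : Finset (Sym2 V)}
    {f f' : Sym2 V → ℤ} (h : IsOpt d E f) {v u : V} (hne : v ≠ u)
    (hv : |sgnSum f E v| = 2) (hdv : edgeDeg E v = 2 * d) (hm : Moved E v u f f') :
    IsOpt d E f' ∧ edgeDeg E u = 2 * d := by
  obtain ⟨hf', hu, hv', hu', hy⟩ := hm
  have hsplit : ∀ g : V → ℕ, ∑ y, g y = g v + g u + ∑ y ∈ {v, u}ᶜ, g y := by
    intro g
    rw [← Finset.sum_add_sum_compl {v, u}, Finset.sum_pair hne]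
  have hrest : ∑ y ∈ {v, u}ᶜ, ((sgnSum f' E y).natAbs ^ 2 +
      if edgeDeg E y = 2 * d ∧ 2 ≤ (sgnSum f' E y).natAbs then 1 else 0) =
      ∑ y ∈ {v, u}ᶜ, ((sgnSum f E y).natAbs ^ 2 +
      if edgeDeg E y = 2 * d ∧ 2 ≤ (sgnSum f E y).natAbs then 1 else 0) := by
    refine Finset.sum_congr rfl fun y hyy => ?_
    simp only [Finset.mem_compl, Finset.mem_insert, Finset.mem_singleton, not_or] at hyy
    have : (sgnSum f' E y).natAbs = (sgnSum f E y).natAbs := by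
      have := hy y hyy.1 hyy.2
      rw [Int.abs_eq_natAbs, Int.abs_eq_natAbs] at this
      omega
    rw [this]
  have hva : (sgnSum f E v).natAbs = 2 := by rw [Int.abs_eq_natAbs] at hv hu'; omega
  have hua : (sgnSum f' E u).natAbs = 2 := by rw [Int.abs_eq_natAbs] at hv hu'; omega
  have hP : pot d E f' + 1 = pot d E f + if edgeDeg E u = 2 * d then 1 else 0 := by
    unfold pot
    rw [hsplit, hsplit, hrest, hu, hv', hva, hua, hdv]
    simp
    ring
  have hmin := h.2 f' hf'
  have hdu : edgeDeg E u = 2 * d := by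
    by_contra hc
    rw [if_neg hc] at hP
    omega
  rw [if_pos hdu] at hP
  exact ⟨⟨hf', fun g hg => by have := h.2 g hg; omega⟩, hdu⟩

/-- If an optimal colouring has a defect at a vertex `v` of degree `2 * d`, the component of `v` is
`2 * d`-regular and balanced at all other vertices, since the defect can be walked to any of them. -/
theorem IsOpt.reach {d : ℕ} {E : Finset (Sym2 V)} (hE : ∀ e ∈ E, ¬ e.IsDiag) {v w : V}
    (hr : Relation.ReflTransGen (fun a b => s(a, b) ∈ E) v w) :
    ∀ f, IsOpt d E f → |sgnSum f E v| = 2 → edgeDeg E v = 2 * d →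
      edgeDeg E w = 2 * d ∧ (w ≠ v → sgnSum f E w = 0) := by
  induction hr using Relation.ReflTransGen.head_induction_on with
  | refl => intro f _ _ h; exact ⟨h, fun hh => absurd rfl hh⟩
  | @head v u hvu _ ih =>
    intro f hf hv hd
    obtain ⟨f', hm⟩ := hf.exists_moved hE hvu hv
    obtain ⟨hf', hdu⟩ := hf.of_moved (by simpa using hE _ hvu) hv hd hm
    obtain ⟨h1, h2⟩ := ih f' hf' hm.2.2.2.1 hdu
    refine ⟨h1, fun hwv => ?_⟩
    by_cases hwu : w = u
    · rw [hwu]; exact hm.2.1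
    · have := hm.2.2.2.2 w hwv hwu
      rw [h2 hwu] at this
      simpa using this.symm

omit [Fintype V] in
/-- The handshake lemma for a union `S` of components of the graph with edge set `A`. -/
theorem even_sum_edgeDeg {A : Finset (Sym2 V)} (hA : ∀ e ∈ A, ¬ e.IsDiag) (S : Finset V)
    (hS : ∀ a b, s(a, b) ∈ A → a ∈ S → b ∈ S) : Even (∑ y ∈ S, edgeDeg A y) := by
  have : ∑ y ∈ S, edgeDeg A y = ∑ e ∈ A, {y ∈ S | y ∈ e}.card :=
    Finset.sum_card_bipartiteAbove_eq_sum_card_bipartiteBelow (fun y e => y ∈ e)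
  rw [this]
  refine Finset.even_sum _ fun e he => ?_
  induction e using Sym2.ind with
  | _ a b =>
    have hab : a ≠ b := by simpa using hA _ he
    by_cases ha : a ∈ S
    · have hb := hS a b he ha
      have : {y ∈ S | y ∈ s(a, b)} = {a, b} := by
        ext y
        simp only [Finset.mem_filter, Sym2.mem_iff, Finset.mem_insert, Finset.mem_singleton]
        constructor
        · exact fun h => h.2
        · rintro (rfl | rfl) <;> simp [*]
      rw [this, Finset.card_pair hab]
      exact even_two
    · have hb : b ∉ S := fun hb => ha (hS b a (by rwa [Sym2.eq_swap]) hb)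
      have : {y ∈ S | y ∈ s(a, b)} = ∅ := by
        ext y
        simp only [Finset.mem_filter, Sym2.mem_iff, Finset.notMem_empty, iff_false]
        rintro ⟨hy, rfl | rfl⟩ <;> contradiction
      rw [this]
      simp

omit [Fintype V] in
/-- The two colour degrees at `y` add up to the degree and differ by the imbalance. -/
theorem edgeDeg_split (f : Sym2 V → ℤ) (hf : IsSgn f) (E : Finset (Sym2 V)) (y : V) :
    edgeDeg {e ∈ E | f e = 1} y + edgeDeg {e ∈ E | f e ≠ 1} y = edgeDeg E y ∧
    (edgeDeg {e ∈ E | f e = 1} y : ℤ) - edgeDeg {e ∈ E | f e ≠ 1} y = sgnSum f E y := by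
  have h1 : ∀ p : Sym2 V → Prop, ∀ [DecidablePred p],
      edgeDeg {e ∈ E | p e} y = {e ∈ {e ∈ E | y ∈ e} | p e}.card := by
    intro p _
    unfold edgeDeg
    rw [Finset.filter_comm]
  rw [h1, h1]
  refine ⟨Finset.card_filter_add_card_filter_not _, ?_⟩
  unfold sgnSum
  rw [← Finset.sum_filter_add_sum_filter_not {e ∈ E | y ∈ e} (fun e => f e = 1),
    Finset.sum_congr rfl (g := fun _ => (1 : ℤ)) (fun e he => (Finset.mem_filter.1 he).2),
    Finset.sum_congr (s₁ := {e ∈ {e ∈ E | y ∈ e} | ¬ f e = 1}) rfl (g := fun _ => (-1 : ℤ))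
      (fun e he => (hf e).resolve_left (Finset.mem_filter.1 he).2)]
  simp
  ring

/-- The balancing lemma: the edges can be split into two classes so that every vertex has the smallest
possible excess over `d` in the two classes together, except possibly for vertices whose component
`S` is `2 * d`-regular with `d` and `|S|` odd. -/
theorem exists_balanced (E : Finset (Sym2 V)) (hE : ∀ e ∈ E, ¬ e.IsDiag) (d : ℕ) :
    ∃ f : Sym2 V → ℤ, IsSgn f ∧ ∀ v,
      ((edgeDeg {e ∈ E | f e = 1} v - d) + (edgeDeg {e ∈ E | f e ≠ 1} v - d) ≤
        edgeDeg E v - 2 * d) ∨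
      ∃ S : Finset V, (∀ w, w ∈ S ↔ Relation.ReflTransGen (fun a b => s(a, b) ∈ E) v w) ∧
        (∀ w ∈ S, edgeDeg E w = 2 * d) ∧ Odd (d * S.card) := by
  classical
  obtain ⟨f, hf⟩ := exists_isOpt d E
  refine ⟨f, hf.1, fun v => ?_⟩
  have h2 := hf.abs_le_two hE v
  obtain ⟨hs1, hs2⟩ := edgeDeg_split f hf.1 E v
  by_cases hbad : edgeDeg E v = 2 * d ∧ |sgnSum f E v| = 2
  · right
    set S : Finset V := {w | Relation.ReflTransGen (fun a b => s(a, b) ∈ E) v w} with hS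
    have hSmem : ∀ w, w ∈ S ↔ Relation.ReflTransGen (fun a b => s(a, b) ∈ E) v w := by simp [hS]
    have hreach := fun w hw => IsOpt.reach hE ((hSmem w).1 hw) f hf hbad.2 hbad.1
    refine ⟨S, hSmem, fun w hw => (hreach w hw).1, ?_⟩
    have hvS : v ∈ S := (hSmem v).2 .refl
    -- In the first colour `v` has degree `d ± 1` and every other vertex of `S` has degree `d`.
    have hev := even_sum_edgeDeg (A := {e ∈ E | f e = 1})
      (fun e he => hE e (Finset.mem_of_mem_filter e he)) S (by
        intro a b hab ha
        exact (hSmem b).2 (((hSmem a).1 ha).tail (Finset.mem_of_mem_filter _ hab)))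
    rw [← Finset.add_sum_erase S _ hvS, Finset.sum_congr rfl (g := fun _ => d)] at hev
    · rw [Finset.sum_const, Finset.card_erase_of_mem hvS, smul_eq_mul] at hev
      obtain ⟨c, hc⟩ : ∃ c, S.card = c + 1 :=
        ⟨S.card - 1, by have := Finset.card_pos.2 ⟨v, hvS⟩; omega⟩
      rw [hc] at hev ⊢
      have : edgeDeg {e ∈ E | f e = 1} v = d + 1 ∨ edgeDeg {e ∈ E | f e = 1} v + 1 = d := by
        rcases abs_cases (sgnSum f E v) with h | h <;> omega
      simp only [add_tsub_cancel_right] at hev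
      rw [mul_add, mul_one, mul_comm]
      obtain ⟨r, hr⟩ := hev
      rcases this with h | h
      · exact ⟨r - 1, by omega⟩
      · exact ⟨r, by omega⟩
    · intro w hw
      obtain ⟨hwv, hwS⟩ := Finset.mem_erase.1 hw
      obtain ⟨h3, h4⟩ := hreach w hwS
      obtain ⟨hs1, hs2⟩ := edgeDeg_split f hf.1 E w
      have := h4 hwv
      omega
  · left
    have : edgeDeg E v ≠ 2 * d ∨ |sgnSum f E v| ≠ 2 := by tauto
    rcases abs_cases (sgnSum f E v) with h | h <;> omega
end

/-! ### Vizing's theorem -/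

section
variable {V : Type*} [DecidableEq V] {k : ℕ}

/-- No edge of `E` at `v` has colour `γ`. -/
def Miss (E : Finset (Sym2 V)) (φ : Sym2 V → Fin k) (v : V) (γ : Fin k) : Prop :=
  ∀ e ∈ E, v ∈ e → φ e ≠ γ

/-- `φ` is a proper edge colouring of the graph with edge set `E`. -/
def Proper (E : Finset (Sym2 V)) (φ : Sym2 V → Fin k) : Prop :=
  ∀ e ∈ E, ∀ e' ∈ E, ∀ v, v ∈ e → v ∈ e' → φ e = φ e' → e = e'

theorem miss_iff {E : Finset (Sym2 V)} {φ : Sym2 V → Fin k} {v : V} {γ : Fin k} :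
    Miss E φ v γ ↔ edgeDeg {e ∈ E | φ e = γ} v = 0 := by
  simp only [Miss, edgeDeg, Finset.card_eq_zero, Finset.filter_eq_empty_iff, Finset.mem_filter]
  exact ⟨fun h e he hv => h e he.1 hv he.2, fun h e he hv hc => h ⟨he, hc⟩ hv⟩

theorem proper_iff {E : Finset (Sym2 V)} {φ : Sym2 V → Fin k} :
    Proper E φ ↔ ∀ v γ, edgeDeg {e ∈ E | φ e = γ} v ≤ 1 := by
  simp only [Proper, edgeDeg, Finset.card_le_one, Finset.mem_filter]
  constructor
  · rintro h v γ a ⟨⟨ha, hca⟩, hva⟩ b ⟨⟨hb, hcb⟩, hvb⟩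
    exact h a ha b hb v hva hvb (hca.trans hcb.symm)
  · intro h e he e' he' v hv hv' hc
    exact h v (φ e) e ⟨⟨he, rfl⟩, hv⟩ e' ⟨⟨he', hc.symm⟩, hv'⟩

omit [DecidableEq V] in
theorem Proper.mono {E E' : Finset (Sym2 V)} {φ : Sym2 V → Fin k} (h : Proper E φ) (hE : E' ⊆ E) :
    Proper E' φ := fun e he e' he' => h e (hE he) e' (hE he')

theorem exists_miss {E : Finset (Sym2 V)} (φ : Sym2 V → Fin k) {v : V} (h : edgeDeg E v < k) :
    ∃ γ, Miss E φ v γ := by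
  by_contra! hc
  have hsurj : (Finset.univ : Finset (Fin k)) ⊆ ({e ∈ E | v ∈ e} : Finset _).image φ := by
    intro γ _
    have := hc γ
    simp only [Miss, not_forall, not_not] at this
    obtain ⟨e, he, hv, hce⟩ := this
    exact Finset.mem_image.2 ⟨e, by simp [he, hv], hce⟩
  have h1 := (Finset.card_le_card hsurj).trans Finset.card_image_le
  rw [Finset.card_univ, Fintype.card_fin] at h1
  exact absurd h (not_lt.2 h1)

/-- A Kempe change: `α` is missing at `x` and `β` is not, and `φ'` exchanges `α` and `β` along the
two-coloured path that starts at `x` and ends at `z`. Afterwards `β` is missing at `x`; colours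
missing at other vertices stay missing, except that at `z` the roles of `α` and `β` may be
exchanged. The path is a maximal alternating trail, with `β` as the sign `1`. -/
theorem exists_kempe {E : Finset (Sym2 V)} (hE : ∀ e ∈ E, ¬ e.IsDiag) {φ : Sym2 V → Fin k}
    (hφ : Proper E φ) {x : V} {α β : Fin k} (hα : Miss E φ x α) (hβ : ¬ Miss E φ x β) :
    ∃ (φ' : Sym2 V → Fin k) (z : V), Proper E φ' ∧ Miss E φ' x β ∧
      (∀ e, φ e ≠ α → φ e ≠ β → φ' e = φ e) ∧ (∀ e, φ e = β → φ' e = α ∨ φ' e = β) ∧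
      (∀ y γ, γ ≠ α → γ ≠ β → Miss E φ y γ → Miss E φ' y γ) ∧
      (∀ y, y ≠ x → y ≠ z → Miss E φ y β → Miss E φ' y β) ∧
      (Miss E φ z β → Miss E φ' z α) := by
  have hαβ : α ≠ β := by rintro rfl; exact hβ hα
  set f : Sym2 V → ℤ := fun e => if φ e = β then 1 else -1 with hf
  have hfs : IsSgn f := by intro e; simp only [hf]; split_ifs <;> simp
  set U : Finset (Sym2 V) := {e ∈ E | φ e = α ∨ φ e = β} with hU
  obtain ⟨F, hFU, z, t, ht, hsum, hst⟩ := exists_trail f hfs _ U rfl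
    (fun e he => hE e (Finset.mem_of_mem_filter _ he)) 1 (Or.inl rfl) x
  set φ' : Sym2 V → Fin k := fun e => if e ∈ F then Equiv.swap α β (φ e) else φ e with hφ'
  have hoth : ∀ e, φ e ≠ α → φ e ≠ β → φ' e = φ e := by
    intro e h1 h2
    simp only [hφ', Equiv.swap_apply_of_ne_of_ne h1 h2, ite_self]
  have hβ' : ∀ e, φ e = β → φ' e = α ∨ φ' e = β := by
    intro e he
    simp only [hφ', he, Equiv.swap_apply_right]
    split_ifs <;> simp
  have hα' : ∀ e, φ e = α → φ' e = α ∨ φ' e = β := by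
    intro e he
    simp only [hφ', he, Equiv.swap_apply_left]
    split_ifs <;> simp
  have e1 : {e ∈ U | f e = 1} = {e ∈ E | φ e = β} := by
    ext e
    simp only [hU, hf, Finset.mem_filter]
    by_cases h1 : φ e = β <;> simp [h1]
  have e2 : {e ∈ U | f e ≠ 1} = {e ∈ E | φ e = α} := by
    ext e
    simp only [hU, hf, Finset.mem_filter]
    by_cases h1 : φ e = β <;> by_cases h2 : φ e = α <;> simp_all
  have e3 : {e ∈ U | flipOn f F e = 1} = {e ∈ E | φ' e = β} := by
    ext e
    simp only [hU, hf, hφ', flipOn, Finset.mem_filter]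
    by_cases h1 : φ e = β <;> by_cases h2 : φ e = α <;> by_cases h3 : e ∈ F <;>
      simp_all [Equiv.swap_apply_of_ne_of_ne]
  have e4 : {e ∈ U | flipOn f F e ≠ 1} = {e ∈ E | φ' e = α} := by
    ext e
    simp only [hU, hf, hφ', flipOn, Finset.mem_filter]
    by_cases h1 : φ e = β <;> by_cases h2 : φ e = α <;> by_cases h3 : e ∈ F <;>
      simp_all [Equiv.swap_apply_of_ne_of_ne, Ne.symm hαβ]
  have hN : ∀ y, (edgeDeg {e ∈ E | φ' e = β} y : ℤ) =
        edgeDeg {e ∈ E | φ e = β} y - sgnSum f F y ∧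
      (edgeDeg {e ∈ E | φ' e = α} y : ℤ) =
        edgeDeg {e ∈ E | φ e = α} y + sgnSum f F y := by
    intro y
    obtain ⟨h1, h2⟩ := edgeDeg_split f hfs U y
    obtain ⟨h3, h4⟩ := edgeDeg_split _ (hfs.flipOn F) U y
    rw [e1, e2] at h1 h2
    rw [e3, e4] at h3 h4
    rw [sgnSum_flipOn f hFU] at h4
    omega
  have hNo : ∀ y γ, γ ≠ α → γ ≠ β →
      edgeDeg {e ∈ E | φ' e = γ} y = edgeDeg {e ∈ E | φ e = γ} y := by
    intro y γ h1 h2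
    have : {e ∈ E | φ' e = γ} = {e ∈ E | φ e = γ} := by
      refine Finset.filter_congr fun e _ => ?_
      by_cases h3 : φ e = α
      · rcases hα' e h3 with h | h <;> rw [h, h3] <;> simp [Ne.symm h1, Ne.symm h2]
      by_cases h4 : φ e = β
      · rcases hβ' e h4 with h | h <;> rw [h, h4] <;> simp [Ne.symm h1, Ne.symm h2]
      rw [hoth e h3 h4]
    rw [this]
  have key := sgnSum_stuck hFU ht hst
  obtain ⟨-, hz2⟩ := edgeDeg_split f hfs U z
  rw [e1, e2] at hz2
  rw [proper_iff] at hφ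
  rw [miss_iff] at hα hβ
  have hzβ := hφ z β
  have hzα := hφ z α
  have hxβ := hφ x β
  have hsz := hsum z
  have hzx : z ≠ x := by
    rintro rfl
    simp only [if_true] at hsz
    rcases ht with rfl | rfl <;> omega
  simp only [if_neg hzx, if_true] at hsz
  refine ⟨φ', z, ?_, ?_, hoth, hβ', ?_, ?_, ?_⟩
  · rw [proper_iff]
    intro y γ
    by_cases h1 : γ = α
    · subst h1
      have := (hN y).2
      have := hsum y
      have := hφ y γ
      by_cases hyx : y = x
      · subst hyx; simp only [if_neg hzx.symm, if_true] at *; omega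
      by_cases hyz : y = z
      · subst hyz; rcases ht with rfl | rfl <;> omega
      simp only [if_neg hyx, if_neg hyz] at *; omega
    by_cases h2 : γ = β
    · subst h2
      have := (hN y).1
      have := hsum y
      have := hφ y γ
      by_cases hyx : y = x
      · subst hyx; simp only [if_neg hzx.symm, if_true] at *; omega
      by_cases hyz : y = z
      · subst hyz; rcases ht with rfl | rfl <;> omega
      simp only [if_neg hyx, if_neg hyz] at *; omega
    rw [hNo y γ h1 h2]
    exact hφ y γ
  · rw [miss_iff]
    have h1 := (hN x).1
    have h2 := hsum x
    simp only [if_neg hzx.symm, if_true] at h2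
    omega
  · intro y γ h1 h2
    rw [miss_iff, miss_iff, hNo y γ h1 h2]
    exact id
  · intro y h1 h2
    rw [miss_iff, miss_iff]
    have h3 := (hN y).1
    have h4 := hsum y
    simp only [if_neg h1, if_neg h2] at h4
    omega
  · rw [miss_iff, miss_iff]
    have h3 := (hN z).2
    rcases ht with rfl | rfl <;> omega

/-- A colour missing at both ends of an uncoloured edge can be given to it. -/
theorem Proper.update {E : Finset (Sym2 V)} {φ : Sym2 V → Fin k} {x y : V}
    (h : Proper (E.erase s(x, y)) φ) {γ : Fin k} (hx : Miss (E.erase s(x, y)) φ x γ)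
    (hy : Miss (E.erase s(x, y)) φ y γ) : Proper E (Function.update φ s(x, y) γ) := by
  have hm : ∀ e ∈ E, e ≠ s(x, y) → ∀ v, v ∈ e → v ∈ s(x, y) → φ e ≠ γ := by
    intro e he hne v hv hv'
    rcases Sym2.mem_iff.1 hv' with rfl | rfl
    · exact hx e (Finset.mem_erase.2 ⟨hne, he⟩) hv
    · exact hy e (Finset.mem_erase.2 ⟨hne, he⟩) hv
  intro e he e' he' v hv hv' hc
  by_cases h1 : e = s(x, y) <;> by_cases h2 : e' = s(x, y)
  · rw [h1, h2]
  · subst h1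
    rw [Function.update_self, Function.update_of_ne h2] at hc
    exact absurd hc.symm (hm e' he' h2 v hv' hv)
  · subst h2
    rw [Function.update_self, Function.update_of_ne h1] at hc
    exact absurd hc (hm e he h1 v hv hv')
  · rw [Function.update_of_ne h1, Function.update_of_ne h2] at hc
    exact h e (Finset.mem_erase.2 ⟨h1, he⟩) e' (Finset.mem_erase.2 ⟨h2, he'⟩) v hv hv' hc

/-- A Vizing fan at `x` with leaves `y 0, …, y m` (the values `y i` for `i > m` are irrelevant). All
edges of `E` but `x (y 0)` are properly coloured, and the colour of `x (y (i + 1))` is missing at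
`y i`. -/
structure IsFan (E : Finset (Sym2 V)) (x : V) (φ : Sym2 V → Fin k) (y : ℕ → V) (m : ℕ) :
    Prop where
  proper : Proper (E.erase s(x, y 0)) φ
  mem : ∀ i ≤ m, s(x, y i) ∈ E
  inj : ∀ i ≤ m, ∀ j ≤ m, y i = y j → i = j
  miss : ∀ i < m, Miss (E.erase s(x, y 0)) φ (y i) (φ s(x, y (i + 1)))

/-- If some colour is missing both at the centre and at the last leaf of a fan, then shifting colours
along the fan frees the edge to the last leaf for that colour. -/
theorem IsFan.exists_proper {E : Finset (Sym2 V)} (hE : ∀ e ∈ E, ¬ e.IsDiag) {x : V} (m : ℕ) :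
    ∀ {φ : Sym2 V → Fin k} {y : ℕ → V}, IsFan E x φ y m → ∀ {γ : Fin k},
      Miss (E.erase s(x, y 0)) φ x γ → Miss (E.erase s(x, y 0)) φ (y m) γ →
      ∃ φ' : Sym2 V → Fin k, Proper E φ' := by
  induction m with
  | zero =>
    intro φ y h γ hx hy
    exact ⟨_, h.proper.update hx hy⟩
  | succ m ih =>
    intro φ y h γ hx hy
    have hxy : ∀ i ≤ m + 1, x ≠ y i := fun i hi => by simpa using hE _ (h.mem i hi)
    have hedge : ∀ i ≤ m + 1, ∀ j ≤ m + 1, s(x, y i) = s(x, y j) → i = j := by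
      intro i hi j hj he
      exact h.inj i hi j hj (Sym2.congr_right.1 he)
    have h01 : s(x, y 1) ≠ s(x, y 0) := fun he => by
      have := hedge 1 (by omega) 0 (by omega) he; omega
    have h1mem : s(x, y 1) ∈ E.erase s(x, y 0) :=
      Finset.mem_erase.2 ⟨h01, h.mem 1 (by omega)⟩
    set φ' := Function.update φ s(x, y 0) (φ s(x, y 1)) with hupd
    -- Shifting by one step keeps colours missing, away from the edge `x (y 0)`.
    have hkeep : ∀ v δ, Miss (E.erase s(x, y 0)) φ v δ → (v ∈ s(x, y 0) → φ s(x, y 1) ≠ δ) →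
        Miss (E.erase s(x, y 1)) φ' v δ := by
      intro v δ hm hv e he hve
      by_cases h1 : e = s(x, y 0)
      · subst h1
        rw [hupd, Function.update_self]
        exact hv hve
      · rw [hupd, Function.update_of_ne h1]
        exact hm e (Finset.mem_erase.2 ⟨h1, Finset.mem_of_mem_erase he⟩) hve
    have hnot : ∀ i, 1 ≤ i → i ≤ m + 1 → y i ∉ s(x, y 0) := by
      intro i h1 h2 hc
      rcases Sym2.mem_iff.1 hc with hc | hc
      · exact hxy i h2 hc.symm
      · have := h.inj i h2 0 (by omega) hc
        omega
    have hfan : IsFan E x φ' (fun i => y (i + 1)) m := by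
      refine ⟨?_, fun i hi => h.mem _ (by omega), fun i hi j hj he => ?_, fun i hi => ?_⟩
      · refine Proper.update (h.proper.mono ?_) ?_ ?_
        · rw [Finset.erase_right_comm]; exact Finset.erase_subset _ _
        · rw [Finset.erase_right_comm]
          intro e he hxe hc
          obtain ⟨hne, he⟩ := Finset.mem_erase.1 he
          exact hne (h.proper e he _ h1mem x hxe (by simp) hc)
        · rw [Finset.erase_right_comm]
          intro e he hye
          exact h.miss 0 (by omega) e (Finset.mem_of_mem_erase he) hye
      · have := h.inj _ (Nat.succ_le_succ hi) _ (Nat.succ_le_succ hj) he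
        omega
      · have hne : s(x, y (i + 1 + 1)) ≠ s(x, y 0) := fun he => by
          have := hedge _ (by omega) _ (by omega) he
          omega
        have : φ' s(x, y (i + 1 + 1)) = φ s(x, y (i + 1 + 1)) := Function.update_of_ne hne _ _
        rw [this]
        exact hkeep _ _ (h.miss (i + 1) (by omega))
          fun hc => absurd hc (hnot _ (by omega) (by omega))
    refine ih hfan (γ := γ) (hkeep _ _ hx fun _ => hx _ h1mem (by simp)) (hkeep _ _ hy
      fun hc => absurd hc (hnot _ (by omega) (by omega)))

/-- If `β`, missing at the last leaf `y m`, is also the colour of the fan edge `x (y (j + 1))`, hence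
missing at `y j`, then a Kempe change from `x` makes `β` missing at `x` while it stays missing at
`y j` or at `y m`; the fan up to that leaf survives and can be shifted. -/
theorem IsFan.exists_proper_of_common {E : Finset (Sym2 V)} (hE : ∀ e ∈ E, ¬ e.IsDiag) {x : V}
    {m : ℕ} {φ : Sym2 V → Fin k} {y : ℕ → V} (h : IsFan E x φ y m) {α β : Fin k}
    (hα : Miss (E.erase s(x, y 0)) φ x α) {j : ℕ} (hj : j < m)
    (hβ : φ s(x, y (j + 1)) = β) (hm : Miss (E.erase s(x, y 0)) φ (y m) β) :
    ∃ φ' : Sym2 V → Fin k, Proper E φ' := by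
  have hxy : ∀ i ≤ m, y i ≠ x := fun i hi => by
    have : x ≠ y i := by simpa using hE _ (h.mem i hi)
    exact this.symm
  have hmem : ∀ i, i + 1 ≤ m → s(x, y (i + 1)) ∈ E.erase s(x, y 0) := by
    intro i hi
    refine Finset.mem_erase.2 ⟨fun he => ?_, h.mem _ hi⟩
    have := h.inj (i + 1) hi 0 (by omega) (Sym2.congr_right.1 he)
    omega
  have hnβ : ¬ Miss (E.erase s(x, y 0)) φ x β := fun hc => hc _ (hmem j hj) (by simp) hβ
  obtain ⟨φ', z, hp, hxβ, hoth, hβ', hγ, hkeep, hz⟩ :=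
    exists_kempe (fun e he => hE e (Finset.mem_of_mem_erase he)) h.proper hα hnβ
  -- The Kempe change does not affect the other fan edges: they have neither colour.
  have hmiss : ∀ i < m, i ≠ j → Miss (E.erase s(x, y 0)) φ' (y i) (φ' s(x, y (i + 1))) := by
    intro i hi hij
    have h1 : φ s(x, y (i + 1)) ≠ α := hα _ (hmem i hi) (by simp)
    have h2 : φ s(x, y (i + 1)) ≠ β := by
      intro hc
      have he := h.proper _ (hmem i hi) _ (hmem j hj) x (by simp) (by simp) (hc.trans hβ.symm)
      have := h.inj (i + 1) hi (j + 1) hj (Sym2.congr_right.1 he)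
      omega
    rw [hoth _ h1 h2]
    exact hγ _ _ h1 h2 (h.miss i hi)
  by_cases hzj : y j = z
  -- The path ends at `y j`, where `α` is now missing instead of `β`; this matches the new colour
  -- `α` of `x (y (j + 1))`, so the whole fan is still a fan.
  · have hjα : φ' s(x, y (j + 1)) = α :=
      (hβ' _ hβ).resolve_right (hxβ _ (hmem j hj) (by simp))
    have hfan : IsFan E x φ' y m := by
      refine ⟨hp, h.mem, h.inj, fun i hi => ?_⟩
      by_cases hij : i = j
      · subst hij
        rw [hjα, hzj]
        exact hz (by rw [← hzj, ← hβ]; exact h.miss i hi)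
      · exact hmiss i hi hij
    refine hfan.exists_proper hE m hxβ (hkeep _ (hxy m le_rfl) (fun hc => ?_) hm)
    have := h.inj m le_rfl j hj.le (hc.trans hzj.symm)
    omega
  · have hfan : IsFan E x φ' y j := by
      refine ⟨hp, fun i hi => h.mem i (by omega), fun i hi i' hi' => h.inj i (by omega) i' (by omega),
        fun i hi => hmiss i (by omega) (by omega)⟩
    exact hfan.exists_proper hE j hxβ (hkeep _ (hxy j hj.le) hzj (hβ ▸ h.miss j hj))

variable [Fintype V]

omit [Fintype V] in
theorem edgeDeg_mono {E E' : Finset (Sym2 V)} (h : E' ⊆ E) (v : V) : edgeDeg E' v ≤ edgeDeg E v :=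
  Finset.card_le_card (Finset.filter_subset_filter _ h)

/-- A fan that can be neither shifted nor treated by `IsFan.exists_proper_of_common` can be extended
by a new leaf. The number `n` bounds the number of extensions still possible. -/
theorem IsFan.exists_proper_of_deg {E : Finset (Sym2 V)} (hE : ∀ e ∈ E, ¬ e.IsDiag)
    (hdeg : ∀ v, edgeDeg E v < k) {x : V} (n : ℕ) : ∀ {m : ℕ} {φ : Sym2 V → Fin k} {y : ℕ → V},
    IsFan E x φ y m → Fintype.card V ≤ m + n → ∃ φ' : Sym2 V → Fin k, Proper E φ' := by
  induction n with
  | zero =>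
    intro m φ y h hc
    have := Fintype.card_le_of_injective (fun i : Fin (m + 1) => y i) (fun i j hij => by
      exact Fin.ext (h.inj i (by omega) j (by omega) hij))
    rw [Fintype.card_fin] at this
    omega
  | succ n ih =>
    intro m φ y h hc
    have hdeg' := fun v => (edgeDeg_mono (Finset.erase_subset s(x, y 0) E) v).trans_lt (hdeg v)
    obtain ⟨α, hα⟩ := exists_miss φ (hdeg' x)
    obtain ⟨β, hβ⟩ := exists_miss φ (hdeg' (y m))
    by_cases hxβ : Miss (E.erase s(x, y 0)) φ x β
    · exact h.exists_proper hE m hxβ hβ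
    simp only [Miss, not_forall, not_not] at hxβ
    obtain ⟨e, he, ⟨u, rfl⟩, hu⟩ := hxβ
    obtain ⟨hne, heE⟩ := Finset.mem_erase.1 he
    by_cases hin : ∃ i ≤ m, y i = u
    · obtain ⟨i, hi, rfl⟩ := hin
      obtain ⟨j, rfl⟩ : ∃ j, i = j + 1 := Nat.exists_eq_succ_of_ne_zero (by
        rintro rfl; exact hne rfl)
      exact h.exists_proper_of_common hE hα (j := j) (by omega) hu hβ
    · push Not at hin
      have hy : ∀ i ≤ m, Function.update y (m + 1) u i = y i := fun i hi =>
        Function.update_of_ne (by omega) _ _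
      have hy1 : Function.update y (m + 1) u (m + 1) = u := Function.update_self ..
      refine ih (m := m + 1) (φ := φ) (y := Function.update y (m + 1) u) ⟨?_, ?_, ?_, ?_⟩ (by omega)
      · rw [hy 0 (by omega)]; exact h.proper
      · intro i hi
        rcases Nat.le_succ_iff.1 hi with hi | rfl
        · rw [hy i hi]; exact h.mem i hi
        · rw [hy1]; exact heE
      · intro i hi j hj hij
        rcases Nat.le_succ_iff.1 hi with hi | rfl <;> rcases Nat.le_succ_iff.1 hj with hj | rfl
        · rw [hy i hi, hy j hj] at hij
          exact h.inj i hi j hj hij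
        · rw [hy i hi, hy1] at hij
          exact absurd hij (hin i hi)
        · rw [hy j hj, hy1] at hij
          exact absurd hij.symm (hin j hj)
        · rfl
      · intro i hi
        rw [hy 0 (by omega), hy i (by omega)]
        rcases Nat.lt_succ_iff_lt_or_eq.1 hi with hi | rfl
        · rw [hy (i + 1) hi]; exact h.miss i hi
        · rw [hy1, hu]; exact hβ

/-- Vizing's theorem: `k` colours suffice if all degrees are less than `k`. -/
theorem exists_proper (n : ℕ) : ∀ (E : Finset (Sym2 V)), E.card = n → (∀ e ∈ E, ¬ e.IsDiag) →
    (∀ v, edgeDeg E v < k) → 0 < k → ∃ φ : Sym2 V → Fin k, Proper E φ := by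
  induction n with
  | zero =>
    intro E hc _ _ hk
    rw [Finset.card_eq_zero] at hc
    subst hc
    exact ⟨fun _ => ⟨0, hk⟩, by simp [Proper]⟩
  | succ n ih =>
    intro E hc hE hdeg hk
    obtain ⟨e, he⟩ := Finset.card_pos.1 (by omega : 0 < E.card)
    induction e using Sym2.ind with
    | _ x y =>
      obtain ⟨φ, hφ⟩ := ih (E.erase s(x, y)) (by rw [Finset.card_erase_of_mem he]; omega)
        (fun e he => hE e (Finset.mem_of_mem_erase he))
        (fun v => (edgeDeg_mono (Finset.erase_subset _ _) v).trans_lt (hdeg v)) hk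
      have hfan : IsFan E x φ (fun _ => y) 0 :=
        ⟨hφ, fun _ _ => he, fun i hi j hj _ => by omega, fun i hi => by omega⟩
      exact hfan.exists_proper_of_deg hE hdeg (Fintype.card V) (by omega)
end

/-! ### Defective colourings with `k` colours -/

section
variable {V : Type*} [DecidableEq V] {k : ℕ}

theorem sum_edgeDeg_color (E : Finset (Sym2 V)) (φ : Sym2 V → Fin k) (v : V) :
    ∑ c, edgeDeg {e ∈ E | φ e = c} v = edgeDeg E v := by
  unfold edgeDeg
  rw [Finset.card_eq_sum_card_fiberwise (f := φ) (t := Finset.univ) (fun _ _ => by simp)]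
  exact Finset.sum_congr rfl fun c _ => by rw [Finset.filter_comm]

variable [Fintype V]

/-- Group the `k * d` colours of a proper colouring into `k` groups of `d` colours. -/
theorem exists_defective_of_lt (E : Finset (Sym2 V)) (hE : ∀ e ∈ E, ¬ e.IsDiag) {d : ℕ}
    (hk : 0 < k) (hd : 0 < d) (hdeg : ∀ v, edgeDeg E v < k * d) :
    ∃ φ : Sym2 V → Fin k, ∀ v c, edgeDeg {e ∈ E | φ e = c} v ≤ d := by
  obtain ⟨ψ, hψ⟩ := exists_proper _ E rfl hE hdeg (Nat.mul_pos hk hd)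
  refine ⟨fun e => (finProdFinEquiv.symm (ψ e)).1, fun v c => ?_⟩
  have := Finset.card_le_card_of_injOn
    (s := {e ∈ {e ∈ E | (finProdFinEquiv.symm (ψ e)).1 = c} | v ∈ e}) (t := Finset.univ)
    (fun e => (finProdFinEquiv.symm (ψ e)).2) (fun _ _ => by simp) (by
      intro e he e' he' h
      simp only [Finset.coe_filter, Finset.mem_filter, Set.mem_ofPred_eq] at he he'
      refine hψ e he.1.1 e' he'.1.1 v he.2 he'.2 ?_
      exact finProdFinEquiv.symm.injective (Prod.ext (he.1.2.trans he'.1.2.symm) h))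
  simpa [edgeDeg] using this

/-- For even `d`, a colouring of minimum total excess over `d` has no excess: otherwise some vertex has
a colour `i` used more than `d` times and a colour `j` used less than `d` times, and rebalancing
these two colours by `exists_balanced` reduces the total excess. -/
theorem exists_defective_of_even (E : Finset (Sym2 V)) (hE : ∀ e ∈ E, ¬ e.IsDiag) {d : ℕ}
    (hk : 0 < k) (hd : Even d) (hdeg : ∀ v, edgeDeg E v ≤ k * d) :
    ∃ φ : Sym2 V → Fin k, ∀ v c, edgeDeg {e ∈ E | φ e = c} v ≤ d := by
  have hne : (Set.univ : Set (Sym2 V → Fin k)).Nonempty := ⟨fun _ => ⟨0, hk⟩, trivial⟩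
  obtain ⟨φ, -, hmin⟩ := (measure fun φ : Sym2 V → Fin k =>
    ∑ v, ∑ c, (edgeDeg {e ∈ E | φ e = c} v - d)).wf.has_min _ hne
  replace hmin : ∀ φ' : Sym2 V → Fin k, ¬ ∑ v, ∑ c, (edgeDeg {e ∈ E | φ' e = c} v - d) <
      ∑ v, ∑ c, (edgeDeg {e ∈ E | φ e = c} v - d) := fun φ' h => hmin φ' trivial h
  refine ⟨φ, ?_⟩
  by_contra! hc
  obtain ⟨v, i, hi⟩ := hc
  obtain ⟨j, hj⟩ : ∃ j, edgeDeg {e ∈ E | φ e = j} v < d := by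
    by_contra! hall
    have h1 := Finset.sum_lt_sum (s := Finset.univ) (f := fun _ : Fin k => d)
      (g := fun c => edgeDeg {e ∈ E | φ e = c} v) (fun c _ => hall c) ⟨i, Finset.mem_univ _, hi⟩
    rw [sum_edgeDeg_color, Finset.sum_const, Finset.card_univ, Fintype.card_fin, smul_eq_mul] at h1
    exact absurd (hdeg v) (not_le.2 h1)
  have hij : i ≠ j := by rintro rfl; omega
  set H : Finset (Sym2 V) := {e ∈ E | φ e = i ∨ φ e = j} with hH
  obtain ⟨f, hf, hbal⟩ := exists_balanced H (fun e he => hE e (Finset.mem_of_mem_filter _ he)) d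
  replace hbal : ∀ y, (edgeDeg {e ∈ H | f e = 1} y - d) + (edgeDeg {e ∈ H | f e ≠ 1} y - d) ≤
      edgeDeg H y - 2 * d := fun y => (hbal y).resolve_right fun ⟨S, _, _, h⟩ =>
    absurd (hd.mul_right _) (Nat.not_even_iff_odd.2 h)
  set φ' : Sym2 V → Fin k := fun e =>
    if φ e = i ∨ φ e = j then (if f e = 1 then i else j) else φ e with hφ'
  have hi' : {e ∈ E | φ' e = i} = {e ∈ H | f e = 1} := by
    ext e
    simp only [hφ', hH, Finset.mem_filter]
    split_ifs with h1 h2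
    · simp [h1, h2]
    · simp [h1, h2, hij.symm]
    · tauto
  have hj' : {e ∈ E | φ' e = j} = {e ∈ H | f e ≠ 1} := by
    ext e
    simp only [hφ', hH, Finset.mem_filter]
    split_ifs with h1 h2
    · simp [h1, h2, hij]
    · simp [h1, h2]
    · tauto
  have ho' : ∀ c ∈ ({i, j}ᶜ : Finset (Fin k)), {e ∈ E | φ' e = c} = {e ∈ E | φ e = c} := by
    intro c hc
    simp only [Finset.mem_compl, Finset.mem_insert, Finset.mem_singleton, not_or] at hc
    refine Finset.filter_congr fun e _ => ?_
    simp only [hφ']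
    split_ifs with h1 h2
    · refine iff_of_false (Ne.symm hc.1) ?_
      rintro rfl; tauto
    · refine iff_of_false (Ne.symm hc.2) ?_
      rintro rfl; tauto
    · rfl
  have hHdeg : ∀ y, edgeDeg H y = edgeDeg {e ∈ E | φ e = i} y + edgeDeg {e ∈ E | φ e = j} y := by
    intro y
    unfold edgeDeg
    rw [← Finset.card_union_of_disjoint, ← Finset.filter_union, ← Finset.filter_or]
    refine Finset.disjoint_left.2 fun e h1 h2 => hij ?_
    simp only [Finset.mem_filter] at h1 h2
    exact h1.1.2.symm.trans h2.1.2
  have hsplit : ∀ g : Fin k → ℕ, ∑ c, g c = g i + g j + ∑ c ∈ {i, j}ᶜ, g c := by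
    intro g
    rw [← Finset.sum_add_sum_compl {i, j}, Finset.sum_pair hij]
  have hsum : ∀ y, ∑ c, (edgeDeg {e ∈ E | φ' e = c} y - d) =
      (edgeDeg {e ∈ H | f e = 1} y - d) + (edgeDeg {e ∈ H | f e ≠ 1} y - d) +
        ∑ c ∈ {i, j}ᶜ, (edgeDeg {e ∈ E | φ e = c} y - d) := by
    intro y
    rw [hsplit, hi', hj']
    congr 1
    exact Finset.sum_congr rfl fun c hc => by rw [ho' c hc]
  refine hmin φ' (Finset.sum_lt_sum (fun y _ => ?_) ⟨v, Finset.mem_univ _, ?_⟩)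
  · rw [hsum, hsplit]
    have := hbal y
    have := hHdeg y
    omega
  · rw [hsum, hsplit]
    have := hbal v
    have := hHdeg v
    omega
end

/-! ### Colourings of a simple graph -/

section
variable {V : Type} [Fintype V] [DecidableEq V] (G : SimpleGraph V) [DecidableRel G.Adj]

theorem edgeDeg_edgeFinset (v : V) : edgeDeg G.edgeFinset v = G.degree v := by
  rw [← G.card_incidenceFinset_eq_degree, G.incidenceFinset_eq_filter]
  rfl

omit [DecidableEq V] in
theorem not_isDiag_edgeFinset : ∀ e ∈ G.edgeFinset, ¬ e.IsDiag := fun _ he =>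
  G.not_isDiag_of_mem_edgeSet (SimpleGraph.mem_edgeFinset.1 he)

/-- Colour degrees of a colouring of the subtype `G.edgeSet` agree with those of `edgeDeg`. -/
theorem ncard_eq_edgeDeg {k : ℕ} (φ : Sym2 V → Fin k) (v : V) (c : Fin k) :
    {e : G.edgeSet | v ∈ e.1 ∧ φ e.1 = c}.ncard = edgeDeg {e ∈ G.edgeFinset | φ e = c} v := by
  rw [← Set.ncard_image_of_injective _ Subtype.val_injective, edgeDeg, ← Set.ncard_coe_finset]
  congr 1
  ext e
  simp only [Set.mem_image, Set.mem_ofPred_eq, Subtype.exists, Finset.coe_filter,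
    Finset.mem_filter, SimpleGraph.mem_edgeFinset]
  constructor
  · rintro ⟨e, he, ⟨h1, h2⟩, rfl⟩
    exact ⟨⟨he, h2⟩, h1⟩
  · rintro ⟨⟨he, h2⟩, h1⟩
    exact ⟨e, he, ⟨h1, h2⟩, rfl⟩

/-- Defective colourings as functions on all unordered pairs. For `k = 0` there is no such function
if `V` is nonempty, whence the hypothesis. -/
theorem colorable_iff {k d : ℕ} (hk : 0 < k) :
    (∃ φ : G.edgeSet → Fin k, ∀ v : V, ∀ c : Fin k,
      {e : G.edgeSet | v ∈ e.1 ∧ φ e = c}.ncard ≤ d) ↔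
    ∃ φ : Sym2 V → Fin k, ∀ v c, edgeDeg {e ∈ G.edgeFinset | φ e = c} v ≤ d := by
  constructor
  · rintro ⟨φ, hφ⟩
    refine ⟨fun e => if h : e ∈ G.edgeSet then φ ⟨e, h⟩ else ⟨0, hk⟩, fun v c => ?_⟩
    rw [← ncard_eq_edgeDeg]
    simpa using hφ v c
  · rintro ⟨φ, hφ⟩
    exact ⟨fun e => φ e.1, fun v c => (ncard_eq_edgeDeg G φ v c).trans_le (hφ v c)⟩

theorem maxDegree_le_of_colorable {k d : ℕ} (h : ∃ φ : G.edgeSet → Fin k, ∀ v : V, ∀ c : Fin k,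
      {e : G.edgeSet | v ∈ e.1 ∧ φ e = c}.ncard ≤ d) : G.maxDegree ≤ k * d := by
  refine G.maxDegree_le_of_forall_degree_le _ fun v => ?_
  rcases Nat.eq_zero_or_pos k with rfl | hk
  · obtain ⟨φ, -⟩ := h
    by_contra! hc
    obtain ⟨w, hw⟩ := (G.degree_pos_iff_exists_adj v).1 (by omega)
    exact (φ ⟨s(v, w), hw⟩).elim0
  · obtain ⟨φ, hφ⟩ := (colorable_iff G hk).1 h
    rw [← edgeDeg_edgeFinset, ← sum_edgeDeg_color _ φ]
    refine (Finset.sum_le_card_nsmul _ _ d fun c _ => hφ v c).trans ?_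
    simp

/-- In a `2 * d`-regular component, both colours of a 2-colouring with defect `d` are `d`-regular, so
the handshake lemma makes its order even; the converse is `exists_balanced`. -/
theorem colorable_two_iff {d : ℕ} (hd : Odd d) (hΔ : G.maxDegree = 2 * d) :
    (∃ φ : G.edgeSet → Fin 2, ∀ v : V, ∀ c : Fin 2,
      {e : G.edgeSet | v ∈ e.1 ∧ φ e = c}.ncard ≤ d) ↔ EvenRegularComponents G d := by
  rw [colorable_iff G two_pos]
  constructor
  · rintro ⟨φ, hφ⟩ C hC
    have hev := even_sum_edgeDeg (A := {e ∈ G.edgeFinset | φ e = 0})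
      (fun e he => not_isDiag_edgeFinset G e (Finset.mem_of_mem_filter _ he))
      ({v | v ∈ C.supp} : Finset V) (by
        intro a b hab ha
        have hadj : G.Adj a b := by simpa using Finset.mem_of_mem_filter _ hab
        simp only [Finset.mem_filter, Finset.mem_univ, true_and] at ha ⊢
        exact C.mem_supp_of_adj_mem_supp ha hadj)
    rw [Finset.sum_congr rfl (g := fun _ => d), Finset.sum_const, smul_eq_mul, Nat.even_mul] at hev
    · rw [Set.ncard_eq_toFinset_card']
      convert hev.resolve_right (Nat.not_even_iff_odd.2 hd) using 2
      ext; simp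
    · intro v hv
      have h1 := hC v (by simpa using hv)
      rw [← edgeDeg_edgeFinset, ← sum_edgeDeg_color _ φ, Fin.sum_univ_two] at h1
      have := hφ v 0
      have := hφ v 1
      omega
  · intro hG
    obtain ⟨f, hf, hbal⟩ := exists_balanced G.edgeFinset (not_isDiag_edgeFinset G) d
    have hall : ∀ v, edgeDeg {e ∈ G.edgeFinset | f e = 1} v ≤ d ∧
        edgeDeg {e ∈ G.edgeFinset | f e ≠ 1} v ≤ d := by
      intro v
      rcases hbal v with h | ⟨S, hS, hreg, hodd⟩
      · rw [edgeDeg_edgeFinset] at h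
        have := G.degree_le_maxDegree v
        omega
      · exfalso
        have hSC : (S : Set V) = (G.connectedComponentMk v).supp := by
          ext w
          simp only [SimpleGraph.mem_edgeFinset, SimpleGraph.mem_edgeSet] at hS
          rw [Finset.mem_coe, hS, SimpleGraph.ConnectedComponent.mem_supp_iff,
            SimpleGraph.ConnectedComponent.eq, SimpleGraph.reachable_comm]
          exact (SimpleGraph.reachable_iff_reflTransGen v w).symm
        have hev := hG (G.connectedComponentMk v) (fun w hw => by
          rw [← hSC, Finset.mem_coe] at hw
          rw [← edgeDeg_edgeFinset]
          exact hreg w hw)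
        rw [← hSC, Set.ncard_coe_finset] at hev
        exact absurd (hev.mul_left d) (Nat.not_even_iff_odd.2 hodd)
    refine ⟨fun e => if f e = 1 then 0 else 1, fun v c => ?_⟩
    fin_cases c
    · simpa using (hall v).1
    · simpa using (hall v).2
end

theorem stmt19 {V : Type} [Fintype V] (G : SimpleGraph V) [DecidableRel G.Adj]
    (d : ℕ) (hd : 1 ≤ d) :
    ((¬ d ∣ G.maxDegree ∨ Even d ∨ G.maxDegree = d) →
      defChromIndex G d = ceilDiv' G.maxDegree d) ∧
    (Odd d → G.maxDegree = 2 * d →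
      ((defChromIndex G d = 2 ↔ EvenRegularComponents G d) ∧
        (¬ EvenRegularComponents G d → defChromIndex G d = 3))) := by
  classical
  have hE := not_isDiag_edgeFinset G
  have hdeg : ∀ v, edgeDeg G.edgeFinset v ≤ G.maxDegree := fun v => by
    rw [edgeDeg_edgeFinset]; exact G.degree_le_maxDegree v
  have hval : ∀ K, (∃ φ : G.edgeSet → Fin K, ∀ v : V, ∀ c : Fin K,
        {e : G.edgeSet | v ∈ e.1 ∧ φ e = c}.ncard ≤ d) →
      (∀ k, (∃ φ : G.edgeSet → Fin k, ∀ v : V, ∀ c : Fin k,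
        {e : G.edgeSet | v ∈ e.1 ∧ φ e = c}.ncard ≤ d) → K ≤ k) →
      defChromIndex G d = K := fun K h1 h2 =>
    le_antisymm (Nat.sInf_le h1) (le_csInf ⟨K, h1⟩ h2)
  refine ⟨fun hcase => hval _ ?_ fun k hk => ?_, fun hodd hΔ => ?_⟩
  -- `K = ⌈Δ / d⌉` colours suffice; `K = 0` means that `G` has no edges.
  · have hK : G.maxDegree ≤ ceilDiv' G.maxDegree d * d := by
      have := Nat.lt_div_mul_add (a := G.maxDegree + d - 1) hd
      unfold ceilDiv'
      omega
    rcases Nat.eq_zero_or_pos (ceilDiv' G.maxDegree d) with h0 | hpos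
    · rw [h0, zero_mul] at hK
      refine ⟨fun e => ?_, fun v c => ?_⟩
      · exfalso
        obtain ⟨e, he⟩ := e
        induction e using Sym2.ind with
        | _ a b =>
          have h1 := (G.degree_pos_iff_exists_adj a).2 ⟨b, he⟩
          have h2 := G.degree_le_maxDegree a
          omega
      · rw [h0] at c
        exact c.elim0
    rw [colorable_iff G hpos]
    rcases hcase with hnd | hev | heq
    · refine exists_defective_of_lt _ hE hpos hd fun v => (hdeg v).trans_lt (lt_of_le_of_ne hK ?_)
      intro h
      exact hnd (h ▸ dvd_mul_left _ _)
    · exact exists_defective_of_even _ hE hpos hev fun v => (hdeg v).trans hK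
    · exact ⟨fun _ => ⟨0, hpos⟩, fun v c =>
        (edgeDeg_mono (Finset.filter_subset _ _) v).trans ((hdeg v).trans heq.le)⟩
  · have := maxDegree_le_of_colorable G hk
    unfold ceilDiv'
    rw [← Nat.lt_succ_iff, Nat.div_lt_iff_lt_mul hd, Nat.succ_mul]
    omega
  · have hlow : ∀ k, (∃ φ : G.edgeSet → Fin k, ∀ v : V, ∀ c : Fin k,
        {e : G.edgeSet | v ∈ e.1 ∧ φ e = c}.ncard ≤ d) → 2 ≤ k := fun k hk => by
      have := maxDegree_le_of_colorable G hk
      rw [hΔ] at this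
      exact Nat.le_of_mul_le_mul_right this hd
    have h3 : ∃ φ : G.edgeSet → Fin 3, ∀ v : V, ∀ c : Fin 3,
        {e : G.edgeSet | v ∈ e.1 ∧ φ e = c}.ncard ≤ d := by
      rw [colorable_iff G three_pos]
      exact exists_defective_of_lt _ hE three_pos hd fun v => (hdeg v).trans_lt (by omega)
    rw [← colorable_two_iff G hodd hΔ]
    refine ⟨⟨fun h => ?_, fun h => hval 2 h hlow⟩, fun hn => hval 3 h3 fun k hk => ?_⟩
    · have hmem := Nat.sInf_mem (s := {k : ℕ | ∃ φ : G.edgeSet → Fin k, ∀ v : V, ∀ c : Fin k,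
        {e : G.edgeSet | v ∈ e.1 ∧ φ e = c}.ncard ≤ d}) ⟨3, h3⟩
      have h' : sInf {k : ℕ | ∃ φ : G.edgeSet → Fin k, ∀ v : V, ∀ c : Fin k,
        {e : G.edgeSet | v ∈ e.1 ∧ φ e = c}.ncard ≤ d} = 2 := h
      rw [h'] at hmem
      exact hmem
    · have h2 := hlow k hk
      rcases h2.lt_or_eq with h2 | rfl
      · exact h2
      · exact absurd hk hn
end
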